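/- Let $n \geq 1$ and for $r \leq n$ define $U_r^n$ to be the set of triples $(I,J,K)$ of cardinality-$r$ subsets of $\{1,\ldots,n\}$ such that $\sum_{i \in I} i + \sum_{j \in J} j = \sum_{k \in K} k + r(r+1)/2$; set $T_1^n = U_1^n$ and, inductively for $r > 1$, let $T_r^n$ be the set of $(I,J,K) \in U_r^n$ (writing $I = \{i_1 < \cdots < i_r\}$, etc.) such that for all $p < r$ and all $(F,G,H) \in T_p^r$ one has $\sum_{f \in F} i_f + \sum_{g \in G} j_g \leq \sum_{h \in H} k_h + p(p+1)/2$. Then (Horn's conjecture, proved by Klyachko, Knutson and Tao): a triple of nonincreasing real vectors $(\alpha, \beta, \gamma)$ in $\mathbb{R}^n$ arises as the eigenvalue vectors of $n \times n$ Hermitian matrices $X$, $Y$, and $Z = X + Y$ if and only if $\sum_{i=1}^n \gamma_i = \sum_{i=1}^n \alpha_i + \sum_{i=1}^n \beta_i$ and, for every $r < n$ and every $(I,J,K) \in T_r^n$, $\sum_{k \in K} \gamma_k \leq \sum_{i \in I} \alpha_i + \sum_{j \in J} \beta_j$. -/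

import Mathlib

open Matrix Polynomial

/-- `lam` is the vector of eigenvalues of `M` listed with multiplicity:
the characteristic polynomial of `M` is `∏ i (X - lam i)`. -/
def HasSpectrum {m : Type*} [Fintype m] [DecidableEq m] {N : ℕ}
    (M : Matrix m m ℂ) (lam : Fin N → ℝ) : Prop :=
  M.charpoly = ∏ i, (X - C (lam i : ℂ))

/-- Horn's set `U_r^n` of triples `(I, J, K)` of cardinality-`r` subsets of `{1, …, n}`
(encoded as subsets of `Fin n`, the element `i : Fin n` standing for the integer `i + 1`)
satisfying `∑_{i ∈ I} i + ∑_{j ∈ J} j = ∑_{k ∈ K} k + r(r+1)/2`. -/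
def HornU (n r : ℕ) : Set (Finset (Fin n) × Finset (Fin n) × Finset (Fin n)) :=
  {T | T.1.card = r ∧ T.2.1.card = r ∧ T.2.2.card = r ∧
    (∑ i ∈ T.1, ((i : ℕ) + 1)) + (∑ j ∈ T.2.1, ((j : ℕ) + 1)) =
      (∑ k ∈ T.2.2, ((k : ℕ) + 1)) + r * (r + 1) / 2}

/-- Horn's inductively defined set `T_r^n`: the triples `(I, J, K) ∈ U_r^n`, written
`I = {i_1 < ⋯ < i_r}` etc., such that for all `1 ≤ p < r` and all `(F, G, H) ∈ T_p^r`,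
`∑_{f ∈ F} i_f + ∑_{g ∈ G} j_g ≤ ∑_{h ∈ H} k_h + p(p+1)/2`. -/
def HornT (r n : ℕ) : Set (Finset (Fin n) × Finset (Fin n) × Finset (Fin n)) :=
  {T | T ∈ HornU n r ∧
    ∀ (hI : T.1.card = r) (hJ : T.2.1.card = r) (hK : T.2.2.card = r),
    ∀ p, 1 ≤ p → ∀ _hp : p < r, ∀ S ∈ HornT p r,
      (∑ f ∈ S.1, (((T.1.orderEmbOfFin hI) f : ℕ) + 1)) +
          (∑ g ∈ S.2.1, (((T.2.1.orderEmbOfFin hJ) g : ℕ) + 1)) ≤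
        (∑ h ∈ S.2.2, (((T.2.2.orderEmbOfFin hK) h : ℕ) + 1)) + p * (p + 1) / 2}
termination_by r

/-!
In the symmetric form `(-X) + (-Y) + Z = 0`, one asks for Hermitian matrices with given spectra
`z i` and sum zero. For such matrices, a common point of Schubert varieties for their eigenflags
gives the inequality `∑ i, ∑ c, z i (I i c) ≤ 0`: the traces on that subspace add up to zero, and
each is at least the sum of the eigenvalues in question.

Schubert varieties of index `I i` meet for all families of flags iff a linear map, expressing that
linear maps from a subspace to the quotient by it are compatible with flags, is surjective for
generic flags (the differential of the incidence variety is then surjective). Following Belkale, if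
surjectivity fails, the generic element of the kernel has itself a kernel, on which the flags
induce generic flags; by induction on the dimension, its Schubert position violates a dimension
inequality. So these families of positions obey the recursion of Horn.

Conversely, the inequalities say that a generic family of flags `v i` with weights `z i` is
semistable. Then the Kempf–Ness function, the weighted sum of the logarithms of the quotients of
successive leading minors of `(v i)ᴴ * M * v i`, is bounded below on positive definite matrices
`M`. Near-minimizers, moved to the identity by congruence, subconverge to unitary matrices `q i` at
which the derivative `∑ i, q i * diagonal (z i) * (q i)ᴴ` of the function vanishes.
-/

namespace Horn

/-! ### Generic points -/

section Generic

open scoped ContDiff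
open Module (finrank)

variable {X Y : Type*} [NormedAddCommGroup X] [NormedSpace ℂ X] [NormedAddCommGroup Y]
  [NormedSpace ℂ Y]

lemma dense_ne_zero_of_contDiff {f : X → ℂ} (hf : ContDiff ℂ ω f) (hne : ∃ x, f x ≠ 0) :
    Dense {x | f x ≠ 0} := by
  obtain ⟨y, hy⟩ := hne
  change Dense {x | f x = 0}ᶜ
  rw [← interior_eq_empty_iff_dense_compl, Set.eq_empty_iff_forall_notMem]
  intro x hx
  have hzero := (contDiff_omega_iff_analyticOnNhd.mp hf).eq_of_eventuallyEq
    (g := fun _ ↦ (0 : ℂ)) analyticOnNhd_const (mem_interior_iff_mem_nhds.mp hx)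
  exact hy (congrFun hzero y)

/-- The filter of generic subsets of a complex normed space: a set is generic when it contains
the nonvanishing locus of an entire function that is not identically zero. -/
def generic (X : Type*) [NormedAddCommGroup X] [NormedSpace ℂ X] : Filter X where
  sets := {s | ∃ f : X → ℂ, ContDiff ℂ ω f ∧ (∃ x, f x ≠ 0) ∧ ∀ x, f x ≠ 0 → x ∈ s}
  univ_sets := ⟨fun _ ↦ 1, contDiff_const, ⟨0, one_ne_zero⟩, fun _ _ ↦ trivial⟩
  sets_of_superset := fun ⟨f, hf, hne, hs⟩ hst ↦ ⟨f, hf, hne, fun x hx ↦ hst (hs x hx)⟩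
  inter_sets := by
    rintro s t ⟨f, hf, hne, hs⟩ ⟨g, hg, ⟨y, hy⟩, ht⟩
    obtain ⟨x, hgx, hfx⟩ := (dense_ne_zero_of_contDiff hf hne).inter_open_nonempty _
      (isOpen_ne_fun hg.continuous continuous_const) ⟨y, hy⟩
    exact ⟨fun x ↦ f x * g x, hf.mul hg, ⟨x, mul_ne_zero hfx hgx⟩,
      fun x hx ↦ ⟨hs x (left_ne_zero_of_mul hx), ht x (right_ne_zero_of_mul hx)⟩⟩

lemma eventually_generic_ne_zero {f : X → ℂ} (hf : ContDiff ℂ ω f) {x₀ : X} (hx₀ : f x₀ ≠ 0) :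
    ∀ᶠ x in generic X, f x ≠ 0 :=
  ⟨f, hf, ⟨x₀, hx₀⟩, fun _ hx ↦ hx⟩

lemma dense_of_eventually_generic {p : X → Prop} (h : ∀ᶠ x in generic X, p x) :
    Dense {x | p x} :=
  let ⟨_, hf, hne, hs⟩ := h
  (dense_ne_zero_of_contDiff hf hne).mono hs

instance generic_neBot : (generic X).NeBot :=
  Filter.neBot_iff.mpr fun h ↦
    (dense_of_eventually_generic (p := fun _ : X ↦ False) (by simp [h])).nonempty.elim
      fun _ hx ↦ hx

lemma tendsto_generic_of_surjective {g : X → Y} (hg : ContDiff ℂ ω g)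
    (hsurj : Function.Surjective g) : Filter.Tendsto g (generic X) (generic Y) := by
  rintro s ⟨f, hf, ⟨y, hy⟩, hs⟩
  obtain ⟨x, rfl⟩ := hsurj y
  exact ⟨f ∘ g, hf.comp hg, ⟨x, hy⟩, fun x hx ↦ hs (g x) hx⟩

lemma contDiff_det {m : Type*} [Fintype m] [DecidableEq m] {n : WithTop ℕ∞}
    {M : X → Matrix m m ℂ} (hM : ∀ i j, ContDiff ℂ n fun x ↦ M x i j) :
    ContDiff ℂ n fun x ↦ (M x).det := by
  simp only [Matrix.det_apply]
  exact ContDiff.sum fun σ _ ↦ (contDiff_prod fun i _ ↦ hM _ _).const_smul _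

variable {E F : Type*} [AddCommGroup E] [Module ℂ E] [NormedAddCommGroup F] [NormedSpace ℂ F]
  [FiniteDimensional ℂ F]

lemma exists_finrank_range_coordinates {K E F : Type*} [Field K] [AddCommGroup E] [Module K E]
    [AddCommGroup F] [Module K F] [FiniteDimensional K F] (T : E →ₗ[K] F) :
    ∃ (Q : F →ₗ[K] (Fin (finrank K T.range) → K)) (φ : Fin (finrank K T.range) → E),
      ∀ i j, Q (T (φ j)) i = (1 : Matrix _ _ K) i j := by
  let b := Module.finBasis K T.range
  choose φ hφ using fun i ↦ (b i).2
  obtain ⟨q, hq⟩ := T.range.subtype.exists_leftInverse_of_injective (Submodule.ker_subtype _)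
  refine ⟨b.equivFun.toLinearMap ∘ₗ q, φ, fun i j ↦ ?_⟩
  have hqb : q (b j : F) = b j := LinearMap.congr_fun hq (b j)
  simp [hφ, hqb, Matrix.one_apply, eq_comm]

/-- The nonvanishing of a maximal minor of `T x₀` is inherited by generic members of the family. -/
lemma eventually_generic_finrank_range_ge {T : X → E →ₗ[ℂ] F}
    (hT : ∀ φ, ContDiff ℂ ω fun x ↦ T x φ) (x₀ : X) :
    ∀ᶠ x in generic X, finrank ℂ (T x₀).range ≤ finrank ℂ (T x).range := by
  obtain ⟨Q, φ, hQ⟩ := exists_finrank_range_coordinates (T x₀)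
  let M (x : X) := Matrix.of fun i j ↦ Q (T x (φ j)) i
  have hM : ContDiff ℂ ω fun x ↦ (M x).det := contDiff_det fun i j ↦
    contDiff_pi.mp (Q.toContinuousLinearMap.contDiff.comp (hT (φ j))) i
  have hM₀ : (M x₀).det ≠ 0 := by
    rw [show M x₀ = 1 from Matrix.ext hQ, det_one]
    exact one_ne_zero
  filter_upwards [eventually_generic_ne_zero hM hM₀] with x hx
  have hcols : LinearIndependent ℂ fun j ↦ T x (φ j) :=
    .of_comp Q (linearIndependent_cols_of_det_ne_zero hx)
  have hrange : LinearIndependent ℂ fun j ↦ (T x).rangeRestrict (φ j) :=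
    .of_comp (T x).range.subtype hcols
  simpa using hrange.fintype_card_le_finrank

lemma eventually_generic_surjective {T : X → E →ₗ[ℂ] F}
    (hT : ∀ φ, ContDiff ℂ ω fun x ↦ T x φ) {x₀ : X} (hx₀ : Function.Surjective (T x₀)) :
    ∀ᶠ x in generic X, Function.Surjective (T x) := by
  filter_upwards [eventually_generic_finrank_range_ge hT x₀] with x hx
  rw [LinearMap.range_eq_top.mpr hx₀, finrank_top] at hx
  exact LinearMap.range_eq_top.mp
    (Submodule.eq_top_of_finrank_eq (le_antisymm (Submodule.finrank_le _) hx))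

/-- First-order rigidity of maximal rank: were `U φ` outside the range of `T`, the augmented family
`T + t U` together with the direction `U φ` would have larger rank for some `t ≠ 0`, but there
`U φ = t⁻¹ (T + t U) φ` already lies in the range. -/
lemma mem_range_of_finrank_range_add_smul_le {T U : E →ₗ[ℂ] F}
    (hmax : ∀ t : ℂ, finrank ℂ (T + t • U).range ≤ finrank ℂ T.range) {φ : E} (hφ : T φ = 0) :
    U φ ∈ T.range := by
  by_contra hUφ
  let S (t : ℂ) : E × ℂ →ₗ[ℂ] F := (T + t • U).coprod (LinearMap.toSpanSingleton ℂ _ (U φ))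
  have hS : ∀ x, ContDiff ℂ ω fun t ↦ S t x := fun x ↦ by
    simp only [S, LinearMap.coprod_apply, LinearMap.add_apply, LinearMap.smul_apply]
    fun_prop
  have hne : ∀ᶠ t : ℂ in generic ℂ, t ≠ 0 := eventually_generic_ne_zero contDiff_id one_ne_zero
  obtain ⟨t, hrank, ht⟩ := ((eventually_generic_finrank_range_ge hS 0).and hne).exists
  have hSt : (S t).range ≤ (T + t • U).range := by
    rintro _ ⟨⟨x, c⟩, rfl⟩
    refine ⟨x + (c / t) • φ, ?_⟩
    simp [S, hφ, smul_smul, mul_div_cancel₀ _ ht, add_assoc]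
  have hS₀ : T.range < (S 0).range := by
    refine SetLike.lt_iff_le_and_exists.mpr ⟨?_, U φ, ⟨(0, 1), by simp [S]⟩, hUφ⟩
    rintro _ ⟨x, rfl⟩
    exact ⟨(x, 0), by simp [S]⟩
  exact absurd (hrank.trans ((Submodule.finrank_mono hSt).trans (hmax t)))
    (Submodule.finrank_lt_finrank_of_lt hS₀).not_ge

end Generic

/-! ### Polynomial maps -/

section PolynomialMaps

variable {σ τ K : Type*} [Field K]

/-- The polynomial map between affine spaces with the given coordinate polynomials. -/
noncomputable def polyMap (P : τ → MvPolynomial σ K) (x : σ → K) (t : τ) : K :=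
  MvPolynomial.eval x (P t)

lemma eval_aeval_eq_eval_polyMap (P : τ → MvPolynomial σ K) (p : MvPolynomial τ K) (x : σ → K) :
    MvPolynomial.eval x (MvPolynomial.aeval P p) = MvPolynomial.eval (polyMap P x) p := by
  induction p using MvPolynomial.induction_on with
  | C a => simp
  | add p q hp hq => rw [map_add, map_add, hp, hq, map_add]
  | mul_X p t hp => rw [map_mul, map_mul, hp, map_mul, MvPolynomial.aeval_X, MvPolynomial.eval_X,
      polyMap]

lemma exists_basicOpen_subset_of_isConstructible {R : Type*} [CommRing R] [IsDomain R]
    {s : Set (PrimeSpectrum R)} (hs : Topology.IsConstructible s)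
    (hbot : ⟨⊥, Ideal.isPrime_bot⟩ ∈ s) :
    ∃ f : R, f ≠ 0 ∧ (PrimeSpectrum.basicOpen f : Set (PrimeSpectrum R)) ⊆ s := by
  obtain ⟨S, rfl⟩ := PrimeSpectrum.exists_constructibleSetData_iff.mpr hs
  simp only [PrimeSpectrum.ConstructibleSetData.toSet, Set.mem_iUnion,
    PrimeSpectrum.BasicConstructibleSetData.toSet] at hbot
  obtain ⟨B, hB, hzero, hne⟩ := hbot
  have hg : ∀ i, B.g i = 0 := fun i ↦ by
    simpa using (PrimeSpectrum.mem_zeroLocus _ _).mp hzero ⟨i, rfl⟩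
  refine ⟨B.f, fun h ↦ hne (by simp [h]), fun q hq ↦ ?_⟩
  simp only [PrimeSpectrum.ConstructibleSetData.toSet, Set.mem_iUnion,
    PrimeSpectrum.BasicConstructibleSetData.toSet]
  refine ⟨B, hB, ?_, by simpa [PrimeSpectrum.mem_zeroLocus] using hq⟩
  rw [PrimeSpectrum.mem_zeroLocus]
  rintro _ ⟨i, rfl⟩
  simp [hg i]

/-- The range is constructible by Chevalley's theorem and contains the generic point, hence a
nonempty open set. -/
lemma exists_hypersurface_compl_subset_range_polyMap [Finite σ] [Finite τ] [IsAlgClosed K]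
    {P : τ → MvPolynomial σ K} (hP : AlgebraicIndependent K P) :
    ∃ a : MvPolynomial τ K, a ≠ 0 ∧ ∀ y, MvPolynomial.eval y a ≠ 0 → y ∈ Set.range (polyMap P) := by
  let f : MvPolynomial τ K →+* MvPolynomial σ K := (MvPolynomial.aeval P).toRingHom
  have hf : f.FinitePresentation := by
    refine RingHom.FinitePresentation.of_finiteType.mp
      (RingHom.FiniteType.of_comp_finiteType (f := (MvPolynomial.C : K →+* MvPolynomial τ K)) ?_)
    rw [show f.comp MvPolynomial.C = algebraMap K (MvPolynomial σ K) by ext x; simp [f]]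
    exact RingHom.finiteType_algebraMap.mpr inferInstance
  obtain ⟨a, ha, hsub⟩ := exists_basicOpen_subset_of_isConstructible
    (PrimeSpectrum.isConstructible_range_comap hf) ⟨⟨⊥, Ideal.isPrime_bot⟩, by
      ext x
      exact map_eq_zero_iff f hP⟩
  refine ⟨a, ha, fun y hy ↦ ?_⟩
  obtain ⟨q, hq⟩ := @hsub (MvPolynomial.pointToPoint (k := K) y) fun h ↦
    hy (MvPolynomial.mem_vanishingIdeal_singleton_iff y a |>.mp h)
  obtain ⟨M, hM, hqM⟩ := Ideal.exists_le_maximal q.asIdeal q.2.ne_top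
  obtain ⟨x, rfl⟩ := MvPolynomial.eq_vanishingIdeal_singleton_of_isMaximal K hM
  refine ⟨x, funext fun t ↦ ?_⟩
  have hmem : (MvPolynomial.X t - MvPolynomial.C (y t)) ∈ (PrimeSpectrum.comap f q).asIdeal := by
    rw [hq]
    exact (MvPolynomial.mem_vanishingIdeal_singleton_iff y _).mpr (by simp)
  have hx := (MvPolynomial.mem_vanishingIdeal_singleton_iff x _).mp (hqM hmem)
  simpa [f, sub_eq_zero, MvPolynomial.aeval_eq_eval, polyMap] using hx

lemma exists_algebraicIndependent_extension {P : τ → MvPolynomial σ K}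
    (hP : AlgebraicIndependent K P) :
    ∃ (Q : σ → MvPolynomial σ K) (j : τ → σ),
      AlgebraicIndependent K Q ∧ Function.Injective j ∧ ∀ t, Q (j t) = P t := by
  have hadjoin : Algebra.adjoin K (Set.range P ∪ Set.range MvPolynomial.X) =
      (⊤ : Subalgebra K (MvPolynomial σ K)) :=
    top_unique (MvPolynomial.adjoin_range_X.symm.trans_le
      (Algebra.adjoin_mono Set.subset_union_right))
  have halg : Algebra.IsAlgebraic (Algebra.adjoin K (Set.range P ∪ Set.range MvPolynomial.X))
      (MvPolynomial σ K) := by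
    rw [hadjoin]
    exact ⟨fun x ↦ isAlgebraic_algebraMap (⟨x, trivial⟩ : (⊤ : Subalgebra K _))⟩
  obtain ⟨u, hPu, -, hu⟩ := exists_isTranscendenceBasis_between (R := K) (Set.range P)
    (Set.range P ∪ Set.range MvPolynomial.X) Set.subset_union_left hP.to_subtype_range
  obtain ⟨e⟩ := Cardinal.lift_mk_eq'.mp
    ((IsTranscendenceBasis.mvPolynomial σ K).lift_cardinalMk_eq hu)
  refine ⟨fun s ↦ e s, fun t ↦ e.symm ⟨P t, hPu ⟨t, rfl⟩⟩, hu.1.comp e e.injective,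
    fun t t' h ↦ hP.injective ?_, fun t ↦ by simp⟩
  simpa using h

end PolynomialMaps

section ComplexPolynomialMaps

open scoped ContDiff

variable {σ τ : Type*}

lemma contDiff_eval [Fintype σ] (p : MvPolynomial σ ℂ) :
    ContDiff ℂ ω fun x ↦ MvPolynomial.eval x p :=
  contDiff_omega_iff_analyticOnNhd.mpr (AnalyticOnNhd.eval_mvPolynomial p)

lemma eventually_generic_eval_ne_zero [Fintype σ] {p : MvPolynomial σ ℂ}
    (hp : p ≠ 0) :
    ∀ᶠ x in generic (σ → ℂ), MvPolynomial.eval x p ≠ 0 := by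
  obtain ⟨x, hx⟩ : ∃ x, MvPolynomial.eval x p ≠ 0 := by
    by_contra! h
    exact hp (MvPolynomial.funext fun x ↦ by simpa using h x)
  exact eventually_generic_ne_zero (contDiff_eval p) hx

/-- The easy case of Sard's theorem, in equal dimensions. -/
lemma volume_image_eq_zero_of_not_surjective_fderiv [Fintype σ]
    {f : (σ → ℂ) → σ → ℂ} {s : Set (σ → ℂ)} (hf : Differentiable ℂ f)
    (hs : ∀ x ∈ s, ¬ Function.Surjective (fderiv ℂ f x)) :
    MeasureTheory.volume (f '' s) = 0 := by
  refine MeasureTheory.addHaar_image_eq_zero_of_det_fderivWithin_eq_zero _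
    (fun x _ ↦ ((hf x).hasFDerivAt.restrictScalars ℝ).hasFDerivWithinAt) fun x hx ↦ ?_
  by_contra hdet
  exact hs x hx (LinearMap.equivOfDetNeZero ((fderiv ℂ f x).restrictScalars ℝ).toLinearMap
    hdet).surjective

variable {P : τ → MvPolynomial σ ℂ}

lemma contDiff_polyMap [Fintype σ] [Fintype τ] (P : τ → MvPolynomial σ ℂ) :
    ContDiff ℂ ω (polyMap P) :=
  contDiff_pi.mpr fun t ↦ contDiff_eval (P t)

lemma algebraicIndependent_of_surjective_fderiv [Finite σ] [Finite τ]
    {x : σ → ℂ} (hx : Function.Surjective (fderiv ℂ (polyMap P) x)) : AlgebraicIndependent ℂ P := by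
  cases nonempty_fintype σ
  cases nonempty_fintype τ
  refine algebraicIndependent_iff.mpr fun p hp ↦ ?_
  by_contra hne
  have hopen : Set.range (polyMap P) ∈ nhds (polyMap P x) := by
    rw [← ((contDiff_polyMap P).contDiffAt.hasStrictFDerivAt (by simp)).map_nhds_eq_of_surj
      (LinearMap.range_eq_top.mpr hx)]
    exact Filter.range_mem_map
  obtain ⟨_, hy, ⟨z, rfl⟩⟩ :=
    (dense_of_eventually_generic (eventually_generic_eval_ne_zero hne)).inter_nhds_nonempty hopen
  exact hy (by rw [← eval_aeval_eq_eval_polyMap, hp, map_zero])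

lemma eventually_generic_mem_range_polyMap [Finite σ] [Fintype τ]
    {x : σ → ℂ} (hx : Function.Surjective (fderiv ℂ (polyMap P) x)) :
    ∀ᶠ y in generic (τ → ℂ), y ∈ Set.range (polyMap P) := by
  obtain ⟨a, ha, hsub⟩ := exists_hypersurface_compl_subset_range_polyMap
    (algebraicIndependent_of_surjective_fderiv hx)
  exact (eventually_generic_eval_ne_zero ha).mono hsub

/-- Complete `P` to a dominant self-map of the source: its image contains a nonempty open set,
hence is not contained in the null set of its critical values. -/
lemma exists_surjective_fderiv_polyMap [Finite σ] [Finite τ]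
    (hP : AlgebraicIndependent ℂ P) {b : MvPolynomial τ ℂ} (hb : b ≠ 0) :
    ∃ x, MvPolynomial.eval (polyMap P x) b ≠ 0 ∧ Function.Surjective (fderiv ℂ (polyMap P) x) := by
  cases nonempty_fintype σ
  cases nonempty_fintype τ
  by_contra! hcrit
  obtain ⟨Q, j, hQ, hj, hQP⟩ := exists_algebraicIndependent_extension hP
  let R : (σ → ℂ) →L[ℂ] (τ → ℂ) := .pi fun t ↦ .proj (j t)
  have hR : Function.Surjective R := fun z ↦ by
    obtain ⟨y, hy⟩ := hj.surjective_comp_right (γ := ℂ) z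
    exact ⟨y, hy⟩
  have hPR : polyMap P = R ∘ polyMap Q := by ext x t; simp [R, polyMap, hQP]
  have hdiff : Differentiable ℂ (polyMap Q) := (contDiff_polyMap Q).differentiable (by simp)
  let s : Set (σ → ℂ) := {x | MvPolynomial.eval (polyMap P x) b ≠ 0}
  have hnull : MeasureTheory.volume (polyMap Q '' s) = 0 := by
    refine volume_image_eq_zero_of_not_surjective_fderiv hdiff fun x hx hsurj ↦ hcrit x hx ?_
    rw [hPR, fderiv_comp x R.differentiableAt (hdiff x), R.fderiv]
    exact hR.comp hsurj
  obtain ⟨a, ha, hrange⟩ := exists_hypersurface_compl_subset_range_polyMap hQ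
  let p := a * MvPolynomial.rename j b
  have hp : p ≠ 0 :=
    mul_ne_zero ha ((map_ne_zero_iff _ (MvPolynomial.rename_injective j hj)).mpr hb)
  have hsub : {y | MvPolynomial.eval y p ≠ 0} ⊆ polyMap Q '' s := by
    intro y hy
    simp only [p, map_mul, MvPolynomial.eval_rename, Set.mem_ofPred_eq, mul_ne_zero_iff] at hy
    obtain ⟨x, rfl⟩ := hrange y hy.1
    exact ⟨x, by rw [Set.mem_ofPred_eq, hPR]; exact hy.2, rfl⟩
  have hopen : IsOpen {y | MvPolynomial.eval y p ≠ 0} :=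
    isOpen_ne_fun (MvPolynomial.continuous_eval p) continuous_const
  have hempty := (hopen.measure_eq_zero_iff MeasureTheory.volume).mp
    (MeasureTheory.measure_mono_null hsub hnull)
  simpa [hempty] using (dense_of_eventually_generic (eventually_generic_eval_ne_zero hp)).nonempty

lemma eventually_generic_notMem_range_polyMap [Finite σ] [Fintype τ]
    {b : MvPolynomial τ ℂ} (hb : b ≠ 0)
    (hcrit : ∀ x, MvPolynomial.eval (polyMap P x) b ≠ 0 →
      ¬ Function.Surjective (fderiv ℂ (polyMap P) x)) :
    ∀ᶠ y in generic (τ → ℂ), y ∉ Set.range (polyMap P) := by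
  have hdep : ¬ AlgebraicIndependent ℂ P := fun hP ↦
    let ⟨x, hbx, hx⟩ := exists_surjective_fderiv_polyMap hP hb
    hcrit x hbx hx
  obtain ⟨p, hp, hne⟩ : ∃ p, MvPolynomial.aeval P p = 0 ∧ p ≠ 0 := by
    by_contra! h
    exact hdep (algebraicIndependent_iff.mpr h)
  filter_upwards [eventually_generic_eval_ne_zero hne]
  rintro _ hy ⟨x, rfl⟩
  exact hy (by rw [← eval_aeval_eq_eval_polyMap, hp, map_zero])

end ComplexPolynomialMaps

/-! ### Echelon forms -/

section Echelon

variable {K m n : Type*} [Field K] [LinearOrder m] [LinearOrder n]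

/-- The staircase condition on a matrix: column `c` vanishes below row `F c`. Geometrically, the
column lies in the `F c`-th subspace of the standard flag. -/
def IsStaircase {m n K : Type*} [LT m] [Zero K] (F : n → m) (e : Matrix m n K) : Prop :=
  ∀ a c, F c < a → e a c = 0

/-- Column echelon form with pivot of column `c` in row `F c`; pivots need not be normalised. -/
structure IsEchelon {m n K : Type*} [LT m] [LT n] [Zero K] (F : n → m) (e : Matrix m n K) :
    Prop where
  pivot_lt_pivot ⦃c d : n⦄ : c < d → F c < F d
  isStaircase : IsStaircase F e
  pivot_ne_zero (c : n) : e (F c) c ≠ 0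

lemma IsEchelon.strictMono {F : n → m} {e : Matrix m n K} (h : IsEchelon F e) : StrictMono F :=
  h.pivot_lt_pivot

lemma exists_last_ne_zero [Finite n] {x : n → K} (hx : x ≠ 0) :
    ∃ d, x d ≠ 0 ∧ ∀ d', d < d' → x d' = 0 := by
  obtain ⟨i, hi⟩ := Function.ne_iff.mp hx
  obtain ⟨d, hd, hmax⟩ := Set.Finite.exists_maximal (Set.toFinite {i | x i ≠ 0}) ⟨i, hi⟩
  exact ⟨d, hd, fun d' hdd' ↦ by_contra fun h ↦ (hmax h hdd'.le).not_gt hdd'⟩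

variable [Fintype n]

lemma IsStaircase.mulVec_apply_last {F : n → m} {e : Matrix m n K} (he : IsStaircase F e)
    (hF : StrictMono F) {x : n → K} {d : n} (hx : ∀ d', d < d' → x d' = 0) :
    (e *ᵥ x) (F d) = e (F d) d * x d := by
  rw [mulVec, dotProduct, Finset.sum_eq_single d]
  · intro b _ hbd
    rcases lt_or_gt_of_ne hbd with h | h
    · rw [he _ _ (hF h), zero_mul]
    · rw [hx b h, mul_zero]
  · simp

lemma IsEchelon.eq_zero_of_mulVec_eq_zero {F : n → m} {e : Matrix m n K} (he : IsEchelon F e)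
    {x : n → K} (hx : e *ᵥ x = 0) : x = 0 := by
  by_contra hne
  obtain ⟨d, hd, hlast⟩ := exists_last_ne_zero hne
  have h := he.isStaircase.mulVec_apply_last he.strictMono hlast
  rw [hx, Pi.zero_apply, eq_comm, mul_eq_zero] at h
  exact h.elim (he.pivot_ne_zero d) hd

lemma IsEchelon.finrank_range {F : n → m} {e : Matrix m n K} (he : IsEchelon F e) :
    Module.finrank K e.mulVecLin.range = Fintype.card n := by
  rw [LinearMap.finrank_range_of_inj (LinearMap.ker_eq_bot.mp
    (LinearMap.ker_eq_bot'.mpr fun x hx ↦ he.eq_zero_of_mulVec_eq_zero hx)),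
    Module.finrank_fintype_fun_eq_card]

lemma mem_span_of_leading [Finite m] {S : Submodule K (m → K)}
    {T : Finset m} (hT : ∀ x ∈ S, ∀ a, x a ≠ 0 → (∀ b, a < b → x b = 0) → a ∈ T)
    {v : T → m → K} (hS : ∀ a, v a ∈ S) (hv : ∀ a, v a a ≠ 0)
    (hlast : ∀ (a : T) (b : m), a < b → v a b = 0) {x : m → K} (hx : x ∈ S) :
    x ∈ Submodule.span K (Set.range v) := by
  suffices h : ∀ a, ∀ x ∈ S, x a ≠ 0 → (∀ b, a < b → x b = 0) →
      x ∈ Submodule.span K (Set.range v) by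
    by_cases hx0 : x = 0
    · simp [hx0]
    · obtain ⟨a, ha, hlast⟩ := exists_last_ne_zero hx0
      exact h a x hx ha hlast
  intro a
  induction a using WellFoundedLT.induction with
  | ind a ih =>
    intro x hx hxa hxlast
    let t : T := ⟨a, hT x hx a hxa hxlast⟩
    have ht : v t ∈ Submodule.span K (Set.range v) := Submodule.subset_span ⟨t, rfl⟩
    let y := x - (x a / v t a) • v t
    have hy_last (b : m) (hb : a ≤ b) : y b = 0 := by
      rcases hb.eq_or_lt with rfl | hb
      · simp [y, t, div_mul_cancel₀ _ (hv t)]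
      · simp [y, hxlast b hb, hlast t b hb]
    suffices hy : y ∈ Submodule.span K (Set.range v) by
      simpa [y] using add_mem hy (Submodule.smul_mem _ (x a / v t a) ht)
    by_cases hy0 : y = 0
    · simp [hy0]
    · obtain ⟨d, hd, hdlast⟩ := exists_last_ne_zero hy0
      exact ih d (lt_of_not_ge fun h ↦ hd (hy_last d h)) y
        (sub_mem hx (S.smul_mem _ (hS t))) hd hdlast

lemma exists_isEchelon_range_eq [Finite m] {p : ℕ} {S : Submodule K (m → K)}
    (hS : Module.finrank K S = p) :
    ∃ (F : Fin p → m) (e : Matrix m (Fin p) K), IsEchelon F e ∧ e.mulVecLin.range = S := by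
  classical
  cases nonempty_fintype m
  let T : Finset m := {a | ∃ x ∈ S, x a ≠ 0 ∧ ∀ b, a < b → x b = 0}
  choose v hvS hv hlast using fun a : T ↦ (Finset.mem_filter.mp a.2).2
  obtain ⟨q, hq⟩ : ∃ q, T.card = q := ⟨_, rfl⟩
  let F := T.orderIsoOfFin hq
  let e : Matrix m (Fin q) K := .of fun a c ↦ v (F c) a
  have he : IsEchelon (fun c ↦ (F c : m)) e :=
    ⟨F.strictMono, fun a c h ↦ hlast (F c) a h, fun c ↦ hv (F c)⟩
  have hrange : e.mulVecLin.range = S := by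
    have hcols : Set.range e.col = Set.range v := F.surjective.range_comp v
    rw [range_mulVecLin, hcols]
    refine le_antisymm (Submodule.span_le.mpr ?_) fun x hx ↦ ?_
    · rintro _ ⟨a, rfl⟩
      exact hvS a
    · exact mem_span_of_leading (fun x hx a hxa h ↦ by simpa [T] using ⟨x, hx, hxa, h⟩)
        hvS hv hlast hx
  obtain rfl : q = p := by rw [← hS, ← hrange, he.finrank_range, Fintype.card_fin]
  exact ⟨_, e, he, hrange⟩

lemma exists_isEchelon_mul [Finite m] {p : ℕ} {A : Matrix m (Fin p) K}
    (hA : ∀ x, A *ᵥ x = 0 → x = 0) :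
    ∃ (F : Fin p → m) (u : Matrix (Fin p) (Fin p) K), IsUnit u.det ∧ IsEchelon F (A * u) := by
  have hrank : Module.finrank K A.mulVecLin.range = p := by
    rw [LinearMap.finrank_range_of_inj (LinearMap.ker_eq_bot.mp (LinearMap.ker_eq_bot'.mpr hA))]
    simp
  obtain ⟨F, e, he, hrange⟩ := exists_isEchelon_range_eq hrank
  have hcol (c : Fin p) : ∃ x, A *ᵥ x = e.col c := by
    rw [← mulVec_single_one]
    exact hrange.le ⟨_, rfl⟩
  choose u hu using hcol
  obtain rfl : A * Matrix.of (fun a c ↦ u c a) = e := by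
    ext a c
    exact congrFun (hu c) a
  refine ⟨F, _, isUnit_iff_ne_zero.mpr fun hdet ↦ ?_, he⟩
  obtain ⟨x, hx, hx0⟩ := exists_mulVec_eq_zero_iff.mpr hdet
  exact hx (he.eq_zero_of_mulVec_eq_zero (by rw [← mulVec_mulVec, hx0, mulVec_zero]))

lemma det_eq_zero_of_forall_le_of_le [LocallyFiniteOrderBot n] {R : Type*} [CommRing R]
    {A : Matrix n n R} {c : n} (h : ∀ i j, j ≤ c → c ≤ i → A i j = 0) : A.det = 0 := by
  rw [det_apply]
  refine Finset.sum_eq_zero fun σ _ ↦ ?_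
  obtain ⟨j, hj, hσ⟩ : ∃ j ≤ c, c ≤ σ j := by
    by_contra! hcon
    have hcard : (Finset.Iic c).card ≤ (Finset.Iio c).card :=
      Finset.card_le_card_of_injOn σ (fun j hj ↦ by simpa using hcon j (by simpa using hj))
        σ.injective.injOn
    exact (Finset.card_lt_card (s := Finset.Iio c) (t := Finset.Iic c)
      ⟨Finset.Iio_subset_Iic_self, fun h ↦ by simpa using h (Finset.mem_Iic.mpr le_rfl)⟩).not_ge
        hcard
  rw [Finset.prod_eq_zero (f := fun i ↦ A (σ i) i) (Finset.mem_univ j) (h _ _ hj hσ), smul_zero]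

lemma IsEchelon.pivot_le [LocallyFiniteOrderBot n] {F G : n → m} {e : Matrix m n K}
    (he : IsEchelon G e) (hF : StrictMono F) {t : Matrix n n K} (ht : IsUnit t.det)
    (het : IsStaircase F (e * t)) (c : n) : G c ≤ F c := by
  by_contra! hlt
  refine ht.ne_zero (det_eq_zero_of_forall_le_of_le (c := c) fun i j hj hi ↦ ?_)
  by_contra hij
  obtain ⟨d, hd, hlast⟩ := exists_last_ne_zero (x := t.col j) fun h ↦ hij (congrFun h i)
  have hid : i ≤ d := le_of_not_gt fun h ↦ hij (hlast i h)
  have hentry := he.isStaircase.mulVec_apply_last he.strictMono hlast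
  refine mul_ne_zero (he.pivot_ne_zero d) hd (hentry.symm.trans (het _ _ ?_))
  exact (hF.monotone hj).trans_lt (hlt.trans_le (he.strictMono.monotone (hi.trans hid)))

omit [LinearOrder m] [LinearOrder n] in
lemma extend_vecMul [Fintype m] {F : n → m} (hF : Function.Injective F) (z : n → K)
    {l : Type*} (e : Matrix m l K) :
    Function.extend F z 0 ᵥ* e = z ᵥ* e.submatrix F id := by
  ext c
  refine (Finset.sum_of_injOn F hF.injOn (by simp) (fun a _ ha ↦ ?_) fun c _ ↦ ?_).symm
  · rw [Function.extend_apply', Pi.zero_apply, zero_mul]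
    rintro ⟨c, rfl⟩
    exact ha ⟨c, by simp, rfl⟩
  · rw [hF.extend_apply]
    rfl

omit [Fintype n] in
lemma IsEchelon.exists_vecMul_eq [Fintype m] [Finite n] {F : n → m} {e : Matrix m n K}
    (he : IsEchelon F e) (d : n → K) :
    ∃ x : m → K, x ᵥ* e = d ∧ (∀ a ∉ Set.range F, x a = 0) ∧
      ∀ c, (∀ c' ≤ c, d c' = 0) → x (F c) = 0 := by
  cases nonempty_fintype n
  let U : Matrix n n K := e.submatrix F id
  have hU : U.BlockTriangular id := fun i j hij ↦ he.isStaircase _ _ (he.strictMono hij)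
  have hdet : IsUnit U.det := by
    rw [det_of_isUpperTriangular hU, isUnit_iff_ne_zero, Finset.prod_ne_zero_iff]
    exact fun i _ ↦ he.pivot_ne_zero i
  have : Invertible U := invertibleOfIsUnitDet U hdet
  have hinv : U⁻¹.BlockTriangular id := blockTriangular_inv_of_blockTriangular hU
  refine ⟨Function.extend F (d ᵥ* U⁻¹) 0, ?_, fun a ha ↦ Function.extend_apply' _ _ _ ha,
    fun c hc ↦ ?_⟩
  · rw [extend_vecMul he.strictMono.injective, vecMul_vecMul, nonsing_inv_mul _ hdet, vecMul_one]
  · rw [he.strictMono.injective.extend_apply]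
    refine Finset.sum_eq_zero fun c' _ ↦ ?_
    rcases le_or_gt c' c with h | h
    · rw [hc c' h, zero_mul]
    · exact mul_eq_zero_of_right _ (hinv h)

end Echelon

/-! ### Transversality of flags -/

section Transversality

open Module (finrank)

variable {ι K : Type*} [Field K] {p r w : ℕ} {l : ι → Fin r → ℕ}
  {v : ι → Matrix (Fin r) (Fin r) K} {y : ι → Matrix (Fin w) (Fin w) K}

/-- The matrix positions `(b, a)`, one copy for each `i : ι`, lying on or below the profile `l i`.
A `w × r` matrix vanishing there maps the subspace spanned by the first `a + 1` basis vectors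
into the one spanned by the first `l i a` basis vectors. -/
abbrev Cells (w : ℕ) (l : ι → Fin r → ℕ) : Type _ :=
  {x : ι × Fin w × Fin r // l x.1 x.2.2 ≤ x.2.1}

/-- The linear map sending `φ` to the entries of the matrices `y i * φ * v i` in the positions
`Cells w l`. Its kernel consists of the maps compatible with the flags given by `v i` and `y i`,
and its surjectivity expresses that these compatibility conditions are independent. -/
def transversalityMap (w : ℕ) (l : ι → Fin r → ℕ) (v : ι → Matrix (Fin r) (Fin r) K)
    (y : ι → Matrix (Fin w) (Fin w) K) : Matrix (Fin w) (Fin r) K →ₗ[K] (Cells w l → K) where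
  toFun φ x := (y x.1.1 * φ * v x.1.1) x.1.2.1 x.1.2.2
  map_add' φ ψ := by ext x; simp [Matrix.mul_add, Matrix.add_mul]
  map_smul' c φ := by ext x; simp

@[simp]
lemma transversalityMap_apply (φ : Matrix (Fin w) (Fin r) K) (x : Cells w l) :
    transversalityMap w l v y φ x = (y x.1.1 * φ * v x.1.1) x.1.2.1 x.1.2.2 := rfl

lemma surjective_transversalityMap_iff :
    Function.Surjective (transversalityMap w l v y) ↔
      ∀ D : ι → Matrix (Fin w) (Fin r) K, ∃ φ : Matrix (Fin w) (Fin r) K,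
        ∀ i (b : Fin w) a, l i a ≤ b → (y i * φ * v i) b a = D i b a := by
  classical
  refine ⟨fun h D ↦ ?_, fun h D ↦ ?_⟩
  · obtain ⟨φ, hφ⟩ := h fun x ↦ D x.1.1 x.1.2.1 x.1.2.2
    exact ⟨φ, fun i b a hab ↦ congrFun hφ ⟨(i, b, a), hab⟩⟩
  · obtain ⟨φ, hφ⟩ := h fun i ↦ Matrix.of fun b a ↦
      if hab : l i a ≤ b then D ⟨(i, b, a), hab⟩ else 0
    refine ⟨φ, funext fun ⟨⟨i, b, a⟩, hab⟩ ↦ ?_⟩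
    exact (hφ i b a hab).trans (by simp only [of_apply]; exact dif_pos hab)

section Counting

variable [Fintype ι]

lemma card_cells (w : ℕ) (l : ι → Fin r → ℕ) :
    Fintype.card (Cells w l) = ∑ i, ∑ a, (w - l i a) := by
  classical
  rw [Fintype.card_subtype, Finset.card_filter, Fintype.sum_prod_type]
  refine Finset.sum_congr rfl fun i _ ↦ ?_
  rw [Fintype.sum_prod_type, Finset.sum_comm]
  refine Finset.sum_congr rfl fun a _ ↦ ?_
  have hcompl : (Finset.univ.filter fun b : Fin w ↦ l i a ≤ b) =
      (Finset.univ.filter fun b : Fin w ↦ (b : ℕ) < l i a)ᶜ := by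
    ext b
    simp
  refine (Finset.card_filter _ _).symm.trans ((congrArg Finset.card hcompl).trans ?_)
  rw [Finset.card_compl, Fin.card_filter_val_lt, Fintype.card_fin]
  lia

lemma card_cells_add_sum (hl : ∀ i a, l i a ≤ w) :
    Fintype.card (Cells w l) + ∑ i, ∑ a, l i a = Fintype.card ι * (r * w) := by
  simp_rw [card_cells, ← Finset.sum_add_distrib, Nat.sub_add_cancel (hl _ _)]
  simp

lemma le_card_cells_add_sum (w : ℕ) (l : ι → Fin r → ℕ) :
    Fintype.card ι * (r * w) ≤ Fintype.card (Cells w l) + ∑ i, ∑ a, l i a := by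
  simp_rw [card_cells, ← Finset.sum_add_distrib]
  calc Fintype.card ι * (r * w) = ∑ _i : ι, ∑ _a : Fin r, w := by simp
    _ ≤ _ := Finset.sum_le_sum fun i _ ↦ Finset.sum_le_sum fun a _ ↦ by lia

lemma card_mul_le_sum_of_surjective (h : Function.Surjective (transversalityMap w l v y)) :
    Fintype.card ι * (r * w) ≤ ∑ i, ∑ a, l i a + r * w := by
  have hcells : Fintype.card (Cells w l) ≤ w * r := by
    have := LinearMap.finrank_range_le (transversalityMap w l v y)
    rwa [LinearMap.range_eq_top.mpr h, finrank_top, Module.finrank_fintype_fun_eq_card,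
      Module.finrank_matrix, Module.finrank_self, mul_one, Fintype.card_fin, Fintype.card_fin]
      at this
  have := le_card_cells_add_sum w l
  linarith [mul_comm r w]

end Counting

section Subposition

variable {F : ι → Fin p → Fin r} {e : ι → Matrix (Fin r) (Fin p) K}
  {m : Matrix (Fin r) (Fin p) K} {u : ι → Matrix (Fin p) (Fin p) K}

/-- Transversality passes to the flags induced on the column space of `m`: here `F i` is the
position of this subspace with respect to the flag `v i`, and `u i` is the induced flag. -/
lemma surjective_transversalityMap_comp (hl : ∀ i, Monotone (l i))
    (h : Function.Surjective (transversalityMap w l v y)) (he : ∀ i, IsEchelon (F i) (e i))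
    (hm : ∀ i, m * u i = v i * e i) :
    Function.Surjective (transversalityMap w (fun i c ↦ l i (F i c)) u y) := by
  rw [surjective_transversalityMap_iff] at h ⊢
  intro D
  choose x hx _ using fun i b ↦ (he i).exists_vecMul_eq (D i b)
  obtain ⟨φ, hφ⟩ := h fun i ↦ Matrix.of fun b a ↦ x i b a
  refine ⟨φ * m, fun i b c hbc ↦ ?_⟩
  have hcomp : y i * (φ * m) * u i = (y i * φ * v i) * e i := by simp only [Matrix.mul_assoc, hm]
  rw [hcomp, ← hx i b, mul_apply]
  refine Finset.sum_congr rfl fun a _ ↦ ?_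
  rcases lt_or_ge (F i c) a with hlt | hge
  · simp [(he i).isStaircase a c hlt]
  · rw [hφ i b a ((hl i hge).trans hbc), of_apply]

lemma exists_eq_mul_of_ker_le {m n q : Type*} [Fintype m] [Fintype n]
    {A : Matrix m n K} {B : Matrix q n K} (h : ∀ x, A *ᵥ x = 0 → B *ᵥ x = 0) :
    ∃ η : Matrix q m K, B = η * A := by
  classical
  obtain ⟨s, hs⟩ := A.mulVecLin.rangeRestrict.exists_rightInverse_of_surjective
    A.mulVecLin.range_rangeRestrict
  obtain ⟨g, hg⟩ := LinearMap.exists_extend s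
  have hgA (x : n → K) : A *ᵥ g (A *ᵥ x) = A *ᵥ x :=
    (congrArg (A *ᵥ ·) (LinearMap.congr_fun hg ⟨_, x, rfl⟩)).trans
      (congrArg Subtype.val (LinearMap.congr_fun hs ⟨_, x, rfl⟩))
  have hB (x : n → K) : B *ᵥ x = B *ᵥ g (A *ᵥ x) := by
    rw [← sub_eq_zero, ← mulVec_sub]
    exact h _ (by rw [mulVec_sub, hgA, sub_self])
  refine ⟨B * LinearMap.toMatrix' g, ext_of_mulVec_single fun j ↦ ?_⟩
  rw [hB, ← mulVec_mulVec, ← mulVec_mulVec, LinearMap.toMatrix'_mulVec]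

lemma IsEchelon.exists_annihilator {F : Fin p → Fin r} {e : Matrix (Fin r) (Fin p) K}
    (he : IsEchelon F e) {l : Fin r → ℕ} (hl : Monotone l) {C : Matrix (Fin w) (Fin r) K}
    (hC : ∀ (b : Fin w) c, l (F c) ≤ b → (C * e) b c = 0) :
    ∃ N : Matrix (Fin w) (Fin r) K, N * e = 0 ∧ ∀ (b : Fin w) a, l a ≤ b → N b a = C b a := by
  choose x hx hx_out hx_pivot using fun b ↦ he.exists_vecMul_eq (-(C * e) b)
  refine ⟨C + Matrix.of x, ?_, fun b a ha ↦ ?_⟩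
  · ext b c
    have hbc : (Matrix.of x * e) b c = -(C * e) b c := congrFun (hx b) c
    rw [Matrix.add_mul, Matrix.add_apply, hbc, add_neg_cancel, Matrix.zero_apply]
  · suffices hxa : x b a = 0 by rw [Matrix.add_apply, of_apply, hxa, add_zero]
    by_cases haF : a ∈ Set.range F
    · obtain ⟨c, rfl⟩ := haF
      refine hx_pivot b c fun c' hc' ↦ ?_
      rw [Pi.neg_apply, hC b c' ((hl (he.strictMono.monotone hc')).trans ha), neg_zero]
    · exact hx_out b a haF

end Subposition

lemma transversalityMap_add_smul (η : ι → Matrix (Fin w) (Fin w) K) (t : K) :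
    transversalityMap w l v y + t • transversalityMap w l v η =
      transversalityMap w l v fun i ↦ y i + t • η i := by
  refine LinearMap.ext fun φ ↦ funext fun x ↦ ?_
  simp [Matrix.add_mul]

lemma exists_transversalityMap_eq_of_finrank_range_le [Finite ι]
    {v : ι → Matrix (Fin r) (Fin r) ℂ} {y : ι → Matrix (Fin w) (Fin w) ℂ}
    (hrank : ∀ y', finrank ℂ (transversalityMap w l v y').range ≤
      finrank ℂ (transversalityMap w l v y).range)
    {φ : Matrix (Fin w) (Fin r) ℂ} (hφ : transversalityMap w l v y φ = 0)
    (η : ι → Matrix (Fin w) (Fin w) ℂ) :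
    ∃ ψ, transversalityMap w l v y ψ = transversalityMap w l v η φ := by
  cases nonempty_fintype ι
  refine mem_range_of_finrank_range_add_smul_le (fun t ↦ ?_) hφ
  rw [transversalityMap_add_smul]
  exact hrank _

/-- If the maximal rank is attained at `y` and `φ` lies in the kernel, then transversality only
has to be checked on the flags induced on the kernel of `φ`, the column space of `m`. A target
vanishing on that kernel has the form `η i * φ` and is reached by varying `y` in the direction
`η`. -/
lemma surjective_transversalityMap_of_ker {v : ι → Matrix (Fin r) (Fin r) ℂ}
    [Finite ι] {y : ι → Matrix (Fin w) (Fin w) ℂ} (hl : ∀ i, Monotone (l i))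
    (hv : ∀ i, IsUnit (v i).det)
    (hrank : ∀ y', finrank ℂ (transversalityMap w l v y').range ≤
      finrank ℂ (transversalityMap w l v y).range)
    {φ : Matrix (Fin w) (Fin r) ℂ} (hφ : transversalityMap w l v y φ = 0)
    {F : ι → Fin p → Fin r} {m : Matrix (Fin r) (Fin p) ℂ} {k : Matrix (Fin p) (Fin r) ℂ}
    (hk : k * m = 1) (hker : ∀ x, φ *ᵥ x = 0 → ∃ z, x = m *ᵥ z)
    {u : ι → Matrix (Fin p) (Fin p) ℂ} (hu : ∀ i, IsUnit (u i).det)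
    {e : ι → Matrix (Fin r) (Fin p) ℂ} (he : ∀ i, IsEchelon (F i) (e i))
    (hm : ∀ i, m * u i = v i * e i)
    (hs : Function.Surjective (transversalityMap w (fun i c ↦ l i (F i c)) u y)) :
    Function.Surjective (transversalityMap w l v y) := by
  rw [surjective_transversalityMap_iff] at hs ⊢
  intro D
  obtain ⟨χ, hχ⟩ := hs fun i ↦ D i * e i
  let C (i : ι) := D i - y i * (χ * k) * v i
  have hC (i : ι) (b : Fin w) (c : Fin p) (hbc : l i (F i c) ≤ b) : (C i * e i) b c = 0 := by
    have hχk : y i * (χ * k) * v i * e i = y i * χ * u i := by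
      simp only [Matrix.mul_assoc, ← hm]
      rw [← Matrix.mul_assoc k, hk, Matrix.one_mul]
    rw [Matrix.sub_mul, hχk, Matrix.sub_apply, hχ i b c hbc, sub_self]
  choose N hNe hN using fun i ↦ (he i).exists_annihilator (hl i) (hC i)
  have hη (i : ι) : ∃ η : Matrix (Fin w) (Fin w) ℂ, N i * (v i)⁻¹ = η * φ := by
    refine exists_eq_mul_of_ker_le fun z hz ↦ ?_
    obtain ⟨z', rfl⟩ := hker z hz
    have hNm : N i * (v i)⁻¹ * m = 0 := by
      rw [← Matrix.mul_nonsing_inv_cancel_right _ m (hu i), hm, ← Matrix.mul_assoc,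
        ← Matrix.mul_assoc, nonsing_inv_mul_cancel_right _ _ (hv i), hNe, Matrix.zero_mul]
    rw [mulVec_mulVec, hNm, zero_mulVec]
  choose η hη using hη
  have hηv (i : ι) : η i * φ * v i = N i := by
    rw [← hη, nonsing_inv_mul_cancel_right _ _ (hv i)]
  obtain ⟨ψ, hψ⟩ := exists_transversalityMap_eq_of_finrank_range_le hrank hφ η
  refine ⟨ψ + χ * k, fun i b a hab ↦ ?_⟩
  have hψ' : (y i * ψ * v i) b a = (η i * φ * v i) b a := congrFun hψ ⟨(i, b, a), hab⟩
  rw [Matrix.mul_add, Matrix.add_mul, Matrix.add_apply, hψ', hηv, hN i b a hab]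
  exact sub_add_cancel _ _

end Transversality

section Contact

open scoped ContDiff

variable {X : Type*} [NormedAddCommGroup X] [NormedSpace ℂ X]

lemma contDiff_mul_apply {m n q : Type*} [Fintype n] {k : WithTop ℕ∞} {M : X → Matrix m n ℂ}
    {N : X → Matrix n q ℂ} (hM : ∀ i j, ContDiff ℂ k fun x ↦ M x i j)
    (hN : ∀ i j, ContDiff ℂ k fun x ↦ N x i j) (i : m) (j : q) :
    ContDiff ℂ k fun x ↦ (M x * N x) i j := by
  simp only [mul_apply]
  exact ContDiff.sum fun a _ ↦ (hM i a).mul (hN a j)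

lemma contDiff_transvection_apply {m : Type*} [DecidableEq m] {k : WithTop ℕ∞} (i j : m)
    {f : X → ℂ} (hf : ContDiff ℂ k f) (a b : m) :
    ContDiff ℂ k fun x ↦ transvection i j (f x) a b := by
  simp only [transvection, Matrix.add_apply, single_apply]
  split_ifs
  · exact contDiff_const.add hf
  · exact contDiff_const.add contDiff_const

variable {ι : Type*} {r w : ℕ}

lemma contDiff_transversalityMap [Fintype ι] (l : ι → Fin r → ℕ) {k : WithTop ℕ∞}
    {v : X → ι → Matrix (Fin r) (Fin r) ℂ} {y : X → ι → Matrix (Fin w) (Fin w) ℂ}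
    (hv : ∀ i a b, ContDiff ℂ k fun x ↦ v x i a b) (hy : ∀ i a b, ContDiff ℂ k fun x ↦ y x i a b)
    (φ : Matrix (Fin w) (Fin r) ℂ) :
    ContDiff ℂ k fun x ↦ transversalityMap w l (v x) (y x) φ := by
  refine contDiff_pi.mpr fun z ↦ ?_
  simp only [transversalityMap_apply]
  have hyφ := contDiff_mul_apply (N := fun _ ↦ φ) (hy z.1.1) fun _ _ ↦ contDiff_const
  exact contDiff_mul_apply hyφ (hv z.1.1) _ _

/-- A corner `(b₁, a₁)` of the profile `l` and elementary operations which preserve the matrices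
supported above `l` and move a nonzero entry of `ψ` into that corner. -/
lemma exists_corner {l : Fin r → ℕ} (hl : Monotone l) (hlw : ∀ a, l a ≤ w)
    {ψ : Matrix (Fin w) (Fin r) ℂ} (hψ₀ : ψ ≠ 0) (hψ : ∀ (b : Fin w) a, l a ≤ b → ψ b a = 0) :
    ∃ (a₀ a₁ : Fin r) (b₀ b₁ : Fin w), (b₁ : ℕ) + 1 = l a₁ ∧ (∀ a < a₁, l a ≤ b₁) ∧
      (∀ (s t : ℂ) (b : Fin w) a, l a ≤ b →
        (transvection b₁ b₀ s * (ψ * transvection a₀ a₁ t)) b a = 0) ∧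
      ∃ s t : ℂ, (transvection b₁ b₀ s * (ψ * transvection a₀ a₁ t)) b₁ a₁ ≠ 0 := by
  obtain ⟨a₀, ha₀⟩ : ∃ a₀, ψ.col a₀ ≠ 0 := by
    by_contra! h
    exact hψ₀ (ext_col h)
  obtain ⟨b₀, hb₀, hb₀_last⟩ := exists_last_ne_zero ha₀
  have hb₀l : ∃ a, (b₀ : ℕ) < l a := ⟨a₀, not_le.mp fun h ↦ hb₀ (hψ b₀ a₀ h)⟩
  obtain ⟨a₁, ha₁, ha₁_min⟩ := wellFounded_lt.has_min {a | (b₀ : ℕ) < l a} hb₀l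
  rw [Set.mem_ofPred_eq] at ha₁
  have hlt (a : Fin r) (ha : a < a₁) : l a ≤ b₀ := not_lt.mp fun h ↦ ha₁_min a h ha
  have hb₁ : l a₁ - 1 < w := by
    have := hlw a₁
    lia
  refine ⟨a₀, a₁, b₀, ⟨l a₁ - 1, hb₁⟩, Nat.sub_add_cancel (by lia),
    fun a ha ↦ (hlt a ha).trans (Nat.le_sub_one_of_lt ha₁), fun s t b a hab ↦ ?_, ?_⟩
  · have hcol (c : Fin w) (h : l a ≤ c) : (ψ * transvection a₀ a₁ t) c a = 0 := by
      by_cases ha : a = a₁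
      · subst ha
        have hc : ψ c a₀ = 0 := hb₀_last c (Fin.lt_def.mpr (ha₁.trans_le h))
        rw [mul_transvection_apply_same, hψ c a h, hc, mul_zero, add_zero]
      · rw [mul_transvection_apply_of_ne _ _ _ _ ha, hψ c a h]
    by_cases hb : b = ⟨l a₁ - 1, hb₁⟩
    · have ha : a < a₁ := not_le.mp fun h ↦ by
        have := (hl h).trans hab
        simp only [hb] at this
        lia
      rw [hb, transvection_mul_apply_same, ← hb, hcol b hab, hcol b₀ (hlt a ha), mul_zero, add_zero]
    · rw [transvection_mul_apply_of_ne _ _ _ _ hb, hcol b hab]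
  · have hchoice (c d : ℂ) (hd : d ≠ 0) : ∃ t : ℂ, c + t * d ≠ 0 := by
      by_cases hc : c = 0
      · exact ⟨1, by simpa [hc]⟩
      · exact ⟨0, by simpa⟩
    simp only [transvection_mul_apply_same, mul_transvection_apply_same]
    obtain ⟨t, ht⟩ := hchoice (ψ b₀ a₁) (ψ b₀ a₀) hb₀
    exact exists_comm.mp ⟨t, hchoice _ _ ht⟩

lemma surjective_transversalityMap_update [DecidableEq ι] {K : Type*} [Field K]
    {l : ι → Fin r → ℕ} {v : ι → Matrix (Fin r) (Fin r) K} {y : ι → Matrix (Fin w) (Fin w) K}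
    (h : Function.Surjective (transversalityMap w l v y)) {φ : Matrix (Fin w) (Fin r) K}
    (hφ : transversalityMap w l v y φ = 0) {i₀ : ι} {a₁ : Fin r} {b₁ : Fin w}
    (hb₁ : (b₁ : ℕ) + 1 = l i₀ a₁) (hne : (y i₀ * φ * v i₀) b₁ a₁ ≠ 0) :
    Function.Surjective (transversalityMap w
      (Function.update l i₀ (Function.update (l i₀) a₁ b₁)) v y) := by
  rw [surjective_transversalityMap_iff] at h ⊢
  intro D
  obtain ⟨χ, hχ⟩ := h D
  let c := (D i₀ b₁ a₁ - (y i₀ * χ * v i₀) b₁ a₁) / (y i₀ * φ * v i₀) b₁ a₁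
  refine ⟨χ + c • φ, fun i b a hab ↦ ?_⟩
  have hexpand : (y i * (χ + c • φ) * v i) b a =
      (y i * χ * v i) b a + c * (y i * φ * v i) b a := by simp [Matrix.mul_add, Matrix.add_mul]
  rw [hexpand]
  by_cases hc : l i a ≤ b
  · have hφ0 : (y i * φ * v i) b a = 0 := congrFun hφ ⟨(i, b, a), hc⟩
    rw [hφ0, hχ i b a hc, mul_zero, add_zero]
  · obtain rfl : i = i₀ := by
      by_contra hi
      exact hc (by rwa [Function.update_of_ne hi] at hab)
    obtain rfl : a = a₁ := by
      by_contra ha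
      exact hc (by rwa [Function.update_self, Function.update_of_ne ha] at hab)
    rw [Function.update_self, Function.update_self] at hab
    obtain rfl : b = b₁ := Fin.ext (by lia)
    rw [div_mul_cancel₀ _ hne, add_sub_cancel]

lemma mul_mul_ne_zero {m n R : Type*} [Fintype m] [DecidableEq m] [Fintype n] [DecidableEq n]
    [CommRing R] {A : Matrix m m R} {B : Matrix n n R} (hA : IsUnit A.det) (hB : IsUnit B.det)
    {M : Matrix m n R} (hM : M ≠ 0) : A * M * B ≠ 0 := by
  intro h
  refine hM ?_
  rw [← mul_nonsing_inv_cancel_right B M hB, ← nonsing_inv_mul_cancel_left A M hA,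
    Matrix.mul_assoc _⁻¹, h, Matrix.mul_zero, Matrix.zero_mul]

/-- For generic values of the two parameters of `exists_corner`, applied to the flag `i₀`, the
perturbed flags remain transversal and `φ` remains compatible with them. -/
lemma exists_perturbation_corner_ne_zero [Finite ι] {l : ι → Fin r → ℕ} {i₀ : ι}
    (hl : Monotone (l i₀)) (hlw : ∀ a, l i₀ a ≤ w) {v : ι → Matrix (Fin r) (Fin r) ℂ}
    {y : ι → Matrix (Fin w) (Fin w) ℂ} (hv : ∀ i, IsUnit (v i).det) (hy : ∀ i, IsUnit (y i).det)
    (h : Function.Surjective (transversalityMap w l v y)) {φ : Matrix (Fin w) (Fin r) ℂ}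
    (hφ₀ : φ ≠ 0) (hφ : transversalityMap w l v y φ = 0) :
    ∃ v' y', (∀ i, IsUnit (v' i).det) ∧ (∀ i, IsUnit (y' i).det) ∧
      Function.Surjective (transversalityMap w l v' y') ∧ transversalityMap w l v' y' φ = 0 ∧
      ∃ (a₁ : Fin r) (b₁ : Fin w), (b₁ : ℕ) + 1 = l i₀ a₁ ∧ (∀ a < a₁, l i₀ a ≤ b₁) ∧
        (y' i₀ * φ * v' i₀) b₁ a₁ ≠ 0 := by
  classical
  cases nonempty_fintype ι
  obtain ⟨a₀, a₁, b₀, b₁, hb₁, hlt, hzero, s₀, t₀, hne⟩ := exists_corner hl hlw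
    (mul_mul_ne_zero (hy i₀) (hv i₀) hφ₀) fun b a hab ↦ congrFun hφ ⟨(i₀, b, a), hab⟩
  let v' (x : ℂ × ℂ) (i : ι) := v i * transvection a₀ a₁ (x.1 * if i = i₀ then 1 else 0)
  let y' (x : ℂ × ℂ) (i : ι) := transvection b₁ b₀ (x.2 * if i = i₀ then 1 else 0) * y i
  have hv'₀ : v' 0 = v := funext fun i ↦ by simp [v']
  have hy'₀ : y' 0 = y := funext fun i ↦ by simp [y']
  have hv' i : ∀ a b, ContDiff ℂ ω fun x ↦ v' x i a b :=
    contDiff_mul_apply (M := fun _ ↦ v i) (fun _ _ ↦ contDiff_const)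
      (contDiff_transvection_apply _ _ (contDiff_fst.mul contDiff_const))
  have hy' i : ∀ a b, ContDiff ℂ ω fun x ↦ y' x i a b :=
    contDiff_mul_apply (N := fun _ ↦ y i)
      (contDiff_transvection_apply _ _ (contDiff_snd.mul contDiff_const))
      fun _ _ ↦ contDiff_const
  have hself x : y' x i₀ * φ * v' x i₀ =
      transvection b₁ b₀ x.2 * (y i₀ * φ * v i₀ * transvection a₀ a₁ x.1) := by
    simp only [v', y', if_true, mul_one, Matrix.mul_assoc]
  have hcorner : ContDiff ℂ ω fun x ↦ (y' x i₀ * φ * v' x i₀) b₁ a₁ :=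
    contDiff_mul_apply (contDiff_mul_apply (N := fun _ ↦ φ) (hy' i₀) fun _ _ ↦ contDiff_const)
      (hv' i₀) _ _
  have hsurj : ∀ᶠ x in generic (ℂ × ℂ),
      Function.Surjective (transversalityMap w l (v' x) (y' x)) :=
    eventually_generic_surjective (x₀ := 0) (contDiff_transversalityMap l hv' hy')
      (by rwa [hv'₀, hy'₀])
  have hdetv i : ∀ᶠ x in generic (ℂ × ℂ), (v' x i).det ≠ 0 :=
    eventually_generic_ne_zero (x₀ := 0) (contDiff_det (hv' i)) (by rw [hv'₀]; exact (hv i).ne_zero)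
  have hdety i : ∀ᶠ x in generic (ℂ × ℂ), (y' x i).det ≠ 0 :=
    eventually_generic_ne_zero (x₀ := 0) (contDiff_det (hy' i)) (by rw [hy'₀]; exact (hy i).ne_zero)
  have hentry := eventually_generic_ne_zero hcorner (x₀ := (t₀, s₀)) (by rwa [hself])
  obtain ⟨x, hsurj, hdetv, hdety, hx⟩ := (hsurj.and ((Filter.eventually_all.mpr hdetv).and
    ((Filter.eventually_all.mpr hdety).and hentry))).exists
  refine ⟨v' x, y' x, fun i ↦ (hdetv i).isUnit, fun i ↦ (hdety i).isUnit, hsurj, ?_,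
    a₁, b₁, hb₁, hlt, hx⟩
  ext ⟨⟨i, b, a⟩, hab⟩
  by_cases hi : i = i₀
  · subst hi
    exact (congrFun₂ (hself x) b a).trans (hzero _ _ b a hab)
  · simpa [v', y', hi] using congrFun hφ ⟨(i, b, a), hab⟩

end Contact

section ExpectedDimension

variable {ι : Type*} {r w : ℕ} {l : ι → Fin r → ℕ}

/-- Some, and hence a generic, family of pairs of flags is transversal for the profiles `l`. -/
def IsTransversal (w : ℕ) (l : ι → Fin r → ℕ) : Prop :=
  ∃ (v : ι → Matrix (Fin r) (Fin r) ℂ) (y : ι → Matrix (Fin w) (Fin w) ℂ),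
    (∀ i, IsUnit (v i).det) ∧ (∀ i, IsUnit (y i).det) ∧
      Function.Surjective (transversalityMap w l v y)

lemma exists_ker_transversalityMap_ne_zero {K : Type*} [Field K] [Fintype ι]
    {v : ι → Matrix (Fin r) (Fin r) K} {y : ι → Matrix (Fin w) (Fin w) K}
    (hlw : ∀ i a, l i a ≤ w) (hlt : Fintype.card ι * (r * w) < ∑ i, ∑ a, l i a + r * w) :
    ∃ φ, φ ≠ 0 ∧ transversalityMap w l v y φ = 0 := by
  have hcells := card_cells_add_sum hlw
  have hker : (transversalityMap w l v y).ker ≠ ⊥ := LinearMap.ker_ne_bot_of_finrank_lt <| by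
    rw [Module.finrank_fintype_fun_eq_card, Module.finrank_matrix, Module.finrank_self, mul_one,
      Fintype.card_fin, Fintype.card_fin, mul_comm w]
    lia
  obtain ⟨φ, hφ, hφ₀⟩ := Submodule.exists_mem_ne_zero_of_ne_bot hker
  exact ⟨φ, hφ₀, hφ⟩

lemma sum_apply_update_add_one [Fintype ι] [DecidableEq ι] {α : Type*} (g : α → ℕ) {f : ι → α}
    {i : ι} {x : α} (h : g x + 1 = g (f i)) :
    ∑ j, g (Function.update f i x j) + 1 = ∑ j, g (f j) := by
  rw [← Finset.add_sum_erase _ _ (Finset.mem_univ i),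
    ← Finset.add_sum_erase _ (fun j ↦ g (f j)) (Finset.mem_univ i), Function.update_self, ← h,
    Finset.sum_congr rfl fun j hj ↦ by rw [Function.update_of_ne (Finset.ne_of_mem_erase hj)]]
  ring

lemma monotone_update_of_le {α β : Type*} [LinearOrder α] [Preorder β] {f : α → β}
    (hf : Monotone f) {a : α} {b : β} (hlt : ∀ x < a, f x ≤ b) (hb : b ≤ f a) :
    Monotone (Function.update f a b) := by
  intro x y hxy
  by_cases hx : x = a <;> by_cases hy : y = a
  · simp [hx, hy]
  · simpa [hx, hy] using hb.trans (hf (hx ▸ hxy))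
  · simpa [hx, hy] using hlt x (lt_of_le_of_ne (hy ▸ hxy) hx)
  · simpa [hx, hy] using hf hxy

lemma IsTransversal.exists_le_sum_add_one_eq [Fintype ι] [Nonempty ι] (h : IsTransversal w l)
    (hl : ∀ i, Monotone (l i)) (hlw : ∀ i a, l i a ≤ w)
    (hlt : Fintype.card ι * (r * w) < ∑ i, ∑ a, l i a + r * w) :
    ∃ l' : ι → Fin r → ℕ, IsTransversal w l' ∧ (∀ i, Monotone (l' i)) ∧ l' ≤ l ∧
      ∑ i, ∑ a, l' i a + 1 = ∑ i, ∑ a, l i a := by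
  classical
  obtain ⟨v, y, hv, hy, hs⟩ := h
  obtain ⟨φ, hφ₀, hφ⟩ := exists_ker_transversalityMap_ne_zero (v := v) (y := y) hlw hlt
  let i₀ : ι := Classical.arbitrary ι
  obtain ⟨v', y', hv', hy', hs', hφ', a₁, b₁, hb₁, hlt, hne⟩ :=
    exists_perturbation_corner_ne_zero (hl i₀) (hlw i₀) hv hy hs hφ₀ hφ
  have hle : Function.update (l i₀) a₁ b₁ ≤ l i₀ :=
    update_le_iff.mpr ⟨by lia, fun _ _ ↦ le_rfl⟩
  refine ⟨_, ⟨v', y', hv', hy', surjective_transversalityMap_update hs' hφ' hb₁ hne⟩, ?_,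
    update_le_iff.mpr ⟨hle, fun _ _ ↦ le_rfl⟩, ?_⟩
  · refine (Function.forall_update_iff l fun _ f ↦ Monotone f).mpr ⟨?_, fun i _ ↦ hl i⟩
    exact monotone_update_of_le (hl i₀) hlt (by lia)
  · exact sum_apply_update_add_one (fun f : Fin r → ℕ ↦ ∑ a, f a) (sum_apply_update_add_one id hb₁)

lemma IsTransversal.exists_le_sum_eq [Fintype ι] [Nonempty ι] (h : IsTransversal w l)
    (hl : ∀ i, Monotone (l i)) (hlw : ∀ i a, l i a ≤ w) :
    ∃ l' : ι → Fin r → ℕ, IsTransversal w l' ∧ (∀ i, Monotone (l' i)) ∧ l' ≤ l ∧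
      ∑ i, ∑ a, l' i a + r * w = Fintype.card ι * (r * w) := by
  obtain ⟨k, hk⟩ : ∃ k, ∑ i, ∑ a, l i a + r * w = Fintype.card ι * (r * w) + k := by
    obtain ⟨v, y, -, -, hs⟩ := h
    exact Nat.exists_eq_add_of_le (card_mul_le_sum_of_surjective hs)
  induction k generalizing l with
  | zero => exact ⟨l, h, hl, le_rfl, hk⟩
  | succ k ih =>
    obtain ⟨l₁, h₁, hl₁, hle₁, hsum₁⟩ := h.exists_le_sum_add_one_eq hl hlw (by lia)
    obtain ⟨l₂, h₂, hl₂, hle₂, hsum₂⟩ :=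
      ih h₁ hl₁ (fun i a ↦ (hle₁ i a).trans (hlw i a)) (by lia)
    exact ⟨l₂, h₂, hl₂, hle₂.trans hle₁, hsum₂⟩

end ExpectedDimension

section Shape

variable {ι : Type*} {p r : ℕ}

/-- The partition attached to a family of positions, counting the jumps skipped before each
step. -/
def shape (F : ι → Fin p → Fin r) (i : ι) (a : Fin p) : ℕ := F i a - a

/-- The positions of a subspace with respect to generic flags: transversality for the profiles
`shape F` means that the corresponding Schubert varieties meet transversally for generic flags. -/
def IsTransversalPosition (F : ι → Fin p → Fin r) : Prop :=
  IsTransversal (r - p) (shape F)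

lemma val_add_sub_le_of_strictMono {F : Fin p → Fin r} (hF : StrictMono F) {a b : Fin p}
    (h : a ≤ b) : (F a : ℕ) + (b - a) ≤ F b := by
  have hmaps : Set.MapsTo F (Finset.Ico a b) (Finset.Ico (F a) (F b)) := fun c hc ↦ by
    simp only [Finset.coe_Ico, Set.mem_Ico] at hc ⊢
    exact ⟨hF.monotone hc.1, hF hc.2⟩
  have := Finset.card_le_card_of_injOn F hmaps hF.injective.injOn
  rw [Fin.card_Ico, Fin.card_Ico] at this
  have := Fin.le_def.mp (hF.monotone h)
  lia

lemma val_le_of_strictMono {F : Fin p → Fin r} (hF : StrictMono F) (a : Fin p) :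
    (a : ℕ) ≤ F a := by
  have hmaps : Set.MapsTo F (Finset.Iio a) (Finset.Iio (F a)) := fun c hc ↦ by
    simpa using hF (by simpa using hc)
  simpa using Finset.card_le_card_of_injOn F hmaps hF.injective.injOn

variable {F : ι → Fin p → Fin r}

lemma shape_add (hF : ∀ i, StrictMono (F i)) (i : ι) (a : Fin p) : shape F i a + a = F i a :=
  Nat.sub_add_cancel (val_le_of_strictMono (hF i) a)

lemma shape_monotone (hF : ∀ i, StrictMono (F i)) (i : ι) : Monotone (shape F i) := by
  intro a b hab
  have := val_add_sub_le_of_strictMono (hF i) hab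
  have := Fin.le_def.mp hab
  simp only [shape]
  lia

lemma shape_le (hF : ∀ i, StrictMono (F i)) (i : ι) (a : Fin p) : shape F i a ≤ r - p := by
  have hp : 0 < p := a.pos
  have := val_add_sub_le_of_strictMono (hF i) (b := ⟨p - 1, by lia⟩)
    (Fin.le_def.mpr (Nat.le_sub_one_of_lt a.2))
  have := (F i ⟨p - 1, by lia⟩).2
  simp only [shape]
  lia

lemma IsTransversalPosition.exists_le_sum_shape_eq [Fintype ι] [Nonempty ι]
    (h : IsTransversalPosition F) (hF : ∀ i, StrictMono (F i)) :
    ∃ G : ι → Fin p → Fin r, IsTransversalPosition G ∧ (∀ i, StrictMono (G i)) ∧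
      (∀ i a, G i a ≤ F i a) ∧
      ∑ i, ∑ a, shape G i a + p * (r - p) = Fintype.card ι * (p * (r - p)) := by
  obtain ⟨l, hl_trans, hl, hle, hsum⟩ :=
    IsTransversal.exists_le_sum_eq h (shape_monotone hF) (shape_le hF)
  have hlF i a : l i a + a ≤ F i a :=
    (Nat.add_le_add_right (hle i a) _).trans_eq (shape_add hF i a)
  let G i a : Fin r := ⟨l i a + a, (hlF i a).trans_lt (F i a).2⟩
  have hG : shape G = l := funext₂ fun i a ↦ Nat.add_sub_cancel (l i a) a
  refine ⟨G, by rwa [IsTransversalPosition, hG], fun i a b hab ↦ ?_, hlF, by rwa [hG]⟩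
  exact Fin.lt_def.mpr (add_lt_add_of_le_of_lt (hl i hab.le) hab)

end Shape

section Factorization

variable {ι m α β R : Type*} [LinearOrder α] [LinearOrder β]

/-- The matrix with entries `x (a, b)` in the positions allowed for a matrix which is block
triangular with respect to `d`, and zero elsewhere. -/
def triangularOf [Zero R] (d : m → α) (x : m × m → R) : Matrix m m R :=
  Matrix.of fun a b ↦ if d a ≤ d b then x (a, b) else 0

lemma blockTriangular_triangularOf [Zero R] (d : m → α) (x : m × m → R) :
    (triangularOf d x).BlockTriangular d :=
  fun _ _ h ↦ if_neg (not_le.mpr h)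

lemma triangularOf_apply_fst_snd [Zero R] {d : m → α} {M : Matrix m m R}
    (hM : M.BlockTriangular d) :
    triangularOf d (fun z ↦ M z.1 z.2) = M := by
  ext a b
  by_cases h : d a ≤ d b
  · simp [triangularOf, h]
  · simp [triangularOf, h, hM (not_le.mp h)]

lemma triangularOf_add_smul [Semiring R] (d : m → α) (x h : m × m → R) (t : R) :
    triangularOf d (x + t • h) = triangularOf d x + t • triangularOf d h := by
  ext a b
  by_cases hab : d a ≤ d b <;> simp [triangularOf, hab]

/-- The coordinates of a family of products `G * P i * B i` with common left factor `G`. -/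
abbrev FactorIndex (ι m : Type*) : Type _ := m × m ⊕ ι × m × m ⊕ ι × m × m

/-- The left factor `G` of the products parametrised by `FactorIndex`. -/
def leftFactor (x : FactorIndex ι m → R) : Matrix m m R :=
  Matrix.of fun a b ↦ x (Sum.inl (a, b))

/-- The middle factor `P i` of the products parametrised by `FactorIndex`. -/
def middleFactor [Zero R] (c : m → β) (x : FactorIndex ι m → R) (i : ι) : Matrix m m R :=
  triangularOf c fun z ↦ x (Sum.inr (Sum.inl (i, z)))

/-- The right factor `B i` of the products parametrised by `FactorIndex`. -/
def rightFactor [Zero R] (d : ι → m → α) (x : FactorIndex ι m → R) (i : ι) : Matrix m m R :=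
  triangularOf (d i) fun z ↦ x (Sum.inr (Sum.inr (i, z)))

lemma exists_factors_eq [Zero R] {c : m → β} {d : ι → m → α} (G : Matrix m m R)
    {P B : ι → Matrix m m R} (hP : ∀ i, (P i).BlockTriangular c)
    (hB : ∀ i, (B i).BlockTriangular (d i)) :
    ∃ x : FactorIndex ι m → R,
      leftFactor x = G ∧ middleFactor c x = P ∧ rightFactor d x = B :=
  ⟨Sum.elim (fun z ↦ G z.1 z.2)
      (Sum.elim (fun z ↦ P z.1 z.2.1 z.2.2) fun z ↦ B z.1 z.2.1 z.2.2),
    rfl, funext fun i ↦ triangularOf_apply_fst_snd (hP i),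
    funext fun i ↦ triangularOf_apply_fst_snd (hB i)⟩

variable [Fintype m]

/-- The entries of the products `G * P i * B i`, as polynomials in the entries of the factors. -/
noncomputable def factorPolynomial (c : m → β) (d : ι → m → α) (k : ι × m × m) :
    MvPolynomial (FactorIndex ι m) ℂ :=
  (leftFactor MvPolynomial.X * middleFactor c MvPolynomial.X k.1 *
    rightFactor d MvPolynomial.X k.1 : Matrix m m (MvPolynomial (FactorIndex ι m) ℂ)) k.2.1 k.2.2

lemma polyMap_factorPolynomial (c : m → β) (d : ι → m → α) (x : FactorIndex ι m → ℂ) (i : ι)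
    (a b : m) : polyMap (factorPolynomial c d) x (i, a, b) =
      (leftFactor x * middleFactor c x i * rightFactor d x i) a b := by
  simp only [polyMap, factorPolynomial, Matrix.mul_apply, map_sum, map_mul, leftFactor,
    middleFactor, rightFactor, triangularOf, of_apply, apply_ite (MvPolynomial.eval x),
    MvPolynomial.eval_X, map_zero]

lemma mem_range_polyMap_factorPolynomial_iff {c : m → β} {d : ι → m → α} {z : ι × m × m → ℂ} :
    z ∈ Set.range (polyMap (factorPolynomial c d)) ↔
      ∃ (G : Matrix m m ℂ) (P B : ι → Matrix m m ℂ), (∀ i, (P i).BlockTriangular c) ∧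
        (∀ i, (B i).BlockTriangular (d i)) ∧ ∀ i a b, (G * P i * B i) a b = z (i, a, b) := by
  constructor
  · rintro ⟨x, rfl⟩
    exact ⟨leftFactor x, middleFactor c x, rightFactor d x,
      fun _ ↦ blockTriangular_triangularOf _ _, fun _ ↦ blockTriangular_triangularOf _ _,
      fun i a b ↦ (polyMap_factorPolynomial c d x i a b).symm⟩
  · rintro ⟨G, P, B, hP, hB, hz⟩
    obtain ⟨x, rfl, rfl, rfl⟩ := exists_factors_eq G hP hB
    exact ⟨x, funext fun ⟨i, a, b⟩ ↦ (polyMap_factorPolynomial c d x i a b).trans (hz i a b)⟩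

lemma hasDerivAt_mul_mul_apply (A A' B B' C C' : Matrix m m ℂ) (a b : m) :
    HasDerivAt (fun t : ℂ ↦ ((A + t • A') * (B + t • B') * (C + t • C')) a b)
      ((A' * B * C + A * B' * C + A * B * C') a b) 0 := by
  have hlin (M M' : Matrix m m ℂ) (a b) :
      HasDerivAt (fun t : ℂ ↦ (M + t • M') a b) (M' a b) 0 := by
    simpa using ((hasDerivAt_id (0 : ℂ)).mul_const (M' a b)).const_add (M a b)
  simp only [Matrix.mul_apply]
  refine (HasDerivAt.fun_sum fun e _ ↦ (HasDerivAt.fun_sum fun f _ ↦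
    (hlin A A' a f).mul (hlin B B' f e)).mul (hlin C C' e b)).congr_deriv ?_
  simp [Matrix.add_apply, Matrix.mul_apply, Finset.sum_add_distrib, add_mul]

variable [Finite ι]

lemma fderiv_polyMap_factorPolynomial (c : m → β) (d : ι → m → α) (x h : FactorIndex ι m → ℂ)
    (i : ι) (a b : m) : fderiv ℂ (polyMap (factorPolynomial c d)) x h (i, a, b) =
      (leftFactor h * middleFactor c x i * rightFactor d x i +
        leftFactor x * middleFactor c h i * rightFactor d x i +
        leftFactor x * middleFactor c x i * rightFactor d h i) a b := by
  cases nonempty_fintype ι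
  have hline := (((contDiff_polyMap (factorPolynomial c d)).differentiable (by simp)
    x).hasFDerivAt.hasLineDerivAt h)
  rw [HasLineDerivAt, hasDerivAt_pi] at hline
  refine (hline (i, a, b)).unique ?_
  simp only [polyMap_factorPolynomial]
  have hl (t : ℂ) : leftFactor (x + t • h) = leftFactor x + t • leftFactor h := rfl
  have hm (t : ℂ) : middleFactor c (x + t • h) i = middleFactor c x i + t • middleFactor c h i :=
    triangularOf_add_smul c _ _ t
  have hr (t : ℂ) : rightFactor d (x + t • h) i = rightFactor d x i + t • rightFactor d h i :=
    triangularOf_add_smul (d i) _ _ t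
  simp only [hl, hm, hr]
  exact hasDerivAt_mul_mul_apply _ _ _ _ _ _ a b

lemma surjective_fderiv_polyMap_factorPolynomial_iff {c : m → β} {d : ι → m → α}
    {x : FactorIndex ι m → ℂ} :
    Function.Surjective (fderiv ℂ (polyMap (factorPolynomial c d)) x) ↔
      ∀ N : ι → Matrix m m ℂ, ∃ (G' : Matrix m m ℂ) (P' B' : ι → Matrix m m ℂ),
        (∀ i, (P' i).BlockTriangular c) ∧ (∀ i, (B' i).BlockTriangular (d i)) ∧
        ∀ i, G' * middleFactor c x i * rightFactor d x i +
          leftFactor x * P' i * rightFactor d x i + leftFactor x * middleFactor c x i * B' i =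
            N i := by
  refine ⟨fun h N ↦ ?_, fun h z ↦ ?_⟩
  · obtain ⟨y, hy⟩ := h fun k ↦ N k.1 k.2.1 k.2.2
    refine ⟨leftFactor y, middleFactor c y, rightFactor d y,
      fun _ ↦ blockTriangular_triangularOf _ _, fun _ ↦ blockTriangular_triangularOf _ _,
      fun i ↦ ?_⟩
    ext a b
    rw [← fderiv_polyMap_factorPolynomial, hy]
  · obtain ⟨G', P', B', hP', hB', hN⟩ := h fun i ↦ Matrix.of fun a b ↦ z (i, a, b)
    obtain ⟨y, rfl, rfl, rfl⟩ := exists_factors_eq G' hP' hB'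
    refine ⟨y, funext fun ⟨i, a, b⟩ ↦ ?_⟩
    rw [fderiv_polyMap_factorPolynomial, hN, of_apply]

end Factorization

section Shuffle

lemma lt_card_filter_lt_iff {α : Type*} [LinearOrder α] {w : ℕ} {J : Fin w → α} (hJ : StrictMono J)
    (b : Fin w) (x : α) : (b : ℕ) < (Finset.univ.filter fun c ↦ J c < x).card ↔ J b < x := by
  constructor
  · intro h
    by_contra! hx
    have hsub : (Finset.univ.filter fun c ↦ J c < x) ⊆ Finset.Iio b := fun c hc ↦ by
      rw [Finset.mem_filter_univ] at hc
      exact Finset.mem_Iio.mpr (hJ.lt_iff_lt.mp (hc.trans_le hx))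
    have := Finset.card_le_card hsub
    rw [Fin.card_Iio] at this
    lia
  · intro hx
    have hsub : Finset.Iic b ⊆ Finset.univ.filter fun c ↦ J c < x := fun c hc ↦
      (Finset.mem_filter_univ _).mpr <| (hJ.monotone (Finset.mem_Iic.mp hc)).trans_lt hx
    have := Finset.card_le_card hsub
    rw [Fin.card_Iic] at this
    lia

lemma exists_sum_equiv_of_strictMono {r w n : ℕ} (hn : r + w = n) {I : Fin r → Fin n}
    (hI : StrictMono I) :
    ∃ θ : Fin r ⊕ Fin w ≃ Fin n, (∀ a, θ (Sum.inl a) = I a) ∧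
      ∀ a b, θ (Sum.inr b) < θ (Sum.inl a) ↔ (b : ℕ) < I a - a := by
  let s : Finset (Fin n) := Finset.univ.image I
  have hs : s.card = r := by simp [s, Finset.card_image_of_injective _ hI.injective]
  have hs' : sᶜ.card = w := by
    rw [Finset.card_compl, hs, Fintype.card_fin]
    lia
  let θ := finSumEquivOfFinset hs hs'
  have hθ a : θ (Sum.inl a) = I a := by
    rw [finSumEquivOfFinset_inl, ← Finset.orderEmbOfFin_unique hs (by simp [s]) hI]
  have hθr : StrictMono fun b ↦ θ (Sum.inr b) := fun b c hbc ↦ by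
    simpa only [θ, finSumEquivOfFinset_inr] using (sᶜ.orderEmbOfFin hs').strictMono hbc
  refine ⟨θ, hθ, fun a b ↦ ?_⟩
  rw [hθ, ← lt_card_filter_lt_iff hθr]
  have hcount := Equiv.sum_comp θ fun i ↦ if i < I a then 1 else 0
  rw [Fintype.sum_sum_type] at hcount
  simp only [hθ, hI.lt_iff_lt, ← Finset.card_filter, Finset.filter_gt_eq_Iio, Fin.card_Iio]
    at hcount
  rw [← hcount, Nat.add_sub_cancel_left]

end Shuffle

section CellMap

variable {ι α K : Type*} [Field K] [LinearOrder α] {r w : ℕ} {l : ι → Fin r → ℕ}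
  {θ : ι → Fin r ⊕ Fin w → α}

lemma blockTriangular_isRight_iff {M : Matrix (Fin r ⊕ Fin w) (Fin r ⊕ Fin w) K} :
    M.BlockTriangular Sum.isRight ↔ M.toBlocks₂₁ = 0 := by
  refine ⟨fun h ↦ Matrix.ext fun b a ↦ h (by simp), fun h ↦ ?_⟩
  rintro (a | a) (b | b) hab <;> simp [Bool.lt_iff] at hab
  exact congrFun (congrFun h _) _

/-- The surjectivity of the differential of `(G, P, B) ↦ G * P i * B i` at `G = 1`,
`P i = fromBlocks (v i) 0 0 (y i)⁻¹`, `B i = 1`. -/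
lemma exists_add_add_eq_of_surjective_transversalityMap
    (hθ : ∀ i a b, θ i (Sum.inr b) < θ i (Sum.inl a) ↔ (b : ℕ) < l i a)
    {v : ι → Matrix (Fin r) (Fin r) K} {y : ι → Matrix (Fin w) (Fin w) K}
    (hy : ∀ i, IsUnit (y i).det) (h : Function.Surjective (transversalityMap w l v y))
    (N : ι → Matrix (Fin r ⊕ Fin w) (Fin r ⊕ Fin w) K) :
    ∃ (G : Matrix (Fin r ⊕ Fin w) (Fin r ⊕ Fin w) K)
      (P B : ι → Matrix (Fin r ⊕ Fin w) (Fin r ⊕ Fin w) K),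
      (∀ i, (P i).BlockTriangular Sum.isRight) ∧ (∀ i, (B i).BlockTriangular (θ i)) ∧
      ∀ i, G * fromBlocks (v i) 0 0 (y i)⁻¹ + P i + fromBlocks (v i) 0 0 (y i)⁻¹ * B i = N i := by
  rw [surjective_transversalityMap_iff] at h
  obtain ⟨φ, hφ⟩ := h fun i ↦ y i * (N i).toBlocks₂₁
  let Z i := y i * (N i).toBlocks₂₁ - y i * φ * v i
  refine ⟨fromBlocks 0 0 φ 0, fun i ↦ fromBlocks (N i).toBlocks₁₁ (N i).toBlocks₁₂ 0
    (N i).toBlocks₂₂, fun i ↦ fromBlocks 0 0 (Z i) 0,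
    fun i ↦ blockTriangular_isRight_iff.mpr (toBlocks_fromBlocks₂₁ _ _ _ _), fun i ↦ ?_,
    fun i ↦ ?_⟩
  · rintro (b | b) (a | a) hab <;> try rfl
    have hba : l i a ≤ b := not_lt.mp fun h ↦ ((hθ i a b).mpr h).not_gt hab
    change (y i * (N i).toBlocks₂₁ - y i * φ * v i) b a = 0
    rw [Matrix.sub_apply, hφ i b a hba, sub_self]
  · have hZ : (y i)⁻¹ * Z i = (N i).toBlocks₂₁ - φ * v i := by
      simp only [Z, Matrix.mul_sub, Matrix.mul_assoc, nonsing_inv_mul_cancel_left _ _ (hy i)]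
    conv_rhs => rw [← fromBlocks_toBlocks (N i)]
    simp [fromBlocks_multiply, fromBlocks_add, hZ]

lemma isUnit_det_toBlocks_of_blockTriangular {P : Matrix (Fin r ⊕ Fin w) (Fin r ⊕ Fin w) K}
    (hP : P.BlockTriangular Sum.isRight) (hdet : IsUnit P.det) :
    IsUnit P.toBlocks₁₁.det ∧ IsUnit P.toBlocks₂₂.det := by
  rw [← fromBlocks_toBlocks P, blockTriangular_isRight_iff.mp hP, det_fromBlocks_zero₂₁,
    IsUnit.mul_iff] at hdet
  exact hdet

lemma toBlocks₂₁_inv_mul_mul {P : Matrix (Fin r ⊕ Fin w) (Fin r ⊕ Fin w) K}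
    (hP : P.BlockTriangular Sum.isRight) (hdet : IsUnit P.det)
    (X : Matrix (Fin r ⊕ Fin w) (Fin r ⊕ Fin w) K) :
    (P⁻¹ * X * P).toBlocks₂₁ = P.toBlocks₂₂⁻¹ * X.toBlocks₂₁ * P.toBlocks₁₁ := by
  obtain ⟨h₁, h₂⟩ := isUnit_det_toBlocks_of_blockTriangular hP hdet
  rw [← isUnit_iff_isUnit_det] at h₁ h₂
  conv_lhs => rw [← fromBlocks_toBlocks P, ← fromBlocks_toBlocks X,
    blockTriangular_isRight_iff.mp hP,
    inv_fromBlocks_zero₂₁_of_isUnit_iff _ _ _ (iff_of_true h₁ h₂)]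
  simp [fromBlocks_multiply]

lemma surjective_transversalityMap_of_exists_add_add_eq
    (hθinj : ∀ i, Function.Injective (θ i))
    (hθ : ∀ i a b, θ i (Sum.inr b) < θ i (Sum.inl a) ↔ (b : ℕ) < l i a)
    {G : Matrix (Fin r ⊕ Fin w) (Fin r ⊕ Fin w) K}
    {P B : ι → Matrix (Fin r ⊕ Fin w) (Fin r ⊕ Fin w) K} (hG : IsUnit G.det)
    (hP : ∀ i, (P i).BlockTriangular Sum.isRight) (hPdet : ∀ i, IsUnit (P i).det)
    (hB : ∀ i, (B i).BlockTriangular (θ i)) (hBdet : ∀ i, IsUnit (B i).det)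
    (h : ∀ N : ι → Matrix (Fin r ⊕ Fin w) (Fin r ⊕ Fin w) K,
      ∃ (G' : Matrix (Fin r ⊕ Fin w) (Fin r ⊕ Fin w) K)
        (P' B' : ι → Matrix (Fin r ⊕ Fin w) (Fin r ⊕ Fin w) K),
        (∀ i, (P' i).BlockTriangular Sum.isRight) ∧ (∀ i, (B' i).BlockTriangular (θ i)) ∧
        ∀ i, G' * P i * B i + G * P' i * B i + G * P i * B' i = N i) :
    Function.Surjective (transversalityMap w l (fun i ↦ (P i).toBlocks₁₁)
      fun i ↦ (P i).toBlocks₂₂⁻¹) := by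
  rw [surjective_transversalityMap_iff]
  intro D
  obtain ⟨G', P', B', hP', hB', hN⟩ := h fun i ↦ G * P i * fromBlocks 0 0 (D i) 0 * B i
  refine ⟨(G⁻¹ * G').toBlocks₂₁, fun i b a hba ↦ ?_⟩
  have hconj : (P i)⁻¹ * (G⁻¹ * G') * P i + (P i)⁻¹ * P' i + B' i * (B i)⁻¹ =
      fromBlocks 0 0 (D i) 0 := by
    have := congrArg (fun M ↦ (P i)⁻¹ * (G⁻¹ * M) * (B i)⁻¹) (hN i)
    simpa only [Matrix.mul_add, Matrix.add_mul, Matrix.mul_assoc, mul_nonsing_inv _ (hBdet i),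
      Matrix.mul_one, nonsing_inv_mul_cancel_left _ _ hG,
      nonsing_inv_mul_cancel_left _ _ (hPdet i)] using this
  have hPP' : ((P i)⁻¹ * P' i) (Sum.inr b) (Sum.inl a) = 0 :=
    have := invertibleOfIsUnitDet _ (hPdet i)
    (blockTriangular_inv_of_blockTriangular (hP i)).mul (hP' i) (by simp)
  have hlt : θ i (Sum.inl a) < θ i (Sum.inr b) :=
    (not_lt.mp fun h ↦ hba.not_gt ((hθ i a b).mp h)).lt_of_ne ((hθinj i).ne Sum.inl_ne_inr)
  have hBB' : (B' i * (B i)⁻¹) (Sum.inr b) (Sum.inl a) = 0 :=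
    have := invertibleOfIsUnitDet _ (hBdet i)
    (hB' i).mul (blockTriangular_inv_of_blockTriangular (hB i)) hlt
  rw [← toBlocks₂₁_inv_mul_mul (hP i) (hPdet i)]
  have hent := congrFun (congrFun hconj (Sum.inr b)) (Sum.inl a)
  rwa [Matrix.add_apply, Matrix.add_apply, hPP', hBB', add_zero, add_zero] at hent

end CellMap

section Submersion

variable {ι : Type*} [Finite ι] {r w n : ℕ} {l : ι → Fin r → ℕ} {θ : ι → Fin r ⊕ Fin w → Fin n}

lemma IsTransversal.exists_surjective_fderiv_polyMap
    (hθ : ∀ i a b, θ i (Sum.inr b) < θ i (Sum.inl a) ↔ (b : ℕ) < l i a)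
    (h : IsTransversal w l) :
    ∃ x, Function.Surjective (fderiv ℂ (polyMap (factorPolynomial Sum.isRight θ)) x) := by
  obtain ⟨v, y, -, hy, hsurj⟩ := h
  obtain ⟨x, hG, hP, hB⟩ := exists_factors_eq (c := Sum.isRight) (d := θ) (1 : Matrix _ _ ℂ)
    (P := fun i ↦ fromBlocks (v i) 0 0 (y i)⁻¹) (B := fun _ ↦ 1)
    (fun i ↦ blockTriangular_isRight_iff.mpr (toBlocks_fromBlocks₂₁ _ _ _ _))
    fun i ↦ blockTriangular_one
  refine ⟨x, surjective_fderiv_polyMap_factorPolynomial_iff.mpr ?_⟩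
  simpa only [hG, hP, hB, Matrix.one_mul, Matrix.mul_one] using
    exists_add_add_eq_of_surjective_transversalityMap hθ hy hsurj

lemma isTransversal_of_surjective_fderiv_polyMap [Nonempty ι]
    (hθinj : ∀ i, Function.Injective (θ i))
    (hθ : ∀ i a b, θ i (Sum.inr b) < θ i (Sum.inl a) ↔ (b : ℕ) < l i a)
    {x : FactorIndex ι (Fin r ⊕ Fin w) → ℂ} (hdet : ∀ i, IsUnit (Matrix.of fun a b ↦
      polyMap (factorPolynomial Sum.isRight θ) x (i, a, b)).det)
    (h : Function.Surjective (fderiv ℂ (polyMap (factorPolynomial Sum.isRight θ)) x)) :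
    IsTransversal w l := by
  have hunit i : (IsUnit (leftFactor x).det ∧ IsUnit (middleFactor Sum.isRight x i).det) ∧
      IsUnit (rightFactor θ x i).det := by
    have hprod : Matrix.of (fun a b ↦ polyMap (factorPolynomial Sum.isRight θ) x (i, a, b)) =
        leftFactor x * middleFactor Sum.isRight x i * rightFactor θ x i :=
      Matrix.ext fun a b ↦ polyMap_factorPolynomial _ _ _ _ _ _
    have := hdet i
    rwa [hprod, det_mul, det_mul, IsUnit.mul_iff, IsUnit.mul_iff] at this
  have hP i : (middleFactor Sum.isRight x i).BlockTriangular Sum.isRight :=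
    blockTriangular_triangularOf _ _
  have hblocks i := isUnit_det_toBlocks_of_blockTriangular (hP i) (hunit i).1.2
  exact ⟨_, _, fun i ↦ (hblocks i).1, fun i ↦ isUnit_nonsing_inv_det _ (hblocks i).2,
    surjective_transversalityMap_of_exists_add_add_eq hθinj hθ
      (hunit (Classical.arbitrary ι)).1.1 hP (fun i ↦ (hunit i).1.2)
      (fun i ↦ blockTriangular_triangularOf _ _) (fun i ↦ (hunit i).2)
      (surjective_fderiv_polyMap_factorPolynomial_iff.mp h)⟩

end Submersion

/-! ### Schubert varieties -/

section SchubertPosition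

variable {ι K : Type*} [Field K] {r w n : ℕ} {F : Fin r → Fin n}

/-- The column space of `A` lies in the Schubert variety of index `F` for the flag `v`: for each
`c`, it contains `c + 1` independent combinations of the first `F c + 1` columns of `v`. -/
def IsInSchubertVariety {m n K : Type*} [Fintype m] [LT m] [Fintype n] [DecidableEq n] [CommRing K]
    (v : Matrix m m K) (F : n → m) (A : Matrix m n K) : Prop :=
  ∃ (u : Matrix n n K) (e : Matrix m n K), IsUnit u.det ∧ IsStaircase F e ∧ A * u = v * e

/-- The column space of `A` lies in the Schubert cell of index `F` for the flag `v`: it has exactly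
the jumps `F` with respect to the spans of the first columns of `v`. -/
def IsInSchubertCell {m n K : Type*} [Fintype m] [LT m] [Fintype n] [LT n] [DecidableEq n]
    [CommRing K] (v : Matrix m m K) (F : n → m) (A : Matrix m n K) : Prop :=
  ∃ (u : Matrix n n K) (e : Matrix m n K), IsUnit u.det ∧ IsEchelon F e ∧ A * u = v * e

lemma exists_isInSchubertCell {v : Matrix (Fin n) (Fin n) K} (hv : IsUnit v.det)
    {A : Matrix (Fin n) (Fin r) K} (hA : ∀ x, A *ᵥ x = 0 → x = 0) :
    ∃ F : Fin r → Fin n, IsInSchubertCell v F A := by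
  have hvA x (hx : (v⁻¹ * A) *ᵥ x = 0) : x = 0 := hA x <| by
    rw [← mul_nonsing_inv_cancel_left v A hv, ← mulVec_mulVec, hx, mulVec_zero]
  obtain ⟨F, u, hu, he⟩ := exists_isEchelon_mul hvA
  exact ⟨F, u, _, hu, he, by rw [← Matrix.mul_assoc, mul_nonsing_inv_cancel_left _ _ hv]⟩

lemma IsEchelon.exists_blockTriangular_extension {e : Matrix (Fin n) (Fin r) K}
    (he : IsEchelon F e) {θ : Fin r ⊕ Fin w ≃ Fin n} (hθ : ∀ a, θ (Sum.inl a) = F a) :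
    ∃ C : Matrix (Fin r ⊕ Fin w) (Fin r ⊕ Fin w) K, (∀ x a, C x (Sum.inl a) = e (θ x) a) ∧
      C.BlockTriangular θ ∧ IsUnit C.det := by
  let C : Matrix (Fin r ⊕ Fin w) (Fin r ⊕ Fin w) K :=
    Matrix.of fun x ↦ Sum.elim (e (θ x)) fun b ↦
      (1 : Matrix (Fin r ⊕ Fin w) (Fin r ⊕ Fin w) K) x (Sum.inr b)
  have hC : C.BlockTriangular θ := by
    rintro x (a | b) hx
    · exact he.isStaircase _ _ (by rwa [← hθ])
    · exact one_apply_ne fun h ↦ hx.ne (congrArg θ h).symm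
  have hdiag x : C x x ≠ 0 := by
    rcases x with a | b
    · simpa [C, hθ] using he.pivot_ne_zero a
    · simp [C]
  refine ⟨C, fun _ _ ↦ rfl, hC, ?_⟩
  have hupper : (C.submatrix θ.symm θ.symm).IsUpperTriangular := fun i j hij ↦
    hC (by simpa using hij)
  rw [← det_submatrix_equiv_self θ.symm, det_of_isUpperTriangular hupper, isUnit_iff_ne_zero]
  exact Finset.prod_ne_zero_iff.mpr fun i _ ↦ hdiag _

lemma exists_isUnit_det_extension (τ : Fin r ⊕ Fin w ≃ Fin n) {A : Matrix (Fin n) (Fin r) K}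
    (hA : ∀ x, A *ᵥ x = 0 → x = 0) :
    ∃ G : Matrix (Fin r ⊕ Fin w) (Fin r ⊕ Fin w) K,
      IsUnit G.det ∧ ∀ x a, G x (Sum.inl a) = A (τ x) a := by
  obtain ⟨F, u, hu, he⟩ := exists_isEchelon_mul hA
  obtain ⟨θ, hθ, -⟩ :=
    exists_sum_equiv_of_strictMono (by simpa using Fintype.card_congr τ) he.strictMono
  obtain ⟨C, hC, -, hCdet⟩ := he.exists_blockTriangular_extension hθ
  refine ⟨C.submatrix (τ.trans θ.symm) (Equiv.refl _) * fromBlocks u⁻¹ 0 0 1, ?_, fun x a ↦ ?_⟩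
  · rw [det_mul, det_fromBlocks_zero₂₁, det_one, mul_one]
    refine IsUnit.mul ?_ (isUnit_nonsing_inv_det _ hu)
    rw [← isUnit_iff_isUnit_det] at hCdet ⊢
    exact (isUnit_submatrix_equiv _ _).mpr hCdet
  · have hAu : ((A * u) * u⁻¹) (τ x) a = A (τ x) a := by rw [mul_nonsing_inv_cancel_right _ _ hu]
    simpa [Matrix.mul_apply (M := C.submatrix _ _), hC, Matrix.mul_apply (M := A * u)] using hAu

lemma IsInSchubertCell.exists_factorization {v : Matrix (Fin n) (Fin n) K}
    {A : Matrix (Fin n) (Fin r) K} (h : IsInSchubertCell v F A) {θ : Fin r ⊕ Fin w ≃ Fin n}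
    (hθ : ∀ a, θ (Sum.inl a) = F a) {τ : Fin r ⊕ Fin w ≃ Fin n}
    {G : Matrix (Fin r ⊕ Fin w) (Fin r ⊕ Fin w) K} (hG : IsUnit G.det)
    (hGA : ∀ x a, G x (Sum.inl a) = A (τ x) a) :
    ∃ P B : Matrix (Fin r ⊕ Fin w) (Fin r ⊕ Fin w) K, P.BlockTriangular Sum.isRight ∧
      B.BlockTriangular θ ∧ G * P * B = v.submatrix τ θ := by
  obtain ⟨u, e, -, he, hAu⟩ := h
  obtain ⟨C, hC, hCtri, hCdet⟩ := he.exists_blockTriangular_extension hθ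
  have := invertibleOfIsUnitDet _ hCdet
  refine ⟨G⁻¹ * (v.submatrix τ θ * C), C⁻¹, ?_, blockTriangular_inv_of_blockTriangular hCtri, ?_⟩
  · let U : Matrix (Fin r ⊕ Fin w) (Fin r ⊕ Fin w) K := fromBlocks u 0 0 0
    have hcol x a : (v.submatrix τ θ * C) x (Sum.inl a) = (G * U) x (Sum.inl a) := by
      calc (v.submatrix τ θ * C) x (Sum.inl a) = (v * e) (τ x) a := by
            simp only [Matrix.mul_apply, submatrix_apply, hC]
            exact Equiv.sum_comp θ fun j ↦ v (τ x) j * e j a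
        _ = _ := by rw [← hAu]; simp [U, Matrix.mul_apply, hGA]
    refine blockTriangular_isRight_iff.mpr (Matrix.ext fun b a ↦ ?_)
    calc (G⁻¹ * (v.submatrix τ θ * C)) (Sum.inr b) (Sum.inl a)
        = (G⁻¹ * (G * U)) (Sum.inr b) (Sum.inl a) := by
          simp only [Matrix.mul_apply (M := G⁻¹), hcol]
      _ = 0 := by rw [nonsing_inv_mul_cancel_left _ _ hG]; rfl
  · rw [mul_nonsing_inv_cancel_left _ _ hG, mul_nonsing_inv_cancel_right _ _ hCdet]

lemma isInSchubertVariety_of_factorization {v : Matrix (Fin n) (Fin n) K}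
    {θ τ : Fin r ⊕ Fin w ≃ Fin n} (hθ : ∀ a, θ (Sum.inl a) = F a)
    {G P B : Matrix (Fin r ⊕ Fin w) (Fin r ⊕ Fin w) K} (hP : P.BlockTriangular Sum.isRight)
    (hPdet : IsUnit P.det) (hB : B.BlockTriangular θ) (hBdet : IsUnit B.det)
    (hv : G * P * B = v.submatrix τ θ) :
    IsInSchubertVariety v F (G.submatrix τ.symm Sum.inl) := by
  have := invertibleOfIsUnitDet _ hBdet
  refine ⟨P.toBlocks₁₁, B⁻¹.submatrix θ.symm Sum.inl,
    (isUnit_det_toBlocks_of_blockTriangular hP hPdet).1, fun i a hia ↦ ?_, ?_⟩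
  · exact blockTriangular_inv_of_blockTriangular hB (by simpa [hθ] using hia)
  · have hGP : G * P = v.submatrix τ θ * B⁻¹ := by
      rw [← hv, mul_nonsing_inv_cancel_right _ _ hBdet]
    ext i a
    have hPa b : P (Sum.inr b) (Sum.inl a) = 0 := hP (by simp)
    have hent := congrFun (congrFun hGP (τ.symm i)) (Sum.inl a)
    simp only [Matrix.mul_apply (M := G), Fintype.sum_sum_type, hPa, mul_zero,
      Finset.sum_const_zero, add_zero] at hent
    rw [Matrix.mul_apply]
    refine hent.trans ?_
    rw [Matrix.mul_apply, Matrix.mul_apply, ← Equiv.sum_comp θ]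
    simp

end SchubertPosition

section Orthonormal

variable {m n 𝕜 : Type*} [Fintype m] [RCLike 𝕜]

open scoped Matrix.Norms.L2Operator in
lemma isCompact_conjTranspose_mul_self_eq_one [Finite n] [DecidableEq n] :
    IsCompact {q : Matrix m n 𝕜 | qᴴ * q = 1} := by
  classical
  cases nonempty_fintype n
  have : ProperSpace (Matrix m n 𝕜) := FiniteDimensional.proper 𝕜 _
  refine Metric.isCompact_of_isClosed_isBounded (isClosed_eq (by fun_prop) continuous_const)
    (isBounded_iff_forall_norm_le.mpr ⟨1, fun q hq ↦ ?_⟩)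
  have h := l2_opNorm_conjTranspose_mul_self q
  rw [show qᴴ * q = 1 from hq, ← diagonal_one, l2_opNorm_diagonal] at h
  have : ‖(fun _ ↦ 1 : n → 𝕜)‖ ≤ 1 := (pi_norm_const_le _).trans norm_one.le
  nlinarith

variable [Fintype n] [LinearOrder n] [LocallyFiniteOrderBot n]

open scoped ComplexOrder in
lemma exists_isUpperTriangular_conjTranspose_mul_mul_eq_one {S : Matrix n n 𝕜} (hS : S.PosDef) :
    ∃ t : Matrix n n 𝕜, t.IsUpperTriangular ∧ tᴴ * S * t = 1 := by
  let L := LDL.lowerInv hS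
  have hL : L * S * Lᴴ = diagonal (LDL.diagEntries hS) := (LDL.diag_eq_lowerInv_conj hS).symm
  have hd i : 0 < LDL.diagEntries hS i := by
    have := LDL.invertibleLowerInv hS
    refine posDef_diagonal_iff.mp ?_ i
    rw [← hL]
    exact (IsUnit.posDef_star_right_conjugate_iff (isUnit_of_invertible L)).mpr hS
  choose s hs hds using fun i ↦ RCLike.pos_iff_exists_ofReal.mp (hd i)
  let D : Matrix n n 𝕜 := diagonal fun i ↦ (((√(s i))⁻¹ : ℝ) : 𝕜)
  refine ⟨Lᴴ * D, fun i j hij ↦ ?_, ?_⟩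
  · have hL0 : L j i = 0 := LDL.lowerInv_triangular hS hij
    rw [mul_diagonal, conjTranspose_apply, hL0, star_zero, zero_mul]
  · calc (Lᴴ * D)ᴴ * S * (Lᴴ * D) = Dᴴ * (L * S * Lᴴ) * D := by
          simp only [conjTranspose_mul, conjTranspose_conjTranspose, Matrix.mul_assoc]
      _ = 1 := by
          rw [hL, diagonal_conjTranspose, diagonal_mul_diagonal, diagonal_mul_diagonal,
            ← diagonal_one]
          congr 1 with i
          have hsq : (√(s i))⁻¹ * s i * (√(s i))⁻¹ = 1 := by
            have := Real.mul_self_sqrt (hs i).le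
            have := (Real.sqrt_pos.mpr (hs i)).ne'
            field_simp
            nlinarith
          simp only [map_inv₀, Pi.star_apply, star_inv₀, RCLike.star_def, RCLike.conj_ofReal, ← hds]
          exact_mod_cast hsq

open scoped ComplexOrder in
lemma exists_isUpperTriangular_orthonormal {A : Matrix m n 𝕜} (hA : ∀ x, A *ᵥ x = 0 → x = 0) :
    ∃ t : Matrix n n 𝕜, t.IsUpperTriangular ∧ (A * t)ᴴ * (A * t) = 1 := by
  have hinj : Function.Injective A.mulVec :=
    (injective_iff_map_eq_zero A.mulVecLin).mpr fun x ↦ hA x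
  obtain ⟨t, ht, h⟩ := exists_isUpperTriangular_conjTranspose_mul_mul_eq_one
    (PosDef.conjTranspose_mul_self A hinj)
  exact ⟨t, ht, by rw [← h, conjTranspose_mul]; simp only [Matrix.mul_assoc]⟩

end Orthonormal

lemma IsStaircase.mul_isUpperTriangular {m n K : Type*} [Preorder m] [LinearOrder n] [Fintype n]
    [CommRing K] {F : n → m} (hF : Monotone F) {e : Matrix m n K} (he : IsStaircase F e)
    {t : Matrix n n K} (ht : t.IsUpperTriangular) : IsStaircase F (e * t) := by
  refine fun a c hac ↦ (Matrix.mul_apply ..).trans (Finset.sum_eq_zero fun d _ ↦ ?_)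
  rcases le_or_gt d c with h | h
  · rw [he a d ((hF h).trans_lt hac), zero_mul]
  · rw [ht h, mul_zero]

section HasSchubertPoint

variable {ι : Type*} {r n : ℕ} {v : ι → Matrix (Fin n) (Fin n) ℂ} {I : ι → Fin r → Fin n}

/-- The Schubert varieties of index `I i` for the flags `v i` have a common point, recorded by an
orthonormal basis `q` of it and orthonormal bases `q * t i` adapted to the flags. The adjugate in
place of the inverse makes this a closed condition on `v`, singular matrices included. -/
def HasSchubertPoint (v : ι → Matrix (Fin n) (Fin n) ℂ) (I : ι → Fin r → Fin n) : Prop :=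
  ∃ (q : Matrix (Fin n) (Fin r) ℂ) (t : ι → Matrix (Fin r) (Fin r) ℂ), qᴴ * q = 1 ∧
    ∀ i, (t i)ᴴ * t i = 1 ∧ IsStaircase (I i) ((v i).adjugate * q * t i)

lemma hasSchubertPoint_of_isInSchubertVariety (hI : ∀ i, Monotone (I i))
    {A : Matrix (Fin n) (Fin r) ℂ} (hA : ∀ x, A *ᵥ x = 0 → x = 0)
    (h : ∀ i, IsInSchubertVariety (v i) (I i) A) : HasSchubertPoint v I := by
  choose u e hu he hAu using h
  have hinj i x (hx : (A * u i) *ᵥ x = 0) : x = 0 :=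
    eq_zero_of_mulVec_eq_zero (hu i).ne_zero (hA _ (by rwa [mulVec_mulVec]))
  obtain ⟨s, -, hs⟩ := exists_isUpperTriangular_orthonormal hA
  choose t ht hAt using fun i ↦ exists_isUpperTriangular_orthonormal (hinj i)
  have hsdet : IsUnit s.det := isUnit_det_of_left_inverse (by rwa [← Matrix.mul_assoc] at hs)
  have hq i : A * s * (s⁻¹ * (u i * t i)) = A * u i * t i := by
    simp only [Matrix.mul_assoc, mul_nonsing_inv_cancel_left _ _ hsdet]
  refine ⟨A * s, fun i ↦ s⁻¹ * (u i * t i), hs, fun i ↦ ⟨?_, ?_⟩⟩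
  · rw [← hAt i, ← hq, conjTranspose_mul (A * s), Matrix.mul_assoc, ← Matrix.mul_assoc (A * s)ᴴ,
      hs, Matrix.one_mul]
  · have hadj : (v i).adjugate * (A * s) * (s⁻¹ * (u i * t i)) = (v i).det • (e i * t i) := by
      rw [Matrix.mul_assoc, hq, hAu, Matrix.mul_assoc, ← Matrix.mul_assoc, adjugate_mul,
        smul_mul, Matrix.one_mul]
    intro a c hac
    rw [hadj, Matrix.smul_apply, (he i).mul_isUpperTriangular (hI i) (ht i) a c hac, smul_zero]

lemma HasSchubertPoint.exists_isInSchubertVariety (h : HasSchubertPoint v I)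
    (hv : ∀ i, IsUnit (v i).det) :
    ∃ q : Matrix (Fin n) (Fin r) ℂ, qᴴ * q = 1 ∧ ∀ i, IsInSchubertVariety (v i) (I i) q := by
  obtain ⟨q, t, hq, ht⟩ := h
  refine ⟨q, hq, fun i ↦ ⟨t i, (v i)⁻¹ * q * t i, isUnit_det_of_left_inverse (ht i).1,
    fun a c hac ↦ ?_, ?_⟩⟩
  · simp only [inv_def, smul_mul, Matrix.smul_apply, (ht i).2 a c hac, smul_zero]
  · rw [Matrix.mul_assoc, mul_nonsing_inv_cancel_left _ _ (hv i)]

lemma isClosed_hasSchubertPoint (I : ι → Fin r → Fin n) :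
    IsClosed {v : ι → Matrix (Fin n) (Fin n) ℂ | HasSchubertPoint v I} := by
  let Q := {q : Matrix (Fin n) (Fin r) ℂ | qᴴ * q = 1}
  let T := {t : Matrix (Fin r) (Fin r) ℂ | tᴴ * t = 1}
  have : CompactSpace Q := isCompact_iff_compactSpace.mp isCompact_conjTranspose_mul_self_eq_one
  have : CompactSpace T := isCompact_iff_compactSpace.mp isCompact_conjTranspose_mul_self_eq_one
  let S : Set ((ι → Matrix (Fin n) (Fin n) ℂ) × (Q × (ι → T))) :=
    {z | ∀ i a c, I i c < a →
      ((z.1 i).adjugate * z.2.1.1 * (z.2.2 i).1 : Matrix (Fin n) (Fin r) ℂ) a c = 0}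
  have hS : IsClosed S := by
    simp only [S, Set.ofPred_forall]
    refine isClosed_iInter fun i ↦ isClosed_iInter fun a ↦ isClosed_iInter fun c ↦
      isClosed_iInter fun _ ↦ isClosed_eq ?_ continuous_const
    fun_prop
  convert isClosedMap_fst_of_compactSpace S hS using 1
  ext v
  constructor
  · rintro ⟨q, t, hq, ht⟩
    exact ⟨(v, ⟨q, hq⟩, fun i ↦ ⟨t i, (ht i).1⟩), fun i ↦ (ht i).2, rfl⟩
  · rintro ⟨⟨v, q, t⟩, h, rfl⟩
    exact ⟨q, fun i ↦ t i, q.2, fun i ↦ ⟨(t i).2, h i⟩⟩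

end HasSchubertPoint

section SchubertIntersection

variable {ι : Type*} {r w n : ℕ} {v : ι → Matrix (Fin n) (Fin n) ℂ} {I : ι → Fin r → Fin n}
  {θ : ι → Fin r ⊕ Fin w ≃ Fin n}

lemma mem_range_polyMap_of_isInSchubertCell (hθ : ∀ i a, θ i (Sum.inl a) = I i a)
    (τ : Fin r ⊕ Fin w ≃ Fin n) {A : Matrix (Fin n) (Fin r) ℂ} (hA : ∀ x, A *ᵥ x = 0 → x = 0)
    (h : ∀ i, IsInSchubertCell (v i) (I i) A) :
    (fun k ↦ v k.1 (τ k.2.1) (θ k.1 k.2.2)) ∈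
      Set.range (polyMap (factorPolynomial Sum.isRight fun i ↦ ⇑(θ i))) := by
  obtain ⟨G, hG, hGA⟩ := exists_isUnit_det_extension τ hA
  choose P B hP hB hv using fun i ↦ (h i).exists_factorization (hθ i) hG hGA
  exact mem_range_polyMap_factorPolynomial_iff.mpr
    ⟨G, P, B, hP, hB, fun i a b ↦ congrFun₂ (hv i) a b⟩

lemma exists_isInSchubertVariety_of_mem_range_polyMap [Nonempty ι]
    (hθ : ∀ i a, θ i (Sum.inl a) = I i a) {τ : Fin r ⊕ Fin w ≃ Fin n}
    (hv : ∀ i, IsUnit (v i).det)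
    (h : (fun k ↦ v k.1 (τ k.2.1) (θ k.1 k.2.2)) ∈
      Set.range (polyMap (factorPolynomial Sum.isRight fun i ↦ ⇑(θ i)))) :
    ∃ A : Matrix (Fin n) (Fin r) ℂ, (∀ x, A *ᵥ x = 0 → x = 0) ∧
      ∀ i, IsInSchubertVariety (v i) (I i) A := by
  obtain ⟨G, P, B, hP, hB, hGPB⟩ := mem_range_polyMap_factorPolynomial_iff.mp h
  have hprod i : G * P i * B i = (v i).submatrix τ (θ i) := Matrix.ext (hGPB i)
  have hunit i : IsUnit G.det ∧ IsUnit (P i).det ∧ IsUnit (B i).det := by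
    have hsub : IsUnit (G * P i * B i).det := by
      rw [hprod, ← isUnit_iff_isUnit_det, isUnit_submatrix_equiv, isUnit_iff_isUnit_det]
      exact hv i
    simpa only [det_mul, IsUnit.mul_iff, and_assoc] using hsub
  refine ⟨G.submatrix τ.symm Sum.inl, fun x hx ↦ ?_, fun i ↦
    isInSchubertVariety_of_factorization (hθ i) (hP i) (hunit i).2.1 (hB i) (hunit i).2.2 (hprod i)⟩
  have hGx : G *ᵥ Sum.elim x 0 = 0 := funext fun y ↦ by
    simpa [mulVec, dotProduct] using congrFun hx (τ y)
  obtain ⟨i⟩ := ‹Nonempty ι›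
  have hzero := eq_zero_of_mulVec_eq_zero (hunit i).1.ne_zero hGx
  exact funext fun a ↦ congrFun hzero (Sum.inl a)

variable [Fintype ι]

section

open scoped Matrix.Norms.Elementwise ContDiff

lemma tendsto_reindex_generic (θ : ι → Fin r ⊕ Fin w ≃ Fin n) (τ : Fin r ⊕ Fin w ≃ Fin n) :
    Filter.Tendsto (fun (v : ι → Matrix (Fin n) (Fin n) ℂ)
        (k : ι × (Fin r ⊕ Fin w) × (Fin r ⊕ Fin w)) ↦ v k.1 (τ k.2.1) (θ k.1 k.2.2))
      (generic _) (generic _) := by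
  refine tendsto_generic_of_surjective (contDiff_pi.mpr fun k ↦ by fun_prop) fun y ↦ ?_
  exact ⟨fun i ↦ Matrix.of fun a b ↦ y (i, τ.symm a, (θ i).symm b), by ext; simp⟩

lemma eventually_generic_isUnit_det :
    ∀ᶠ v in generic (ι → Matrix (Fin n) (Fin n) ℂ), ∀ i, IsUnit (v i).det := by
  refine Filter.eventually_all.mpr fun i ↦ ?_
  simp only [isUnit_iff_ne_zero]
  exact eventually_generic_ne_zero (x₀ := fun _ ↦ (1 : Matrix (Fin n) (Fin n) ℂ))
    (contDiff_det fun a b ↦ by fun_prop) (by simp)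

omit [Fintype ι] in
theorem IsTransversalPosition.hasSchubertPoint [Finite ι] [Nonempty ι] (h : IsTransversalPosition I)
    (hr : r ≤ n) (hI : ∀ i, StrictMono (I i)) (v : ι → Matrix (Fin n) (Fin n) ℂ) :
    HasSchubertPoint v I := by
  cases nonempty_fintype ι
  have hn : r + (n - r) = n := Nat.add_sub_of_le hr
  choose θ hθ hθlt using fun i ↦ exists_sum_equiv_of_strictMono hn (hI i)
  obtain ⟨x, hx⟩ := h.exists_surjective_fderiv_polyMap (θ := fun i ↦ ⇑(θ i)) hθlt
  have hmem := (tendsto_reindex_generic θ (finSumFinEquiv.trans (finCongr hn))).eventually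
    (eventually_generic_mem_range_polyMap hx)
  have hdense : Dense {v : ι → Matrix (Fin n) (Fin n) ℂ | HasSchubertPoint v I} := by
    refine dense_of_eventually_generic ?_
    filter_upwards [hmem, eventually_generic_isUnit_det] with v hv hdet
    obtain ⟨A, hA, hAv⟩ := exists_isInSchubertVariety_of_mem_range_polyMap hθ hdet hv
    exact hasSchubertPoint_of_isInSchubertVariety (fun i ↦ (hI i).monotone) hA hAv
  exact (isClosed_hasSchubertPoint I).closure_subset (hdense v)

theorem eventually_generic_not_isInSchubertCell [Nonempty ι] (h : ¬ IsTransversalPosition I)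
    (hr : r ≤ n) (hI : ∀ i, StrictMono (I i)) :
    ∀ᶠ v in generic (ι → Matrix (Fin n) (Fin n) ℂ), ∀ A : Matrix (Fin n) (Fin r) ℂ,
      (∀ x, A *ᵥ x = 0 → x = 0) → ¬ ∀ i, IsInSchubertCell (v i) (I i) A := by
  have hn : r + (n - r) = n := Nat.add_sub_of_le hr
  choose θ hθ hθlt using fun i ↦ exists_sum_equiv_of_strictMono hn (hI i)
  let m := Fin r ⊕ Fin (n - r)
  let b : MvPolynomial (ι × m × m) ℂ :=
    ∏ i, (Matrix.of fun x y ↦ (MvPolynomial.X (i, x, y) : MvPolynomial (ι × m × m) ℂ)).det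
  have heval (z : ι × m × m → ℂ) :
      MvPolynomial.eval z b = ∏ i, (Matrix.of fun x y ↦ z (i, x, y)).det := by
    simp only [b, map_prod, RingHom.map_det]
    congr! 2 with i
    ext
    simp
  have hb : b ≠ 0 := by
    intro h0
    have h1 : (Matrix.of fun x y ↦ (1 : Matrix m m ℂ) x y).det = 1 := det_one
    have := heval fun k ↦ (1 : Matrix m m ℂ) k.2.1 k.2.2
    simp [h0, h1] at this
  have hcrit (x : FactorIndex ι m → ℂ)
      (hx : MvPolynomial.eval (polyMap (factorPolynomial Sum.isRight fun i ↦ ⇑(θ i)) x) b ≠ 0) :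
      ¬ Function.Surjective
        (fderiv ℂ (polyMap (factorPolynomial Sum.isRight fun i ↦ ⇑(θ i))) x) := by
    rw [heval, Finset.prod_ne_zero_iff] at hx
    exact fun hsurj ↦ h <| isTransversal_of_surjective_fderiv_polyMap (fun i ↦ (θ i).injective)
      hθlt (fun i ↦ isUnit_iff_ne_zero.mpr (hx i (Finset.mem_univ i))) hsurj
  let τ : m ≃ Fin n := finSumFinEquiv.trans (finCongr hn)
  filter_upwards [(tendsto_reindex_generic θ τ).eventually
    (eventually_generic_notMem_range_polyMap hb hcrit)] with v hv A hA hcell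
  exact hv (mem_range_polyMap_of_isInSchubertCell hθ τ hA hcell)

end

end SchubertIntersection

section SchubertVariety

lemma IsInSchubertCell.le_of_isInSchubertVariety {K : Type*} [Field K] {n r : ℕ}
    {v : Matrix (Fin n) (Fin n) K} {F G : Fin r → Fin n} {A : Matrix (Fin n) (Fin r) K}
    (hcell : IsInSchubertCell v G A) (hv : IsUnit v.det) (hF : StrictMono F)
    (h : IsInSchubertVariety v F A) (c : Fin r) : G c ≤ F c := by
  obtain ⟨u', e', hu', he', hAu'⟩ := hcell
  obtain ⟨u, e, hu, he, hAu⟩ := h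
  have hchange : e' * (u'⁻¹ * u) = e := by
    rw [← nonsing_inv_mul_cancel_left v e' hv, ← hAu', ← nonsing_inv_mul_cancel_left v e hv, ← hAu]
    simp only [Matrix.mul_assoc, mul_nonsing_inv_cancel_left _ _ hu']
  refine he'.pivot_le hF (t := u'⁻¹ * u) ?_ (by rwa [hchange]) c
  rw [det_mul]
  exact (isUnit_nonsing_inv_det _ hu').mul hu

lemma IsStaircase.isInSchubertVariety_mul {K l m n : Type*} [CommRing K] [Fintype l] [Preorder l]
    [Fintype m] [LinearOrder m] [Fintype n] [DecidableEq n] {v : Matrix l l K} {F : m → l}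
    {F' : n → m} {A e : Matrix l m K} {A' : Matrix m n K} {u : Matrix m m K}
    (he : IsStaircase F e) (hF : Monotone F) (hAu : A * u = v * e)
    (h : IsInSchubertVariety u F' A') : IsInSchubertVariety v (fun c ↦ F (F' c)) (A * A') := by
  obtain ⟨u', e', hu', he', hAu'⟩ := h
  refine ⟨u', e * e', hu', fun a c hac ↦ (Matrix.mul_apply ..).trans
    (Finset.sum_eq_zero fun d _ ↦ ?_), by
      rw [Matrix.mul_assoc, hAu', ← Matrix.mul_assoc, hAu, Matrix.mul_assoc]⟩
  rcases le_or_gt d (F' c) with h | h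
  · rw [he a d ((hF h).trans_lt hac), zero_mul]
  · rw [he' d c h, mul_zero]

end SchubertVariety

section RelativeMove

variable {R l m n : Type*} [CommRing R] [Fintype m] [DecidableEq m] [Fintype n]

lemma mul_one_add_mul_mul_of_mul_eq_zero {φ : Matrix l m R} {a : Matrix m n R}
    (h : φ * a = 0) (s : Matrix n n R) (k : Matrix n m R) : φ * (1 + a * s * k) = φ := by
  rw [Matrix.mul_add, Matrix.mul_one, Matrix.mul_assoc, ← Matrix.mul_assoc φ, h, Matrix.zero_mul,
    add_zero]

lemma mul_eq_one_add_mul_mul_mul [DecidableEq n] {a e : Matrix m n R} {k : Matrix n m R}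
    {u : Matrix n n R} {v : Matrix m m R} (hk : k * a = 1) (hu : IsUnit u.det)
    (hau : a * u = v * e) (σ : Matrix n n R) :
    a * σ = (1 + a * (σ * u⁻¹ - 1) * k) * v * e := by
  have hcancel : (σ * u⁻¹ - 1) * (k * (a * u)) = σ - u := by
    rw [← Matrix.mul_assoc k, hk, Matrix.one_mul, Matrix.sub_mul, Matrix.one_mul,
      nonsing_inv_mul_cancel_right _ _ hu]
  rw [Matrix.mul_assoc, ← hau, Matrix.add_mul, Matrix.one_mul, Matrix.mul_assoc, Matrix.mul_assoc,
    hcancel, Matrix.mul_sub, add_sub_cancel]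

end RelativeMove

/-! ### Horn's recursion -/

section HornInequalities

variable {ι : Type*} [Fintype ι] [Nonempty ι] {p q r w n : ℕ} {l : ι → Fin r → ℕ}

open scoped Matrix.Norms.Elementwise ContDiff

lemma eventually_generic_isTransversalPosition_of_isInSchubertCell :
    ∀ᶠ v in generic (ι → Matrix (Fin n) (Fin n) ℂ), ∀ (p : ℕ) (F : ι → Fin p → Fin n)
      (A : Matrix (Fin n) (Fin p) ℂ), (∀ i, StrictMono (F i)) → (∀ x, A *ᵥ x = 0 → x = 0) →
        (∀ i, IsInSchubertCell (v i) (F i) A) → IsTransversalPosition F := by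
  have key : ∀ᶠ v in generic (ι → Matrix (Fin n) (Fin n) ℂ),
      ∀ z : Σ p : Fin (n + 1), ι → Fin p → Fin n, (∀ i, StrictMono (z.2 i)) →
        ¬ IsTransversalPosition z.2 → ∀ A : Matrix (Fin n) (Fin z.1) ℂ, (∀ x, A *ᵥ x = 0 → x = 0) →
          ¬ ∀ i, IsInSchubertCell (v i) (z.2 i) A := by
    simp only [Filter.eventually_all]
    exact fun z hF hT ↦ eventually_generic_not_isInSchubertCell hT z.1.is_le hF
  filter_upwards [key] with v hv p F A hF hA hcell
  have hp : p ≤ n := by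
    simpa using Fintype.card_le_of_injective _ (hF (Classical.arbitrary ι)).injective
  by_contra hT
  exact hv ⟨⟨p, Nat.lt_succ_of_le hp⟩, F⟩ hF hT A hA hcell

/-- Horn's inequalities for a profile `l` of width `w`: the inequality attached to every
transversal position. For `l = shape I` they are the inequalities defining Horn's triples. -/
def SatisfiesHornInequalities (w : ℕ) (l : ι → Fin r → ℕ) : Prop :=
  ∀ (p : ℕ) (F : ι → Fin p → Fin r), (∀ i, StrictMono (F i)) → IsTransversalPosition F →
    Fintype.card ι * (p * w) ≤ ∑ i, ∑ c, l i (F i c) + p * w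

lemma SatisfiesHornInequalities.comp (h : SatisfiesHornInequalities w l)
    (hl : ∀ i, Monotone (l i)) {F : ι → Fin q → Fin r} (hF : ∀ i, StrictMono (F i))
    (hFT : IsTransversalPosition F) : SatisfiesHornInequalities w fun i c ↦ l i (F i c) := by
  intro p F' hF' hFT'
  have card_le {a b : ℕ} {f : ι → Fin a → Fin b} (hf : ∀ i, StrictMono (f i)) : a ≤ b := by
    simpa using Fintype.card_le_of_injective _ (hf (Classical.arbitrary ι)).injective
  obtain ⟨v, hgood, hv⟩ := ((eventually_generic_isTransversalPosition_of_isInSchubertCell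
    (ι := ι) (n := r)).and eventually_generic_isUnit_det).exists
  obtain ⟨A, hA, hAv⟩ := (hFT.hasSchubertPoint (card_le hF) hF v).exists_isInSchubertVariety hv
  choose u e hu he hAu using hAv
  obtain ⟨A', hA', hAu'⟩ :=
    (hFT'.hasSchubertPoint (card_le hF') hF' u).exists_isInSchubertVariety hu
  have hinj x (hx : (A * A') *ᵥ x = 0) : x = 0 := by
    have hleft : (A'ᴴ * Aᴴ) * (A * A') = 1 := by
      rw [Matrix.mul_assoc, ← Matrix.mul_assoc Aᴴ, hA, Matrix.one_mul, hA']
    rw [← one_mulVec x, ← hleft, ← mulVec_mulVec, hx, mulVec_zero]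
  choose G hG using fun i ↦ exists_isInSchubertCell (hv i) hinj
  have hGmono i : StrictMono (G i) := by
    obtain ⟨_, _, -, he, -⟩ := hG i
    exact he.strictMono
  have hle i c : G i c ≤ F i (F' i c) :=
    (hG i).le_of_isInSchubertVariety (hv i) ((hF i).comp (hF' i))
      ((he i).isInSchubertVariety_mul (hF i).monotone (hAu i) (hAu' i)) c
  calc Fintype.card ι * (p * w) ≤ ∑ i, ∑ c, l i (G i c) + p * w :=
        h p G hGmono (hgood p G _ hGmono hinj hG)
    _ ≤ ∑ i, ∑ c, l i (F i (F' i c)) + p * w := by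
        gcongr with i _ c
        exact hl i (hle i c)

omit [Nonempty ι] in
lemma exists_ker_ne_zero_of_not_surjective {v : ι → Matrix (Fin r) (Fin r) ℂ}
    {y : ι → Matrix (Fin w) (Fin w) ℂ} (hlw : ∀ i a, l i a ≤ w)
    (hle : Fintype.card ι * (r * w) ≤ ∑ i, ∑ a, l i a + r * w)
    (h : ¬ Function.Surjective (transversalityMap w l v y)) :
    ∃ φ, φ ≠ 0 ∧ transversalityMap w l v y φ = 0 := by
  by_contra! hker
  have hinj : Function.Injective (transversalityMap w l v y) :=
    (injective_iff_map_eq_zero _).mpr fun φ hφ ↦ by_contra fun h ↦ hker φ h hφ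
  have hdom : Module.finrank ℂ (Matrix (Fin w) (Fin r) ℂ) = r * w := by
    simp [Module.finrank_matrix, mul_comm]
  have hcod : Module.finrank ℂ (Cells w l → ℂ) = Fintype.card (Cells w l) :=
    Module.finrank_fintype_fun_eq_card ℂ
  have hdim := LinearMap.finrank_le_finrank_of_injective hinj
  have hcells := card_cells_add_sum hlw
  exact h <| (LinearMap.injective_iff_surjective_of_finrank_eq_finrank (by lia)).mp hinj

lemma exists_ker_basis {K : Type*} [Field K] {φ : Matrix (Fin w) (Fin r) K} (hφ : φ ≠ 0) :
    ∃ (p : ℕ) (m : Matrix (Fin r) (Fin p) K) (k : Matrix (Fin p) (Fin r) K),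
      p < r ∧ k * m = 1 ∧ φ * m = 0 ∧ ∀ x, φ *ᵥ x = 0 → ∃ z, x = m *ᵥ z := by
  let b := Module.finBasis K φ.mulVecLin.ker
  let f := φ.mulVecLin.ker.subtype ∘ₗ b.equivFun.symm.toLinearMap
  have hf : f.ker = ⊥ := LinearMap.ker_eq_bot.mpr
    (Subtype.val_injective.comp b.equivFun.symm.injective)
  obtain ⟨g, hg⟩ := f.exists_leftInverse_of_injective hf
  have hlt : φ.mulVecLin.ker < ⊤ := lt_top_iff_ne_top.mpr fun h ↦ hφ <|
    ext_of_mulVec_single fun c ↦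
      (LinearMap.congr_fun (LinearMap.ker_eq_top.mp h) _).trans (zero_mulVec _).symm
  refine ⟨_, f.toMatrix', g.toMatrix', by simpa using Submodule.finrank_lt hlt.ne, ?_, ?_,
    fun x hx ↦ ⟨b.equivFun ⟨x, hx⟩, ?_⟩⟩
  · rw [← LinearMap.toMatrix'_comp, hg, LinearMap.toMatrix'_id]
  · refine ext_of_mulVec_single fun c ↦ ?_
    rw [← mulVec_mulVec, LinearMap.toMatrix'_mulVec, zero_mulVec]
    exact (b.equivFun.symm (Pi.single c 1)).2
  · rw [LinearMap.toMatrix'_mulVec]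
    simp [f]

omit [Nonempty ι] in
lemma IsTransversal.eventually_generic_surjective (h : IsTransversal w l) :
    ∀ᶠ y in generic (ι → Matrix (Fin w) (Fin w) ℂ),
      ∃ v, Function.Surjective (transversalityMap w l v y) := by
  obtain ⟨v, y, -, -, hs⟩ := h
  have hT φ : ContDiff ℂ ω fun y : ι → Matrix (Fin w) (Fin w) ℂ ↦ transversalityMap w l v y φ :=
    contDiff_transversalityMap l (v := fun _ ↦ v) (y := fun y ↦ y) (fun _ _ _ ↦ contDiff_const)
      (fun _ _ _ ↦ by fun_prop) φ
  filter_upwards [Horn.eventually_generic_surjective hT hs] with y hy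
  exact ⟨v, hy⟩

omit [Fintype ι] [Nonempty ι] in
/-- The idea of the induction step: the kernel of `φ`, in the position `F` for the flags `v`, is
kept in place while the flags it inherits are moved by acting on it alone. This does not change the
equation `φ` solves, and makes the inherited flags generic. -/
lemma exists_surjective_transversalityMap_of_ker [Finite ι] (hl : ∀ i, Monotone (l i))
    {v : ι → Matrix (Fin r) (Fin r) ℂ} {y : ι → Matrix (Fin w) (Fin w) ℂ}
    (hv : ∀ i, IsUnit (v i).det)
    (hmax : ∀ (v' : ι → Matrix (Fin r) (Fin r) ℂ) (y' : ι → Matrix (Fin w) (Fin w) ℂ),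
      Module.finrank ℂ (transversalityMap w l v' y').range ≤
        Module.finrank ℂ (transversalityMap w l v y).range)
    {φ : Matrix (Fin w) (Fin r) ℂ} (hφ : transversalityMap w l v y φ = 0)
    {F : ι → Fin p → Fin r} {m : Matrix (Fin r) (Fin p) ℂ} {k : Matrix (Fin p) (Fin r) ℂ}
    (hk : k * m = 1) (hφm : φ * m = 0) (hker : ∀ x, φ *ᵥ x = 0 → ∃ z, x = m *ᵥ z)
    (hcell : ∀ i, IsInSchubertCell (v i) (F i) m) {σ₀ : ι → Matrix (Fin p) (Fin p) ℂ}
    (hσ₀ : Function.Surjective (transversalityMap w (fun i c ↦ l i (F i c)) σ₀ y)) :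
    ∃ v' : ι → Matrix (Fin r) (Fin r) ℂ, (∀ i, IsUnit (v' i).det) ∧
      Function.Surjective (transversalityMap w l v' y) := by
  cases nonempty_fintype ι
  choose u e hu he hmu using hcell
  let V (σ : ι → Matrix (Fin p) (Fin p) ℂ) (i : ι) : Matrix (Fin r) (Fin r) ℂ :=
    (1 + m * (σ i * (u i)⁻¹ - 1) * k) * v i
  have hV i a b : ContDiff ℂ ω fun σ ↦ V σ i a b := by
    simp only [V, Matrix.mul_apply, Matrix.add_apply, Matrix.sub_apply]
    fun_prop
  have hVu : V u = v := funext fun i ↦ by simp [V, mul_nonsing_inv _ (hu i)]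
  have hT φ : ContDiff ℂ ω fun σ ↦ transversalityMap w l (V σ) y φ :=
    contDiff_transversalityMap l hV (y := fun _ ↦ y) (fun _ _ _ ↦ contDiff_const) φ
  have hVdet : ∀ᶠ σ in generic (ι → Matrix (Fin p) (Fin p) ℂ), ∀ i, (V σ i).det ≠ 0 :=
    Filter.eventually_all.mpr fun i ↦ eventually_generic_ne_zero (x₀ := u) (contDiff_det (hV i))
      (by rw [hVu]; exact (hv i).ne_zero)
  have hS φ : ContDiff ℂ ω fun σ : ι → Matrix (Fin p) (Fin p) ℂ ↦
      transversalityMap w (fun i c ↦ l i (F i c)) σ y φ :=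
    contDiff_transversalityMap _ (v := fun σ ↦ σ) (y := fun _ ↦ y) (fun _ _ _ ↦ by fun_prop)
      (fun _ _ _ ↦ contDiff_const) φ
  obtain ⟨σ, hrank, hVdet, hs, hσ⟩ := ((eventually_generic_finrank_range_ge hT u).and
    (hVdet.and ((eventually_generic_surjective hS hσ₀).and
      eventually_generic_isUnit_det))).exists
  rw [hVu] at hrank
  have hφV : transversalityMap w l (V σ) y φ = transversalityMap w l v y φ := by
    have hφV i : y i * φ * V σ i = y i * φ * v i := by
      rw [← Matrix.mul_assoc, Matrix.mul_assoc (y i), mul_one_add_mul_mul_of_mul_eq_zero hφm]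
    ext x
    simp only [transversalityMap_apply, hφV]
  exact ⟨V σ, fun i ↦ (hVdet i).isUnit, surjective_transversalityMap_of_ker hl
    (fun i ↦ (hVdet i).isUnit) (fun y' ↦ (hmax _ y').trans hrank) (hφV.trans hφ) hk hker hσ he
    (fun i ↦ mul_eq_one_add_mul_mul_mul hk (hu i) (hmu i) (σ i)) hs⟩

omit [Fintype ι] [Nonempty ι] in
lemma isTransversalPosition_id : IsTransversalPosition fun (_ : ι) (c : Fin r) ↦ c := by
  refine ⟨fun _ ↦ 1, fun _ ↦ 1, by simp, by simp, fun D ↦ ⟨0, funext fun x ↦ ?_⟩⟩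
  exact absurd x.1.2.1.isLt (by simp)

lemma exists_finrank_range_maximal {X E V : Type*} [Nonempty X] [AddCommGroup E] [Module ℂ E]
    [AddCommGroup V] [Module ℂ V] [Module.Finite ℂ V] (T : X → E →ₗ[ℂ] V) :
    ∃ x₀, ∀ x, Module.finrank ℂ (T x).range ≤ Module.finrank ℂ (T x₀).range := by
  have hfin : (Set.range fun x ↦ Module.finrank ℂ (T x).range).Finite :=
    (Set.finite_Iic (Module.finrank ℂ V)).subset <| by
      rintro _ ⟨x, rfl⟩
      exact Submodule.finrank_le _
  obtain ⟨_, ⟨x₀, rfl⟩, hx₀⟩ := Set.exists_max_image _ id hfin (Set.range_nonempty _)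
  exact ⟨x₀, fun x ↦ hx₀ _ ⟨x, rfl⟩⟩

theorem SatisfiesHornInequalities.isTransversal (h : SatisfiesHornInequalities w l)
    (hl : ∀ i, Monotone (l i)) (hlw : ∀ i a, l i a ≤ w) : IsTransversal w l := by
  induction r using Nat.strong_induction_on with
  | _ r IH =>
  by_contra hnot
  obtain ⟨x₀, hx₀⟩ := exists_finrank_range_maximal
    fun x : (ι → Matrix (Fin r) (Fin r) ℂ) × (ι → Matrix (Fin w) (Fin w) ℂ) ↦
      transversalityMap w l x.1 x.2
  have hrank := eventually_generic_finrank_range_ge (x₀ := x₀) <| contDiff_transversalityMap l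
    (v := Prod.fst) (y := Prod.snd) (fun _ _ _ ↦ by fun_prop) (fun _ _ _ ↦ by fun_prop)
  have hfst : ∀ᶠ v in generic (ι → Matrix (Fin r) (Fin r) ℂ), _ :=
    eventually_generic_isTransversalPosition_of_isInSchubertCell.and eventually_generic_isUnit_det
  have hsub : ∀ᶠ y in generic (ι → Matrix (Fin w) (Fin w) ℂ),
      ∀ z : Σ p : Fin r, ι → Fin p → Fin r, (∀ i, StrictMono (z.2 i)) →
        IsTransversalPosition z.2 →
          ∃ σ, Function.Surjective (transversalityMap w (fun i c ↦ l i (z.2 i c)) σ y) := by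
    simp only [Filter.eventually_all]
    exact fun z hF hFT ↦ (IH z.1 z.1.isLt (h.comp hl hF hFT)
      (fun i ↦ (hl i).comp (hF i).monotone) fun i a ↦ hlw i _).eventually_generic_surjective
  obtain ⟨⟨v, y⟩, hrank, ⟨hgood, hv⟩, hsub, hy⟩ := (hrank.and
    (((tendsto_generic_of_surjective contDiff_fst Prod.fst_surjective).eventually hfst).and
      ((tendsto_generic_of_surjective contDiff_snd Prod.snd_surjective).eventually
        (hsub.and eventually_generic_isUnit_det)))).exists
  obtain ⟨φ, hφ₀, hφ⟩ := exists_ker_ne_zero_of_not_surjective hlw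
    (h r _ (fun _ ↦ strictMono_id) isTransversalPosition_id) fun hs ↦ hnot ⟨v, y, hv, hy, hs⟩
  obtain ⟨p, m, k, hp, hk, hφm, hker⟩ := exists_ker_basis hφ₀
  have hinj x (hx : m *ᵥ x = 0) : x = 0 := by
    rw [← one_mulVec x, ← hk, ← mulVec_mulVec, hx, mulVec_zero]
  choose F hF using fun i ↦ exists_isInSchubertCell (hv i) hinj
  have hFmono i : StrictMono (F i) := by
    obtain ⟨_, _, -, he, -⟩ := hF i
    exact he.strictMono
  obtain ⟨σ₀, hσ₀⟩ := hsub ⟨⟨p, hp⟩, F⟩ hFmono (hgood p F m hFmono hinj hF)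
  obtain ⟨v', hv', hs⟩ := exists_surjective_transversalityMap_of_ker hl hv
    (fun v' y' ↦ (hx₀ (v', y')).trans hrank) hφ hk hφm hker hF hσ₀
  exact hnot ⟨v', y, hv', hy, hs⟩

end HornInequalities

section SymmetricCharacterization

variable {ι : Type*} [Fintype ι] [Nonempty ι] {r n : ℕ} {I : ι → Fin r → Fin n}

lemma IsTransversalPosition.satisfiesHornInequalities (h : IsTransversalPosition I)
    (hI : ∀ i, StrictMono (I i)) : SatisfiesHornInequalities (n - r) (shape I) := by
  obtain ⟨v, y, hv, -, hs⟩ := h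
  intro p F hF hFT
  have hp : p ≤ r := by
    simpa using Fintype.card_le_of_injective _ (hF (Classical.arbitrary ι)).injective
  obtain ⟨A, hA, hAv⟩ := (hFT.hasSchubertPoint hp hF v).exists_isInSchubertVariety hv
  have hinj x (hx : A *ᵥ x = 0) : x = 0 := by
    rw [← one_mulVec x, ← hA, ← mulVec_mulVec, hx, mulVec_zero]
  choose G hG using fun i ↦ exists_isInSchubertCell (hv i) hinj
  have hle i c : G i c ≤ F i c := (hG i).le_of_isInSchubertVariety (hv i) (hF i) (hAv i) c
  choose u e _ he hAu using hG
  calc Fintype.card ι * (p * (n - r)) ≤ ∑ i, ∑ c, shape I i (G i c) + p * (n - r) :=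
        card_mul_le_sum_of_surjective
          (surjective_transversalityMap_comp (shape_monotone hI) hs he hAu)
    _ ≤ ∑ i, ∑ c, shape I i (F i c) + p * (n - r) := by
        gcongr with i _ c
        exact shape_monotone hI i (hle i c)

/-- This is the recursion which defines `HornT`. -/
theorem isTransversalPosition_iff (hI : ∀ i, StrictMono (I i))
    (hsum : ∑ i, ∑ a, shape I i a + r * (n - r) = Fintype.card ι * (r * (n - r))) :
    IsTransversalPosition I ↔ ∀ p, 0 < p → p < r → ∀ F : ι → Fin p → Fin r,
      (∀ i, StrictMono (F i)) → IsTransversalPosition F →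
        ∑ i, ∑ a, shape F i a + p * (r - p) = Fintype.card ι * (p * (r - p)) →
          Fintype.card ι * (p * (n - r)) ≤ ∑ i, ∑ c, shape I i (F i c) + p * (n - r) := by
  refine ⟨fun h p _ _ F hF hFT _ ↦ h.satisfiesHornInequalities hI p F hF hFT, fun h ↦ ?_⟩
  refine SatisfiesHornInequalities.isTransversal (fun p F hF hFT ↦ ?_) (shape_monotone hI)
    (shape_le hI)
  obtain ⟨G, hGT, hG, hle, hGsum⟩ := hFT.exists_le_sum_shape_eq hF
  have hp : p ≤ r := by
    simpa using Fintype.card_le_of_injective _ (hF (Classical.arbitrary ι)).injective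
  refine le_trans ?_ (Nat.add_le_add_right (Finset.sum_le_sum fun i _ ↦ Finset.sum_le_sum
    fun c _ ↦ shape_monotone hI i (hle i c)) _)
  rcases p.eq_zero_or_pos with rfl | hp₀
  · simp
  rcases hp.lt_or_eq with hpr | rfl
  · exact h p hp₀ hpr G hG hGT hGsum
  · rw [← hsum]
    gcongr with i _ c
    exact shape_monotone hI i (Fin.le_def.mpr (val_le_of_strictMono (hG i) c))

end SymmetricCharacterization

/-! ### Eigenvalue inequalities -/

section EigenvalueInequalities

variable {ι : Type*} [Fintype ι] {r n : ℕ}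

lemma sum_comp_le_re_trace {z : Fin n → ℝ} (hz : Antitone z) {I : Fin r → Fin n}
    {e : Matrix (Fin n) (Fin r) ℂ} (he : eᴴ * e = 1) (hI : IsStaircase I e) :
    ∑ c, z (I c) ≤ (eᴴ * diagonal (fun a ↦ (z a : ℂ)) * e).trace.re := by
  rw [Matrix.trace, Complex.re_sum]
  refine Finset.sum_le_sum fun c _ ↦ ?_
  have hnorm : ∑ a, Complex.normSq (e a c) = 1 := by
    simpa [Matrix.mul_apply, Complex.normSq_apply] using
      congrArg Complex.re (congrFun₂ he c c)
  have hdiag : ((eᴴ * diagonal (fun a ↦ (z a : ℂ)) * e).diag c).re =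
      ∑ a, z a * Complex.normSq (e a c) := by
    rw [diag_apply, Matrix.mul_apply, Complex.re_sum]
    refine Finset.sum_congr rfl fun a _ ↦ ?_
    simp only [mul_diagonal, conjTranspose_apply, Complex.normSq_apply]
    simp
    ring
  rw [hdiag]
  calc z (I c) = ∑ a, z (I c) * Complex.normSq (e a c) := by rw [← Finset.mul_sum, hnorm, mul_one]
    _ ≤ ∑ a, z a * Complex.normSq (e a c) := Finset.sum_le_sum fun a _ ↦ ?_
  rcases lt_or_ge (I c) a with h | h
  · simp [hI a c h]
  · exact mul_le_mul_of_nonneg_right (hz h) (Complex.normSq_nonneg _)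

lemma adjugate_eq_det_smul_conjTranspose {m R : Type*} [Fintype m] [DecidableEq m] [CommRing R]
    [StarRing R] {v : Matrix m m R} (hv : vᴴ * v = 1) : v.adjugate = v.det • vᴴ := by
  rw [← Matrix.mul_one v.adjugate, ← mul_eq_one_comm.mp hv, ← Matrix.mul_assoc, adjugate_mul,
    smul_mul, Matrix.one_mul]

lemma trace_conjTranspose_mul_mul_of_unitary {m R : Type*} [Fintype m] [DecidableEq m] [CommRing R]
    [StarRing R] {t : Matrix m m R} (ht : tᴴ * t = 1) (M : Matrix m m R) :
    (tᴴ * M * t).trace = M.trace := by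
  rw [trace_mul_cycle, mul_eq_one_comm.mp ht, Matrix.one_mul]

theorem HasSchubertPoint.sum_comp_le_zero {v : ι → Matrix (Fin n) (Fin n) ℂ}
    {I : ι → Fin r → Fin n} (h : HasSchubertPoint v I) (hv : ∀ i, (v i)ᴴ * v i = 1)
    {z : ι → Fin n → ℝ} (hz : ∀ i, Antitone (z i))
    (hsum : ∑ i, v i * diagonal (fun a ↦ (z i a : ℂ)) * (v i)ᴴ = 0) :
    ∑ i, ∑ c, z i (I i c) ≤ 0 := by
  obtain ⟨q, t, hq, ht⟩ := h
  have hle i : ∑ c, z i (I i c) ≤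
      (qᴴ * (v i * diagonal (fun a ↦ (z i a : ℂ)) * (v i)ᴴ) * q).trace.re := by
    have hstair : IsStaircase (I i) ((v i)ᴴ * q * t i) := by
      intro a c hac
      have hdet : (v i).det ≠ 0 := (isUnit_det_of_left_inverse (hv i)).ne_zero
      have hzero := (ht i).2 a c hac
      rw [adjugate_eq_det_smul_conjTranspose (hv i), smul_mul, smul_mul] at hzero
      exact (mul_eq_zero.mp hzero).resolve_left hdet
    have horth : ((v i)ᴴ * q * t i)ᴴ * ((v i)ᴴ * q * t i) = 1 := by
      have hvq : ((v i)ᴴ * q)ᴴ * ((v i)ᴴ * q) = 1 := by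
        rw [conjTranspose_mul, conjTranspose_conjTranspose, Matrix.mul_assoc,
          ← Matrix.mul_assoc (v i), mul_eq_one_comm.mp (hv i), Matrix.one_mul, hq]
      rw [conjTranspose_mul, Matrix.mul_assoc, ← Matrix.mul_assoc _ _ (t i), hvq, Matrix.one_mul,
        (ht i).1]
    refine (sum_comp_le_re_trace (hz i) horth hstair).trans_eq (congrArg _ ?_)
    rw [← trace_conjTranspose_mul_mul_of_unitary (ht i).1
      (qᴴ * (v i * diagonal (fun a ↦ (z i a : ℂ)) * (v i)ᴴ) * q)]
    simp only [conjTranspose_mul, conjTranspose_conjTranspose, Matrix.mul_assoc]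
  calc ∑ i, ∑ c, z i (I i c)
      ≤ ∑ i, (qᴴ * (v i * diagonal (fun a ↦ (z i a : ℂ)) * (v i)ᴴ) * q).trace.re :=
        Finset.sum_le_sum fun i _ ↦ hle i
    _ = 0 := by
        rw [← Complex.re_sum, ← trace_sum, ← Matrix.sum_mul, ← Matrix.mul_sum, hsum]
        simp

end EigenvalueInequalities

/-! ### The Kempf–Ness function -/

section LeadingMinor

variable {n : ℕ}

/-- The minor on the first `a` rows and columns. -/
def leadingMinor {R : Type*} [CommRing R] (M : Matrix (Fin n) (Fin n) R) (a : ℕ) : R :=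
  (M.toBlock (fun i ↦ (i : ℕ) < a) (fun i ↦ (i : ℕ) < a)).det

section CommRing

variable {R : Type*} [CommRing R]

lemma leadingMinor_one (a : ℕ) : leadingMinor (1 : Matrix (Fin n) (Fin n) R) a = 1 := by
  rw [leadingMinor, toBlock_one_self, det_one]

lemma leadingMinor_mul (M : Matrix (Fin n) (Fin n) R) {t : Matrix (Fin n) (Fin n) R}
    (ht : t.IsUpperTriangular) (a : ℕ) :
    leadingMinor (M * t) a = leadingMinor M a * leadingMinor t a := by
  have hzero : t.toBlock (fun i ↦ ¬ (i : ℕ) < a) (fun i ↦ (i : ℕ) < a) = 0 := by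
    ext i j
    exact ht (Fin.lt_def.mpr (j.2.trans_le (not_lt.mp i.2)))
  rw [leadingMinor, toBlock_mul_eq_add (q := fun i : Fin n ↦ (i : ℕ) < a), hzero, Matrix.mul_zero,
    add_zero, det_mul, leadingMinor, leadingMinor]

variable [StarRing R]

lemma leadingMinor_conjTranspose (M : Matrix (Fin n) (Fin n) R) (a : ℕ) :
    leadingMinor Mᴴ a = star (leadingMinor M a) :=
  det_conjTranspose _

lemma leadingMinor_conjTranspose_mul_mul (M : Matrix (Fin n) (Fin n) R)
    {t : Matrix (Fin n) (Fin n) R} (ht : t.IsUpperTriangular) (a : ℕ) :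
    leadingMinor (tᴴ * M * t) a =
      leadingMinor M a * (star (leadingMinor t a) * leadingMinor t a) := by
  have hstar : leadingMinor (tᴴ * M) a = leadingMinor M a * star (leadingMinor t a) := by
    rw [← conjTranspose_conjTranspose (tᴴ * M), leadingMinor_conjTranspose, conjTranspose_mul,
      conjTranspose_conjTranspose, leadingMinor_mul _ ht, star_mul', leadingMinor_conjTranspose,
      star_star]
  rw [leadingMinor_mul _ ht, hstar, mul_assoc]

end CommRing

lemma re_leadingMinor_conjTranspose_mul_mul (M : Matrix (Fin n) (Fin n) ℂ)
    {t : Matrix (Fin n) (Fin n) ℂ} (ht : t.IsUpperTriangular) (a : ℕ) :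
    (leadingMinor (tᴴ * M * t) a).re =
      (leadingMinor M a).re * Complex.normSq (leadingMinor t a) := by
  rw [leadingMinor_conjTranspose_mul_mul M ht, Complex.star_def, ← Complex.normSq_eq_conj_mul_self,
    Complex.re_mul_ofReal]

open scoped ComplexOrder in
lemma re_leadingMinor_pos {M : Matrix (Fin n) (Fin n) ℂ} (hM : M.PosDef) (a : ℕ) :
    0 < (leadingMinor M a).re :=
  (Complex.lt_def.mp (hM.submatrix Subtype.val_injective).det_pos).1

lemma leadingMinor_ne_zero {t : Matrix (Fin n) (Fin n) ℂ} (ht : t.IsUpperTriangular)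
    (htu : IsUnit t.det) (a : ℕ) : leadingMinor t a ≠ 0 := by
  have := leadingMinor_mul t⁻¹ ht a
  rw [nonsing_inv_mul _ htu, leadingMinor_one] at this
  exact right_ne_zero_of_mul_eq_one this.symm

lemma hasDerivAt_det_one_add_smul {m 𝕜 : Type*} [Fintype m] [DecidableEq m]
    [NontriviallyNormedField 𝕜] (M : Matrix m m 𝕜) :
    HasDerivAt (fun s : 𝕜 ↦ (1 + s • M).det) M.trace 0 := by
  refine HasDerivAt.congr_deriv (((hasDerivAt_id (0 : 𝕜)).const_mul M.trace |>.const_add 1).add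
    ((Polynomial.hasDerivAt _ _).mul (hasDerivAt_pow 2 0)) |>.congr_of_eventuallyEq
      (.of_forall fun s ↦ det_one_add_smul s M)) ?_
  simp

lemma hasDerivAt_log_leadingMinor (M : Matrix (Fin n) (Fin n) ℂ) (a : ℕ) :
    HasDerivAt (fun s : ℝ ↦ Real.log (leadingMinor (1 + (s : ℂ) • M) a).re)
      (M.toBlock (fun i ↦ (i : ℕ) < a) (fun i ↦ (i : ℕ) < a)).trace.re 0 := by
  let B := M.toBlock (fun i ↦ (i : ℕ) < a) (fun i ↦ (i : ℕ) < a)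
  have hminor (s : ℂ) : leadingMinor (1 + s • M) a = (1 + s • B).det := by
    rw [leadingMinor, ← toBlock_one_self]
    rfl
  simp only [hminor]
  have h := (hasDerivAt_det_one_add_smul B).real_of_complex (z := 0)
  simpa using h.log (by simp)

lemma trace_toBlock {m R : Type*} [Fintype m] [AddCommMonoid R] (M : Matrix m m R) (p : m → Prop)
    [DecidablePred p] : (M.toBlock p p).trace = ∑ i with p i, M i i :=
  (Finset.sum_subtype _ (by simp) fun i ↦ M i i).symm

lemma filter_val_lt_add_one (b : Fin n) : Finset.univ.filter (fun i : Fin n ↦ (i : ℕ) < b + 1) =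
    insert b (Finset.univ.filter fun i : Fin n ↦ (i : ℕ) < b) := by
  ext i
  simp only [Finset.mem_filter_univ, Finset.mem_insert, Fin.ext_iff]
  lia

lemma trace_toBlock_add_one (M : Matrix (Fin n) (Fin n) ℂ) (b : Fin n) :
    (M.toBlock (fun i ↦ (i : ℕ) < b + 1) (fun i ↦ (i : ℕ) < b + 1)).trace =
      (M.toBlock (fun i ↦ (i : ℕ) < b) (fun i ↦ (i : ℕ) < b)).trace + M b b := by
  rw [trace_toBlock, trace_toBlock, filter_val_lt_add_one, Finset.sum_insert (by simp), add_comm]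

/-- The pairing of the weight `z` with the logarithms of the successive quotients of leading
minors. On `tᴴ * t` with `t` upper triangular it is `∑ b, z b * log ‖t b b‖ ^ 2`. -/
noncomputable def logMinorPairing (z : Fin n → ℝ) (M : Matrix (Fin n) (Fin n) ℂ) : ℝ :=
  ∑ b : Fin n, z b * (Real.log (leadingMinor M (b + 1)).re - Real.log (leadingMinor M b).re)

lemma logMinorPairing_one (z : Fin n → ℝ) : logMinorPairing z 1 = 0 := by
  simp [logMinorPairing, leadingMinor_one]

open scoped ComplexOrder in
lemma logMinorPairing_conjTranspose_mul_mul (z : Fin n → ℝ) {M t : Matrix (Fin n) (Fin n) ℂ}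
    (hM : M.PosDef) (ht : t.IsUpperTriangular) (htu : IsUnit t.det) :
    logMinorPairing z (tᴴ * M * t) = logMinorPairing z M + logMinorPairing z (tᴴ * t) := by
  have hlog a : Real.log (leadingMinor (tᴴ * M * t) a).re =
      Real.log (leadingMinor M a).re + Real.log (leadingMinor (tᴴ * t) a).re := by
    have htt := re_leadingMinor_conjTranspose_mul_mul 1 ht a
    rw [Matrix.mul_one, leadingMinor_one, Complex.one_re, one_mul] at htt
    rw [re_leadingMinor_conjTranspose_mul_mul M ht, htt, Real.log_mul (re_leadingMinor_pos hM a).ne'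
      (Complex.normSq_pos.mpr (leadingMinor_ne_zero ht htu a)).ne']
  simp only [logMinorPairing, hlog, ← Finset.sum_add_distrib]
  exact Finset.sum_congr rfl fun b _ ↦ by ring

lemma hasDerivAt_logMinorPairing (z : Fin n → ℝ) (M : Matrix (Fin n) (Fin n) ℂ) :
    HasDerivAt (fun s : ℝ ↦ logMinorPairing z (1 + (s : ℂ) • M)) (∑ b, z b * (M b b).re) 0 := by
  refine HasDerivAt.fun_sum fun b _ ↦ ?_
  have h := ((hasDerivAt_log_leadingMinor M (b + 1)).sub
    (hasDerivAt_log_leadingMinor M b)).const_mul (z b)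
  rw [trace_toBlock_add_one, Complex.add_re, add_sub_cancel_left] at h
  exact h

end LeadingMinor

section KempfNess

open scoped ComplexOrder

lemma exists_unitary_one_add_smul_eq {m 𝕜 : Type*} [Fintype m] [DecidableEq m] [RCLike 𝕜]
    {M : Matrix m m 𝕜} (hM : M.IsHermitian) :
    ∃ U : Matrix m m 𝕜, star U * U = 1 ∧ ∀ s : ℝ, 1 + (s : 𝕜) • M =
      U * diagonal (fun i ↦ ((1 + s * hM.eigenvalues i : ℝ) : 𝕜)) * star U := by
  have hU : (hM.eigenvectorUnitary : Matrix m m 𝕜) * star (hM.eigenvectorUnitary : Matrix m m 𝕜) =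
      1 := Unitary.mul_star_self_of_mem hM.eigenvectorUnitary.2
  refine ⟨hM.eigenvectorUnitary, mul_eq_one_comm.mp hU, fun s ↦ ?_⟩
  have hdiag : (diagonal (fun i ↦ ((1 + s * hM.eigenvalues i : ℝ) : 𝕜)) : Matrix m m 𝕜) =
      1 + (s : 𝕜) • diagonal (RCLike.ofReal ∘ hM.eigenvalues) := by
    rw [← diagonal_one, ← diagonal_smul, diagonal_add]
    congr 1
    ext i
    simp
  conv_lhs => rw [hM.spectral_theorem, Unitary.conjStarAlgAut_apply]
  rw [hdiag, Matrix.mul_add, Matrix.add_mul, Matrix.mul_one, hU, Matrix.mul_smul, smul_mul]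

variable {ι : Type*} [Fintype ι] {n : ℕ}

lemma eventually_posDef_one_add_smul {m 𝕜 : Type*} [Finite m] [DecidableEq m] [RCLike 𝕜]
    {M : Matrix m m 𝕜} (hM : M.IsHermitian) :
    ∀ᶠ s : ℝ in nhds 0, (1 + (s : 𝕜) • M).PosDef := by
  cases nonempty_fintype m
  obtain ⟨U, hU, hMU⟩ := exists_unitary_one_add_smul_eq hM
  have hpos : ∀ᶠ s : ℝ in nhds 0, ∀ i, 0 < 1 + s * hM.eigenvalues i := by
    refine Filter.eventually_all.mpr fun i ↦
      ContinuousAt.eventually_lt (by fun_prop) (by fun_prop) ?_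
    simp
  filter_upwards [hpos] with s hs
  rw [hMU, Matrix.IsUnit.posDef_star_right_conjugate_iff (IsUnit.of_mul_eq_one_right _ hU),
    posDef_diagonal_iff]
  exact fun i ↦ RCLike.ofReal_pos.mpr (hs i)

lemma isHermitian_sum_mul_diagonal_mul_conjTranspose (q : ι → Matrix (Fin n) (Fin n) ℂ)
    (z : ι → Fin n → ℝ) :
    (∑ i, q i * diagonal (fun a ↦ (z i a : ℂ)) * (q i)ᴴ).IsHermitian :=
  isSelfAdjoint_sum _ fun i _ ↦ isHermitian_mul_mul_conjTranspose (q i) <|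
    isHermitian_diagonal_iff.mpr fun _ ↦ Complex.conj_ofReal _

lemma re_trace_sum_mul_eq (q : ι → Matrix (Fin n) (Fin n) ℂ) (z : ι → Fin n → ℝ)
    (M : Matrix (Fin n) (Fin n) ℂ) :
    ((∑ i, q i * diagonal (fun a ↦ (z i a : ℂ)) * (q i)ᴴ) * M).trace.re =
      ∑ i, ∑ b, z i b * (((q i)ᴴ * M * q i) b b).re := by
  rw [Finset.sum_mul, trace_sum, Complex.re_sum]
  refine Finset.sum_congr rfl fun i _ ↦ ?_
  rw [Matrix.mul_assoc, Matrix.mul_assoc, trace_mul_comm, Matrix.mul_assoc, Matrix.trace,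
    Complex.re_sum]
  exact Finset.sum_congr rfl fun b _ ↦ by rw [diag_apply, diagonal_mul, Complex.re_ofReal_mul]

/-- A Kempf–Ness criterion: at a minimum of the functional, its derivative in the direction of the
moment map `μ`, which is `‖μ‖ ^ 2`, vanishes. -/
theorem sum_mul_diagonal_mul_conjTranspose_eq_zero {q : ι → Matrix (Fin n) (Fin n) ℂ}
    (hq : ∀ i, (q i)ᴴ * q i = 1) {z : ι → Fin n → ℝ}
    (hmin : ∀ M : Matrix (Fin n) (Fin n) ℂ, M.PosDef →
      0 ≤ ∑ i, logMinorPairing (z i) ((q i)ᴴ * M * q i)) :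
    ∑ i, q i * diagonal (fun a ↦ (z i a : ℂ)) * (q i)ᴴ = 0 := by
  set μ := ∑ i, q i * diagonal (fun a ↦ (z i a : ℂ)) * (q i)ᴴ with hμ
  have hherm : μ.IsHermitian := isHermitian_sum_mul_diagonal_mul_conjTranspose q z
  have hderiv := HasDerivAt.fun_sum (u := Finset.univ) fun i _ ↦
    hasDerivAt_logMinorPairing (z i) ((q i)ᴴ * μ * q i)
  have hlocal : IsLocalMin
      (fun s : ℝ ↦ ∑ i, logMinorPairing (z i) (1 + (s : ℂ) • ((q i)ᴴ * μ * q i))) 0 := by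
    filter_upwards [eventually_posDef_one_add_smul (𝕜 := ℂ) hherm] with s hs
    have hconj i : (q i)ᴴ * (1 + (s : ℂ) • μ) * q i = 1 + (s : ℂ) • ((q i)ᴴ * μ * q i) := by
      rw [Matrix.mul_add, Matrix.add_mul, Matrix.mul_one, hq, Matrix.mul_smul, smul_mul]
    have := hmin _ hs
    simp only [RCLike.ofReal_eq_complex_ofReal, hconj] at this
    simpa [logMinorPairing_one] using this
  have hre : (μᴴ * μ).trace.re = 0 := by
    rw [hherm.eq, hμ, re_trace_sum_mul_eq, ← hμ, hlocal.hasDerivAt_eq_zero hderiv]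
  refine trace_conjTranspose_mul_self_eq_zero_iff.mp (Complex.ext hre ?_)
  exact (Complex.le_def.mp (posSemidef_conjTranspose_mul_self μ).trace_nonneg).2.symm

end KempfNess

section Bruhat

variable {m n K : Type*} [LinearOrder n]

/-- The last nonzero entries of the columns of `e` lie in distinct rows, that of column `c` in row
`π c`: up to a permutation of its columns, `e` is triangular. This is the form to which the Bruhat
decomposition brings an invertible matrix. -/
structure IsPermutedEchelon {n K : Type*} [LT n] [Zero K] (π : Equiv.Perm n) (e : Matrix n n K) :
    Prop where
  isStaircase : IsStaircase π e
  pivot_ne_zero (c : n) : e (π c) c ≠ 0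

lemma IsPermutedEchelon.det_submatrix_ne_zero [CommRing K] [IsDomain K] {π : Equiv.Perm n}
    {e : Matrix n n K} (h : IsPermutedEchelon π e) [Fintype m] [DecidableEq m] {s : m → n}
    (hs : Function.Injective s) : (e.submatrix (π ∘ s) s).det ≠ 0 := by
  let _ : LinearOrder m := LinearOrder.lift' (π ∘ s) (π.injective.comp hs)
  have htri : (e.submatrix (π ∘ s) s).IsUpperTriangular := fun i c hci ↦ h.isStaircase _ _ hci
  convert_to ((e.submatrix (π ∘ s) s)).det ≠ 0
  rw [det_of_isUpperTriangular htri]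
  exact Finset.prod_ne_zero_iff.mpr fun c _ ↦ h.pivot_ne_zero (s c)

lemma exists_isPermutedEchelon_mul [Fintype n] [Field K] {B : Matrix n n K}
    (hB : ∀ x, B *ᵥ x = 0 → x = 0) : ∃ (π : Equiv.Perm n) (U : Matrix n n K),
      U.IsUpperTriangular ∧ (∀ a, U a a = 1) ∧ IsPermutedEchelon π (B * U) := by
  let P (a p : n) := ∃ c : n → K, c a = 1 ∧ (∀ b, a < b → c b = 0) ∧
    (B *ᵥ c) p ≠ 0 ∧ ∀ p', p < p' → (B *ᵥ c) p' = 0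
  have hP a : ∃ p, P a p := by
    have hne : B *ᵥ Pi.single a 1 ≠ 0 := fun h ↦ by simpa using congrFun (hB _ h) a
    obtain ⟨p, hp, hp'⟩ := exists_last_ne_zero hne
    exact ⟨p, Pi.single a 1, by simp, fun b hb ↦ by simp [hb.ne'], hp, hp'⟩
  choose π hπ using fun a ↦ (Set.toFinite {p | P a p}).exists_minimal (hP a)
  choose c hca hcb hcπ hcp using fun a ↦ (hπ a).1
  have hne a a' (ha : a < a') : π a ≠ π a' := by
    intro h
    let x := c a' - ((B *ᵥ c a') (π a') / (B *ᵥ c a) (π a)) • c a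
    have hxa : x a' = 1 := by simp [x, hca, hcb a a' ha]
    obtain ⟨p, hp, hp'⟩ := exists_last_ne_zero fun h ↦ by simpa [hxa] using congrFun (hB x h) a'
    have hle : p < π a' := by
      refine lt_of_not_ge fun hge ↦ hp ?_
      rcases hge.eq_or_lt with rfl | hlt
      · simp [x, mulVec_sub, mulVec_smul, h, div_mul_cancel₀ _ (h ▸ hcπ a)]
      · simp [x, mulVec_sub, mulVec_smul, hcp a p (h ▸ hlt), hcp a' p hlt]
    have hxb b (hb : a' < b) : x b = 0 := by simp [x, hcb a' b hb, hcb a b (ha.trans hb)]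
    exact hle.not_ge ((hπ a').2 ⟨x, hxa, hxb, hp, hp'⟩ hle.le)
  have hinj : Function.Injective π := fun a a' h ↦ by
    by_contra hne'
    rcases lt_or_gt_of_ne hne' with ha | ha
    exacts [hne _ _ ha h, hne _ _ ha h.symm]
  exact ⟨Equiv.ofBijective π (Finite.injective_iff_bijective.mp hinj), of fun i a ↦ c a i,
    fun i j hij ↦ hcb j i hij, hca, ⟨fun i a ha ↦ hcp _ _ ha, hcπ⟩⟩

end Bruhat

section DeterminantMonotonicity

open scoped ComplexOrder MatrixOrder

variable {m 𝕜 : Type*} [Fintype m] [DecidableEq m] [RCLike 𝕜]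

lemma one_le_det_one_add {R : Matrix m m 𝕜} (hR : R.PosSemidef) : 1 ≤ (1 + R).det := by
  obtain ⟨U, hU, hRU⟩ := exists_unitary_one_add_smul_eq hR.1
  have hdet : (1 + R).det = ((∏ i, (1 + hR.1.eigenvalues i) : ℝ) : 𝕜) := by
    have h := hRU 1
    simp only [RCLike.ofReal_one, one_smul, one_mul] at h
    rw [h, ← inv_eq_left_inv hU, det_conj (IsUnit.of_mul_eq_one_right _ hU), det_diagonal,
      RCLike.ofReal_prod]
  rw [hdet, ← RCLike.ofReal_one, RCLike.ofReal_le_ofReal]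
  exact Finset.one_le_prod fun i _ ↦ by linarith [hR.eigenvalues_nonneg i]

lemma det_le_det_add {A R : Matrix m m 𝕜} (hA : A.PosSemidef) (hR : R.PosSemidef) :
    A.det ≤ (A + R).det := by
  obtain ⟨B, rfl⟩ := CStarAlgebra.nonneg_iff_eq_star_mul_self.mp hA.nonneg
  by_cases hB : IsUnit B.det
  · have hfactor : Bᴴ * B + R = Bᴴ * (1 + (B⁻¹)ᴴ * R * B⁻¹) * B := by
      have hBB : Bᴴ * (B⁻¹)ᴴ = 1 := by
        rw [← conjTranspose_mul, nonsing_inv_mul _ hB, conjTranspose_one]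
      rw [Matrix.mul_add, Matrix.add_mul, Matrix.mul_one, Matrix.mul_assoc, Matrix.mul_assoc,
        Matrix.mul_assoc, nonsing_inv_mul _ hB, Matrix.mul_one, ← Matrix.mul_assoc, hBB,
        Matrix.one_mul]
    calc (Bᴴ * B).det = (Bᴴ * B).det * 1 := (mul_one _).symm
      _ ≤ (Bᴴ * B).det * (1 + (B⁻¹)ᴴ * R * B⁻¹).det :=
        mul_le_mul_of_nonneg_left (one_le_det_one_add (hR.conjTranspose_mul_mul_same _))
          hA.det_nonneg
      _ = (Bᴴ * B + R).det := by
        rw [hfactor, det_mul_right_comm, det_mul, det_mul, det_mul]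
  · rw [det_mul, isUnit_iff_ne_zero.not_left.mp hB, mul_zero]
    exact (hA.add hR).det_nonneg

end DeterminantMonotonicity

section LowerBound

open scoped ComplexOrder

variable {n : ℕ}

lemma leadingMinor_diagonal {R : Type*} [CommRing R] (d : Fin n → R) (a : ℕ) :
    leadingMinor (diagonal d) a = ∏ b with b.val < a, d b := by
  rw [leadingMinor, toBlock_diagonal_self, det_diagonal]
  exact (Finset.prod_subtype _ (by simp) d).symm

lemma leadingMinor_zero {R : Type*} [CommRing R] (M : Matrix (Fin n) (Fin n) R) :
    leadingMinor M 0 = 1 := by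
  have : IsEmpty {i : Fin n // (i : ℕ) < 0} := ⟨fun i ↦ Nat.not_lt_zero _ i.2⟩
  exact det_isEmpty

lemma leadingMinor_self {R : Type*} [CommRing R] (M : Matrix (Fin n) (Fin n) R) :
    leadingMinor M n = M.det :=
  det_submatrix_equiv_self (Equiv.subtypeUnivEquiv fun i : Fin n ↦ i.2) M

lemma sum_mul_sub_eq (z : Fin (n + 1) → ℝ) (L : ℕ → ℝ) :
    ∑ b, z b * (L (b + 1) - L b) = z (Fin.last n) * L (n + 1) - z 0 * L 0 +
      ∑ j : Fin n, (z j.castSucc - z j.succ) * L (j + 1) := by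
  simp only [mul_sub, sub_mul, Finset.sum_sub_distrib]
  rw [Fin.sum_univ_castSucc, Fin.sum_univ_succ fun b ↦ z b * L b]
  simp only [Fin.val_last, Fin.val_castSucc, Fin.val_succ, Fin.val_zero]
  ring

lemma sum_mul_sub_le_sum_mul_sub {z : Fin n → ℝ} (hz : Antitone z) {L N : ℕ → ℝ} (hzero : N 0 = L 0)
    (hle : ∀ a ≤ n, N a ≤ L a) (hlast : N n = L n) :
    ∑ b, z b * (N (b + 1) - N b) ≤ ∑ b, z b * (L (b + 1) - L b) := by
  cases n with
  | zero => simp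
  | succ n =>
    rw [sum_mul_sub_eq, sum_mul_sub_eq, hzero, hlast]
    gcongr with j
    · exact sub_nonneg.mpr (hz (Fin.castSucc_le_succ j))
    · exact hle _ (by lia)

lemma logMinorPairing_diagonal (z : Fin n → ℝ) {d : Fin n → ℝ} (hd : ∀ b, 0 < d b) :
    logMinorPairing z (diagonal fun b ↦ (d b : ℂ)) = ∑ b, z b * Real.log (d b) := by
  refine Finset.sum_congr rfl fun b _ ↦ ?_
  have hlog (a : ℕ) : Real.log (leadingMinor (diagonal fun b ↦ (d b : ℂ)) a).re =
      ∑ b with b.val < a, Real.log (d b) := by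
    rw [leadingMinor_diagonal, ← Complex.ofReal_prod, Complex.ofReal_re,
      Real.log_prod fun b _ ↦ (hd b).ne']
  rw [hlog, hlog, filter_val_lt_add_one, Finset.sum_insert (by simp), add_sub_cancel_right]

lemma toBlock_conjTranspose_mul_diagonal_mul {m R : Type*} [Fintype m] [DecidableEq m] [CommRing R]
    [StarRing R] (B : Matrix m m R) (d : m → R) (p : m → Prop) [DecidablePred p] :
    (Bᴴ * diagonal d * B).toBlock p p =
      (B.toBlock p p)ᴴ * diagonal (fun i : {i // p i} ↦ d i) * B.toBlock p p +
        (B.toBlock (fun i ↦ ¬ p i) p)ᴴ * diagonal (fun i : {i // ¬ p i} ↦ d i) *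
          B.toBlock (fun i ↦ ¬ p i) p := by
  have hdisj : Disjoint p fun i ↦ ¬ p i :=
    Pi.disjoint_iff.mpr fun i ↦ by simp
  rw [toBlock_mul_eq_add p p p, toBlock_mul_eq_add p p p, toBlock_mul_eq_add p p fun i ↦ ¬ p i,
    toBlock_diagonal_self, toBlock_diagonal_self, toBlock_diagonal_disjoint d hdisj,
    toBlock_diagonal_disjoint d hdisj.symm, Matrix.mul_zero, Matrix.mul_zero, add_zero, zero_add]
  rfl

lemma re_det_conjTranspose_mul_mul {m : Type*} [Fintype m] [DecidableEq m] (B D : Matrix m m ℂ) :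
    (Bᴴ * D * B).det.re = Complex.normSq B.det * D.det.re := by
  rw [det_mul, det_mul, det_conjTranspose, mul_right_comm, Complex.star_def,
    ← Complex.normSq_eq_conj_mul_self, Complex.re_ofReal_mul]

/-- Of the Cauchy–Binet expansion of a leading minor, this keeps the term of the first rows. -/
lemma normSq_leadingMinor_mul_le (B : Matrix (Fin n) (Fin n) ℂ) {d : Fin n → ℝ}
    (hd : ∀ b, 0 ≤ d b) (a : ℕ) :
    Complex.normSq (leadingMinor B a) * (leadingMinor (diagonal fun b ↦ (d b : ℂ)) a).re ≤
      (leadingMinor (Bᴴ * diagonal (fun b ↦ (d b : ℂ)) * B) a).re := by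
  rw [leadingMinor, leadingMinor, ← re_det_conjTranspose_mul_mul, leadingMinor,
    toBlock_conjTranspose_mul_diagonal_mul, toBlock_diagonal_self]
  have hdiag {p : Fin n → Prop} : (diagonal fun b : {b // p b} ↦ (d b : ℂ)).PosSemidef :=
    .diagonal fun b ↦ Complex.zero_le_real.mpr (hd b)
  exact (Complex.le_def.mp (det_le_det_add (hdiag.conjTranspose_mul_mul_same _)
    (hdiag.conjTranspose_mul_mul_same _))).1

lemma sum_log_le_logMinorPairing {z : Fin n → ℝ} (hz : Antitone z) {B : Matrix (Fin n) (Fin n) ℂ}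
    (hB : ∀ a ≤ n, leadingMinor B a ≠ 0) {d : Fin n → ℝ} (hd : ∀ b, 0 < d b) :
    ∑ b : Fin n, z b * (Real.log (Complex.normSq (leadingMinor B (b + 1))) -
      Real.log (Complex.normSq (leadingMinor B b))) + ∑ b, z b * Real.log (d b) ≤
      logMinorPairing z (Bᴴ * diagonal (fun b ↦ (d b : ℂ)) * B) := by
  let D : Matrix (Fin n) (Fin n) ℂ := diagonal fun b ↦ (d b : ℂ)
  have hD : D.PosDef := .diagonal fun b ↦ Complex.zero_lt_real.mpr (hd b)
  have hlog a (ha : a ≤ n) : Real.log (Complex.normSq (leadingMinor B a) * (leadingMinor D a).re) =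
      Real.log (Complex.normSq (leadingMinor B a)) + Real.log (leadingMinor D a).re :=
    Real.log_mul (Complex.normSq_pos.mpr (hB a ha)).ne' (re_leadingMinor_pos hD a).ne'
  have key := sum_mul_sub_le_sum_mul_sub hz
    (N := fun a ↦ Real.log (Complex.normSq (leadingMinor B a)))
    (L := fun a ↦ Real.log (leadingMinor (Bᴴ * D * B) a).re - Real.log (leadingMinor D a).re)
    (by simp [leadingMinor_zero]) (fun a ha ↦ ?_) ?_
  · rw [← logMinorPairing_diagonal z hd, logMinorPairing, logMinorPairing]
    refine (add_le_add_left key _).trans_eq ?_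
    rw [← Finset.sum_add_distrib]
    exact Finset.sum_congr rfl fun b _ ↦ by ring
  · rw [le_sub_iff_add_le, ← hlog a ha]
    exact Real.log_le_log (mul_pos (Complex.normSq_pos.mpr (hB a ha)) (re_leadingMinor_pos hD a))
      (normSq_leadingMinor_mul_le B (fun b ↦ (hd b).le) a)
  · rw [eq_sub_iff_add_eq, ← hlog n le_rfl]
    simp only [leadingMinor_self, re_det_conjTranspose_mul_mul]

end LowerBound

/-! ### Semistable families of flags -/

section Semistable

variable {K ι : Type*} [Field K] {n : ℕ}

lemma submatrix_mul_submatrix_of_forall_notMem_range {l m m' o R : Type*} [Fintype m] [Fintype m']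
    [CommRing R] {σ : m' → m} (hσ : Function.Injective σ) (M : Matrix l m R) {N : Matrix m o R}
    (hN : ∀ p ∉ Set.range σ, ∀ c, N p c = 0) :
    M.submatrix id σ * N.submatrix σ id = M * N := by
  ext a c
  exact Fintype.sum_of_injective σ hσ _ _ (fun p hp ↦ by simp [hN p hp]) fun _ ↦ rfl

lemma IsPermutedEchelon.isInSchubertCell {π : Equiv.Perm (Fin n)}
    {k v U : Matrix (Fin n) (Fin n) K} (h : IsPermutedEchelon π (k * v * U))
    (hk : IsUnit k.det) (hU : U.IsUpperTriangular) (hdiag : ∀ a, U a a = 1) {j : ℕ} (hj : j ≤ n)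
    {I : Fin j → Fin n} (hI : StrictMono I) (hπ : ∀ c, (π (I c) : ℕ) < j) :
    IsInSchubertCell v I (k⁻¹.submatrix id (Fin.castLE hj)) := by
  let N := (k * v * U).submatrix id I
  have hzero p (hp : p ∉ Set.range (Fin.castLE hj)) (c : Fin j) : N p c = 0 := by
    refine h.isStaircase p (I c) (Fin.lt_def.mpr ((hπ c).trans_le (le_of_not_gt fun hpj ↦ ?_)))
    exact hp ⟨⟨p, hpj⟩, rfl⟩
  refine ⟨N.submatrix (Fin.castLE hj) id, U.submatrix id I, ?_,
    ⟨fun _ _ hcd ↦ hI hcd, fun a c hac ↦ hU hac, fun c ↦ ?_⟩, ?_⟩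
  · let σ : Fin j → Fin j := fun c ↦ ⟨π (I c), hπ c⟩
    have hσ : Function.Injective σ := fun c d hcd ↦
      hI.injective (π.injective (Fin.ext (Fin.mk.inj hcd)))
    have hdet : ((N.submatrix (Fin.castLE hj) id).submatrix σ id).det ≠ 0 :=
      h.det_submatrix_ne_zero hI.injective
    have hperm := det_permute (Equiv.ofBijective σ (Finite.injective_iff_bijective.mp hσ))
      (N.submatrix (Fin.castLE hj) id)
    exact isUnit_iff_ne_zero.mpr (right_ne_zero_of_mul (hperm ▸ hdet))
  · simp [hdiag]
  · rw [submatrix_mul_submatrix_of_forall_notMem_range (Fin.castLE_injective hj) _ hzero]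
    change k⁻¹ * (k * v * U).submatrix id I = v * U.submatrix id I
    rw [show (k * v * U).submatrix id I = k * (v * U.submatrix id I) by
      rw [Matrix.mul_assoc]; rfl, nonsing_inv_mul_cancel_left _ _ hk]

/-- Semistability of a family of flags with weights `z i`: a proper nonzero subspace has
nonpositive total weight, its weight for the flag `v i` being the sum of `z i` over its jumps. -/
def IsSemistable [Fintype ι] (v : ι → Matrix (Fin n) (Fin n) K) (z : ι → Fin n → ℝ) : Prop :=
  ∀ r, 0 < r → r < n → ∀ (I : ι → Fin r → Fin n) (A : Matrix (Fin n) (Fin r) K),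
    (∀ i, StrictMono (I i)) → (∀ x, A *ᵥ x = 0 → x = 0) →
    (∀ i, IsInSchubertCell (v i) (I i) A) → ∑ i, ∑ c, z i (I i c) ≤ 0

variable [Fintype ι] {v : ι → Matrix (Fin n) (Fin n) K} {z : ι → Fin n → ℝ}
  {k : Matrix (Fin n) (Fin n) K} {π : ι → Equiv.Perm (Fin n)} {U : ι → Matrix (Fin n) (Fin n) K}

lemma IsSemistable.sum_symm_le_zero (hz : IsSemistable v z) (hk : IsUnit k.det)
    (hU : ∀ i, (U i).IsUpperTriangular) (hdiag : ∀ i a, U i a a = 1)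
    (h : ∀ i, IsPermutedEchelon (π i) (k * v i * U i)) {j : ℕ} (hj : 0 < j) (hjn : j < n) :
    ∑ p with p.val < j, ∑ i, z i ((π i).symm p) ≤ 0 := by
  let S i := (Finset.univ.filter fun p : Fin n ↦ p.val < j).map (π i).symm.toEmbedding
  have hS i : (S i).card = j := by
    rw [Finset.card_map, Fin.card_filter_val_lt, min_eq_right hjn.le]
  let I i := (S i).orderEmbOfFin (hS i)
  have hIπ i c : (π i (I i c) : ℕ) < j := by
    have := (S i).orderEmbOfFin_mem (hS i) c
    simpa [S] using this
  have hA x (hx : k⁻¹.submatrix id (Fin.castLE hjn.le) *ᵥ x = 0) : x = 0 := by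
    have hleft : k.submatrix (Fin.castLE hjn.le) id * k⁻¹.submatrix id (Fin.castLE hjn.le) = 1 := by
      change (k * k⁻¹).submatrix _ _ = 1
      rw [mul_nonsing_inv _ hk, submatrix_one _ (Fin.castLE_injective hjn.le)]
    rw [← one_mulVec x, ← hleft, ← mulVec_mulVec, hx, mulVec_zero]
  rw [Finset.sum_comm]
  refine le_of_eq_of_le (Finset.sum_congr rfl fun i _ ↦ ?_) (hz j hj hjn (fun i ↦ I i) _
    (fun i ↦ (I i).strictMono) hA fun i ↦
      (h i).isInSchubertCell hk (hU i) (hdiag i) hjn.le (I i).strictMono (hIπ i))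
  calc ∑ p with p.val < j, z i ((π i).symm p) = ∑ b ∈ S i, z i b := by simp [S]
    _ = ∑ c, z i (I i c) := by
      rw [← Finset.map_orderEmbOfFin_univ (S i) (hS i), Finset.sum_map]; rfl

lemma IsSemistable.sum_mul_comp_nonneg (hz : IsSemistable v z) (hsum : ∑ i, ∑ b, z i b = 0)
    (hk : IsUnit k.det) (hU : ∀ i, (U i).IsUpperTriangular) (hdiag : ∀ i a, U i a a = 1)
    (h : ∀ i, IsPermutedEchelon (π i) (k * v i * U i)) {f : Fin n → ℝ} (hf : Monotone f) :
    0 ≤ ∑ i, ∑ b, z i b * f (π i b) := by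
  let y p := ∑ i, z i ((π i).symm p)
  let P (j : ℕ) := ∑ p with p.val < j, y p
  have hy : ∑ p, y p = 0 := by
    rw [Finset.sum_comm, ← hsum]
    exact Finset.sum_congr rfl fun i _ ↦ Equiv.sum_comp (π i).symm (z i)
  have hn : P n = 0 := by simpa [P] using hy
  have hdiff (p : Fin n) : P (p + 1) - P p = y p := by
    simp only [P]
    rw [filter_val_lt_add_one, Finset.sum_insert (by simp), add_sub_cancel_right]
  have key := sum_mul_sub_le_sum_mul_sub (z := fun p ↦ -f p) (fun _ _ hpq ↦ neg_le_neg (hf hpq))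
    (N := P) (L := fun _ ↦ 0) (by simp [P]) (fun j hj ↦ ?_) hn
  · simp only [hdiff, neg_mul, Finset.sum_neg_distrib, sub_zero, mul_zero,
      Finset.sum_const_zero, Left.neg_nonpos_iff] at key
    refine key.trans_eq ?_
    simp only [y, Finset.mul_sum]
    rw [Finset.sum_comm]
    refine Finset.sum_congr rfl fun i _ ↦ ?_
    rw [← Equiv.sum_comp (π i)]
    simp only [Equiv.symm_apply_apply, mul_comm]
  · rcases hj.eq_or_lt with rfl | hjn
    · exact hn.le
    · rcases j.eq_zero_or_pos with rfl | hj
      exacts [by simp [P], hz.sum_symm_le_zero hk hU hdiag h hj hjn]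

end Semistable

section Spectral

variable {m 𝕜 : Type*} [Fintype m] [DecidableEq m] [RCLike 𝕜]

lemma exists_unitary_eq_of_charpoly_eq {A B : Matrix m m 𝕜} (hA : A.IsHermitian)
    (hB : B.IsHermitian) (h : A.charpoly = B.charpoly) :
    ∃ U : Matrix m m 𝕜, Uᴴ * U = 1 ∧ A = U * B * Uᴴ := by
  let V : Matrix m m 𝕜 := hA.eigenvectorUnitary
  let W : Matrix m m 𝕜 := hB.eigenvectorUnitary
  have hV : Vᴴ * V = 1 := Unitary.star_mul_self_of_mem hA.eigenvectorUnitary.2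
  have hW : Wᴴ * W = 1 := Unitary.star_mul_self_of_mem hB.eigenvectorUnitary.2
  have hAV : A = V * diagonal (RCLike.ofReal ∘ hA.eigenvalues) * Vᴴ := by
    conv_lhs => rw [hA.spectral_theorem, Unitary.conjStarAlgAut_apply]
    rfl
  have hBW : B = W * diagonal (RCLike.ofReal ∘ hA.eigenvalues) * Wᴴ := by
    conv_lhs => rw [hB.spectral_theorem, Unitary.conjStarAlgAut_apply]
    rw [(IsHermitian.eigenvalues_eq_eigenvalues_iff hA hB).mpr h]
    rfl
  have cancel (X : Matrix m m 𝕜) : Wᴴ * (W * X) = X := by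
    rw [← Matrix.mul_assoc, hW, Matrix.one_mul]
  refine ⟨V * Wᴴ, ?_, ?_⟩
  · rw [conjTranspose_mul, conjTranspose_conjTranspose, Matrix.mul_assoc, ← Matrix.mul_assoc Vᴴ, hV,
      Matrix.one_mul, mul_eq_one_comm.mp hW]
  · rw [hBW]
    simp only [conjTranspose_mul, conjTranspose_conjTranspose, Matrix.mul_assoc, cancel]
    simpa only [Matrix.mul_assoc] using hAV

open scoped ComplexOrder in
lemma exists_unitary_eq_diagonal_of_posDef {n : ℕ} {M : Matrix (Fin n) (Fin n) 𝕜}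
    (hM : M.PosDef) : ∃ (k : Matrix (Fin n) (Fin n) 𝕜) (d : Fin n → ℝ), kᴴ * k = 1 ∧
      (∀ b, 0 < d b) ∧ Monotone d ∧ M = kᴴ * diagonal (fun b ↦ (d b : 𝕜)) * k := by
  let d := hM.1.eigenvalues ∘ Tuple.sort hM.1.eigenvalues
  have hD : (diagonal fun b ↦ (d b : 𝕜) : Matrix (Fin n) (Fin n) 𝕜).IsHermitian :=
    isHermitian_diagonal_of_self_adjoint _ (funext fun b ↦ RCLike.conj_ofReal _)
  obtain ⟨U, hU, hMU⟩ := exists_unitary_eq_of_charpoly_eq hM.1 hD <| by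
    rw [hM.1.charpoly_eq, charpoly_diagonal, ← Equiv.prod_comp (Tuple.sort hM.1.eigenvalues)]
    rfl
  exact ⟨Uᴴ, d, by rwa [conjTranspose_conjTranspose, mul_eq_one_comm],
    fun b ↦ hM.eigenvalues_pos _, Tuple.monotone_sort _, by rwa [conjTranspose_conjTranspose]⟩

end Spectral

section Minimization

open scoped ComplexOrder MatrixOrder
open Filter Topology

variable {ι : Type*} {n : ℕ}

lemma IsPermutedEchelon.leadingMinor_submatrix_ne_zero {K : Type*} [Field K]
    {π : Equiv.Perm (Fin n)} {B U : Matrix (Fin n) (Fin n) K} (h : IsPermutedEchelon π (B * U))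
    (hU : U.IsUpperTriangular) (a : ℕ) : leadingMinor (B.submatrix π id) a ≠ 0 := by
  have hmul := leadingMinor_mul (B.submatrix π id) hU a
  exact left_ne_zero_of_mul (hmul.symm.trans_ne (h.det_submatrix_ne_zero Subtype.val_injective))

lemma continuous_leadingMinor (a : ℕ) :
    Continuous fun M : Matrix (Fin n) (Fin n) ℂ ↦ leadingMinor M a :=
  (continuous_id.matrix_submatrix _ _).matrix_det

lemma continuousAt_logMinorPairing (z : Fin n → ℝ) {M : Matrix (Fin n) (Fin n) ℂ} (hM : M.PosDef) :
    ContinuousAt (logMinorPairing z) M := by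
  have hlog a : ContinuousAt (fun M ↦ Real.log (leadingMinor M a).re) M :=
    (Complex.continuous_re.comp (continuous_leadingMinor a)).continuousAt.log
      (re_leadingMinor_pos hM a).ne'
  exact tendsto_finsetSum _ fun b _ ↦ ((hlog _).sub (hlog _)).const_mul _

lemma sum_log_comp_le_logMinorPairing {z : Fin n → ℝ} (hz : Antitone z) (π : Equiv.Perm (Fin n))
    {B : Matrix (Fin n) (Fin n) ℂ} (hB : ∀ a ≤ n, leadingMinor (B.submatrix π id) a ≠ 0)
    {d : Fin n → ℝ} (hd : ∀ b, 0 < d b) :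
    ∑ b : Fin n, z b * (Real.log (Complex.normSq (leadingMinor (B.submatrix π id) (b + 1))) -
      Real.log (Complex.normSq (leadingMinor (B.submatrix π id) b))) +
        ∑ b, z b * Real.log (d (π b)) ≤
      logMinorPairing z (Bᴴ * diagonal (fun b ↦ (d b : ℂ)) * B) := by
  have hperm : Bᴴ * diagonal (fun b ↦ (d b : ℂ)) * B =
      (B.submatrix π id)ᴴ * diagonal (fun b ↦ (d (π b) : ℂ)) * B.submatrix π id := by
    have hdiag := submatrix_diagonal_equiv (fun b ↦ (d b : ℂ)) π
    rw [conjTranspose_submatrix, show (fun b ↦ (d (π b) : ℂ)) = (fun b ↦ (d b : ℂ)) ∘ π from rfl,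
      ← hdiag, submatrix_mul_equiv, submatrix_mul_equiv, submatrix_id_id]
  rw [hperm]
  exact sum_log_le_logMinorPairing hz hB fun b ↦ hd (π b)

variable [Fintype ι] {v : ι → Matrix (Fin n) (Fin n) ℂ} {z : ι → Fin n → ℝ}

lemma IsSemistable.eventually_le_sum_logMinorPairing (h : IsSemistable v z)
    (hv : ∀ i, IsUnit (v i).det) (hz : ∀ i, Antitone (z i)) (hsum : ∑ i, ∑ b, z i b = 0)
    {k₀ : Matrix (Fin n) (Fin n) ℂ} (hk₀ : IsUnit k₀.det) :
    ∃ C, ∀ᶠ k in 𝓝 k₀, ∀ d : Fin n → ℝ, (∀ b, 0 < d b) → Monotone d →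
      C ≤ ∑ i, logMinorPairing (z i)
        ((k * v i)ᴴ * diagonal (fun b ↦ (d b : ℂ)) * (k * v i)) := by
  have hinj i x (hx : (k₀ * v i) *ᵥ x = 0) : x = 0 :=
    eq_zero_of_mulVec_eq_zero (det_mul k₀ (v i) ▸ hk₀.mul (hv i)).ne_zero hx
  choose π U hU hdiag hπ using fun i ↦ exists_isPermutedEchelon_mul (hinj i)
  let L i a (k : Matrix (Fin n) (Fin n) ℂ) := leadingMinor ((k * v i).submatrix (π i) id) a
  have hLcont i a : Continuous (L i a) := (continuous_leadingMinor a).comp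
    ((continuous_id.matrix_mul continuous_const).matrix_submatrix _ _)
  have hL i a : L i a k₀ ≠ 0 := (hπ i).leadingMinor_submatrix_ne_zero (hU i) a
  let φ k := ∑ i, ∑ b : Fin n, z i b *
    (Real.log (Complex.normSq (L i (b + 1) k)) - Real.log (Complex.normSq (L i b k)))
  have hφ : ContinuousAt φ k₀ := by
    have hlog i a : ContinuousAt (fun k ↦ Real.log (Complex.normSq (L i a k))) k₀ :=
      (Complex.continuous_normSq.comp (hLcont i a)).continuousAt.log
        (Complex.normSq_pos.mpr (hL i a)).ne'
    exact tendsto_finsetSum _ fun i _ ↦ tendsto_finsetSum _ fun b _ ↦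
      ((hlog _ _).sub (hlog _ _)).const_mul _
  have hne : ∀ᶠ k in 𝓝 k₀, ∀ i, ∀ a ≤ n, L i a k ≠ 0 :=
    eventually_all.mpr fun i ↦ (Set.finite_Iic n).eventually_all.mpr fun a _ ↦
      (hLcont i a).continuousAt.eventually_ne (hL i a)
  refine ⟨φ k₀ - 1, ?_⟩
  filter_upwards [hne, hφ.eventually (lt_mem_nhds (sub_one_lt _))] with k hk hφk d hd hmono
  have hlogd := h.sum_mul_comp_nonneg hsum hk₀ hU hdiag hπ (f := fun b ↦ Real.log (d b))
    fun b c hbc ↦ Real.log_le_log (hd b) (hmono hbc)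
  calc φ k₀ - 1 ≤ φ k + ∑ i, ∑ b, z i b * Real.log (d (π i b)) := by linarith
    _ ≤ _ := by
      rw [← Finset.sum_add_distrib]
      exact Finset.sum_le_sum fun i _ ↦ sum_log_comp_le_logMinorPairing (hz i) (π i) (hk i) hd

lemma IsSemistable.exists_le_sum_logMinorPairing (h : IsSemistable v z)
    (hv : ∀ i, IsUnit (v i).det) (hz : ∀ i, Antitone (z i)) (hsum : ∑ i, ∑ b, z i b = 0) :
    ∃ C, ∀ M : Matrix (Fin n) (Fin n) ℂ, M.PosDef →
      C ≤ ∑ i, logMinorPairing (z i) ((v i)ᴴ * M * v i) := by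
  let P (s : Set (Matrix (Fin n) (Fin n) ℂ)) := ∃ C, ∀ k ∈ s, ∀ d : Fin n → ℝ, (∀ b, 0 < d b) →
    Monotone d → C ≤ ∑ i, logMinorPairing (z i)
      ((k * v i)ᴴ * diagonal (fun b ↦ (d b : ℂ)) * (k * v i))
  have hP : P {k | kᴴ * k = 1} := by
    refine isCompact_conjTranspose_mul_self_eq_one.induction_on ⟨0, fun _ hk ↦ hk.elim⟩
      (fun s t hst ⟨C, hC⟩ ↦ ⟨C, fun k hk ↦ hC k (hst hk)⟩)
      (fun s t ⟨C, hC⟩ ⟨D, hD⟩ ↦ ⟨min C D, fun k hk d hd hmono ↦ ?_⟩) fun k hk ↦ ?_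
    · rcases hk with hk | hk
      exacts [(min_le_left C D).trans (hC k hk d hd hmono),
        (min_le_right C D).trans (hD k hk d hd hmono)]
    · obtain ⟨C, hC⟩ := h.eventually_le_sum_logMinorPairing hv hz hsum
        (isUnit_det_of_left_inverse hk)
      exact ⟨_, mem_nhdsWithin_of_mem_nhds hC, C, fun _ hk ↦ hk⟩
  obtain ⟨C, hC⟩ := hP
  refine ⟨C, fun M hM ↦ ?_⟩
  obtain ⟨k, d, hk, hd, hmono, rfl⟩ := exists_unitary_eq_diagonal_of_posDef hM
  refine (hC k hk d hd hmono).trans_eq (Finset.sum_congr rfl fun i _ ↦ ?_)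
  simp only [conjTranspose_mul, Matrix.mul_assoc, RCLike.ofReal_eq_complex_ofReal]

lemma exists_unitary_logMinorPairing_eq (z : Fin n → ℝ) {B : Matrix (Fin n) (Fin n) ℂ}
    (hB : Function.Injective B.mulVec) :
    ∃ q : Matrix (Fin n) (Fin n) ℂ, qᴴ * q = 1 ∧ ∀ M : Matrix (Fin n) (Fin n) ℂ, M.PosDef →
      logMinorPairing z (qᴴ * M * q) =
        logMinorPairing z (Bᴴ * M * B) - logMinorPairing z (Bᴴ * B) := by
  obtain ⟨t, ht, hBt⟩ := exists_isUpperTriangular_orthonormal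
    ((injective_iff_map_eq_zero B.mulVecLin).mp hB)
  have htu : IsUnit t.det := isUnit_det_of_left_inverse (by rwa [← Matrix.mul_assoc] at hBt)
  have key (M : Matrix (Fin n) (Fin n) ℂ) (hM : M.PosDef) :
      logMinorPairing z ((B * t)ᴴ * M * (B * t)) =
        logMinorPairing z (Bᴴ * M * B) + logMinorPairing z (tᴴ * t) := by
    rw [← logMinorPairing_conjTranspose_mul_mul z (hM.conjTranspose_mul_mul_same hB) ht htu]
    simp only [conjTranspose_mul, Matrix.mul_assoc]
  have hone := key 1 .one
  rw [Matrix.mul_one, hBt, logMinorPairing_one, Matrix.mul_one] at hone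
  exact ⟨B * t, hBt, fun M hM ↦ by rw [key M hM]; linarith⟩

lemma IsSemistable.exists_unitary_neg_le_sum_logMinorPairing (h : IsSemistable v z)
    (hv : ∀ i, IsUnit (v i).det) (hz : ∀ i, Antitone (z i)) (hsum : ∑ i, ∑ b, z i b = 0)
    {ε : ℝ} (hε : 0 < ε) : ∃ q : ι → Matrix (Fin n) (Fin n) ℂ, (∀ i, (q i)ᴴ * q i = 1) ∧
      ∀ M : Matrix (Fin n) (Fin n) ℂ, M.PosDef →
        -ε ≤ ∑ i, logMinorPairing (z i) ((q i)ᴴ * M * q i) := by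
  let Ψ (M : Matrix (Fin n) (Fin n) ℂ) := ∑ i, logMinorPairing (z i) ((v i)ᴴ * M * v i)
  obtain ⟨C, hC⟩ := h.exists_le_sum_logMinorPairing hv hz hsum
  have hbdd : BddBelow (Ψ '' {M | M.PosDef}) := ⟨C, Set.forall_mem_image.mpr hC⟩
  have hne : (Ψ '' {M | M.PosDef}).Nonempty := ⟨_, Set.mem_image_of_mem Ψ PosDef.one⟩
  obtain ⟨_, ⟨M₀, hM₀, rfl⟩, hlt⟩ := Real.lt_sInf_add_pos hne hε
  obtain ⟨g, hg, rfl⟩ := CStarAlgebra.isStrictlyPositive_iff_eq_star_mul_self.mp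
    (PosDef.isStrictlyPositive hM₀)
  have hgv i : Function.Injective (g * v i).mulVec := mulVec_injective_of_isUnit
    (hg.mul ((isUnit_iff_isUnit_det _).mpr (hv i)))
  choose q hq hqM using fun i ↦ exists_unitary_logMinorPairing_eq (z i) (hgv i)
  refine ⟨q, hq, fun M hM ↦ ?_⟩
  have hΨ : ∑ i, logMinorPairing (z i) ((q i)ᴴ * M * q i) = Ψ (gᴴ * M * g) - Ψ (star g * g) := by
    rw [← Finset.sum_sub_distrib]
    refine Finset.sum_congr rfl fun i _ ↦ ?_
    rw [hqM i M hM]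
    simp only [star_eq_conjTranspose, conjTranspose_mul, Matrix.mul_assoc]
  have hle : sInf (Ψ '' {M | M.PosDef}) ≤ Ψ (gᴴ * M * g) := csInf_le hbdd
    ⟨_, hM.conjTranspose_mul_mul_same (mulVec_injective_of_isUnit hg), rfl⟩
  linarith

/-- The infimum of the function `M ↦ ∑ i, logMinorPairing (z i) ((v i)ᴴ * M * v i)` need not be
attained, but near-minimizers, moved to the identity, subconverge to a minimizer for a limiting
family of flags. -/
theorem IsSemistable.exists_unitary_sum_eq_zero (h : IsSemistable v z)
    (hv : ∀ i, IsUnit (v i).det) (hz : ∀ i, Antitone (z i)) (hsum : ∑ i, ∑ b, z i b = 0) :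
    ∃ q : ι → Matrix (Fin n) (Fin n) ℂ, (∀ i, (q i)ᴴ * q i = 1) ∧
      ∑ i, q i * diagonal (fun b ↦ (z i b : ℂ)) * (q i)ᴴ = 0 := by
  choose q hq hmin using fun t : ℕ ↦ h.exists_unitary_neg_le_sum_logMinorPairing hv hz hsum
    (ε := 1 / ((t : ℝ) + 1)) (by positivity)
  have : FirstCountableTopology (Matrix (Fin n) (Fin n) ℂ) :=
    inferInstanceAs (FirstCountableTopology (Fin n → Fin n → ℂ))
  obtain ⟨q₀, hq₀, φ, hφ, hlim⟩ := (isCompact_univ_pi fun _ : ι ↦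
    isCompact_conjTranspose_mul_self_eq_one (m := Fin n) (n := Fin n) (𝕜 := ℂ)).tendsto_subseq
      (x := q) fun t i _ ↦ hq t i
  have hq₀' i : (q₀ i)ᴴ * q₀ i = 1 := hq₀ i (Set.mem_univ i)
  refine ⟨q₀, hq₀', sum_mul_diagonal_mul_conjTranspose_eq_zero hq₀' fun M hM ↦ ?_⟩
  have hcont i : Tendsto (fun t ↦ logMinorPairing (z i) ((q (φ t) i)ᴴ * M * q (φ t) i)) atTop
      (𝓝 (logMinorPairing (z i) ((q₀ i)ᴴ * M * q₀ i))) := by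
    have hpos : ((q₀ i)ᴴ * M * q₀ i).PosDef := hM.conjTranspose_mul_mul_same
      (mulVec_injective_of_isUnit (.of_mul_eq_one_right _ (hq₀' i)))
    have hc : Continuous fun q : ι → Matrix (Fin n) (Fin n) ℂ ↦ (q i)ᴴ * M * q i := by fun_prop
    exact (continuousAt_logMinorPairing (z i) hpos).tendsto.comp ((hc.tendsto q₀).comp hlim)
  have hε : Tendsto (fun t ↦ -(1 / (((φ t : ℕ) : ℝ) + 1))) atTop (𝓝 0) := by
    simpa using ((tendsto_one_div_add_atTop_nhds_zero_nat (𝕜 := ℝ)).comp hφ.tendsto_atTop).neg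
  exact le_of_tendsto_of_tendsto' hε (tendsto_finsetSum _ fun i _ ↦ hcont i)
    fun t ↦ hmin (φ t) M hM

end Minimization

section Spectrum

variable {n : ℕ}

lemma trace_eq_sum_of_hasSpectrum {m : Type*} [Fintype m] [DecidableEq m] {M : Matrix m m ℂ}
    {α : Fin n → ℝ} (h : HasSpectrum M α) : M.trace = ∑ a, (α a : ℂ) := by
  have hne : ∏ a, (X - C (α a : ℂ)) ≠ 0 := Finset.prod_ne_zero_iff.mpr fun a _ ↦ X_sub_C_ne_zero _
  rw [trace_eq_sum_roots_charpoly, h, roots_prod _ _ hne]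
  simp [Finset.sum]

lemma isHermitian_and_hasSpectrum_iff {M : Matrix (Fin n) (Fin n) ℂ} {α : Fin n → ℝ} :
    M.IsHermitian ∧ HasSpectrum M α ↔
      ∃ U : Matrix (Fin n) (Fin n) ℂ, Uᴴ * U = 1 ∧ M = U * diagonal (fun a ↦ (α a : ℂ)) * Uᴴ := by
  have hD : (diagonal (fun a ↦ (α a : ℂ))).IsHermitian :=
    isHermitian_diagonal_of_self_adjoint _ (funext fun a ↦ Complex.conj_ofReal _)
  refine ⟨fun ⟨hM, hα⟩ ↦ exists_unitary_eq_of_charpoly_eq hM hD ?_, ?_⟩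
  · rw [charpoly_diagonal, hα]
  · rintro ⟨U, hU, rfl⟩
    refine ⟨isHermitian_mul_mul_conjTranspose U hD, ?_⟩
    rw [HasSpectrum, charpoly_mul_comm, ← Matrix.mul_assoc, hU, Matrix.one_mul, charpoly_diagonal]

lemma hasSpectrum_neg {M : Matrix (Fin n) (Fin n) ℂ} {α : Fin n → ℝ} (hM : M.IsHermitian)
    (h : HasSpectrum M α) : HasSpectrum (-M) (fun a ↦ -α a.rev) := by
  obtain ⟨U, hU, hMU⟩ := isHermitian_and_hasSpectrum_iff.mp ⟨hM, h⟩
  have hneg : -M = U * diagonal (fun a ↦ ((-α a : ℝ) : ℂ)) * Uᴴ := by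
    simp only [hMU, Complex.ofReal_neg, ← diagonal_neg, Matrix.mul_neg, Matrix.neg_mul]
  have hspec := (isHermitian_and_hasSpectrum_iff.mpr ⟨U, hU, hneg⟩).2
  rw [HasSpectrum] at hspec ⊢
  rw [hspec]
  exact (Equiv.prod_comp Fin.revPerm fun a ↦ X - C ((-α a : ℝ) : ℂ)).symm

end Spectrum

/-! ### Hermitian matrices with sum zero -/

section SumZero

variable {ι : Type*} [Fintype ι] [Nonempty ι] {n : ℕ} {z : ι → Fin n → ℝ}

lemma sum_comp_le_zero_of_sum_eq_zero {H : ι → Matrix (Fin n) (Fin n) ℂ}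
    (hH : ∀ i, (H i).IsHermitian) (hHz : ∀ i, HasSpectrum (H i) (z i)) (hsum : ∑ i, H i = 0)
    (hz : ∀ i, Antitone (z i)) {r : ℕ} (hr : r ≤ n) {I : ι → Fin r → Fin n}
    (hI : ∀ i, StrictMono (I i)) (hIT : IsTransversalPosition I) : ∑ i, ∑ c, z i (I i c) ≤ 0 := by
  choose U hU hHU using fun i ↦ isHermitian_and_hasSpectrum_iff.mp ⟨hH i, hHz i⟩
  exact (hIT.hasSchubertPoint hr hI U).sum_comp_le_zero hU hz (by simpa only [hHU] using hsum)

lemma exists_sum_eq_zero (hz : ∀ i, Antitone (z i)) (hsum : ∑ i, ∑ a, z i a = 0)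
    (h : ∀ r, 0 < r → r < n → ∀ I : ι → Fin r → Fin n, (∀ i, StrictMono (I i)) →
      IsTransversalPosition I →
        ∑ i, ∑ a, shape I i a + r * (n - r) = Fintype.card ι * (r * (n - r)) →
          ∑ i, ∑ c, z i (I i c) ≤ 0) :
    ∃ H : ι → Matrix (Fin n) (Fin n) ℂ,
      (∀ i, (H i).IsHermitian ∧ HasSpectrum (H i) (z i)) ∧ ∑ i, H i = 0 := by
  obtain ⟨v, hv, hcell⟩ := (eventually_generic_isUnit_det.and
    (eventually_generic_isTransversalPosition_of_isInSchubertCell (ι := ι) (n := n))).exists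
  have hsemi : IsSemistable v z := by
    intro r hr hrn F A hF hA hFA
    obtain ⟨I, hIT, hI, hIF, hdim⟩ := (hcell r F A hF hA hFA).exists_le_sum_shape_eq hF
    calc ∑ i, ∑ c, z i (F i c) ≤ ∑ i, ∑ c, z i (I i c) :=
          Finset.sum_le_sum fun i _ ↦ Finset.sum_le_sum fun c _ ↦ hz i (hIF i c)
      _ ≤ 0 := h r hr hrn I hI hIT hdim
  obtain ⟨q, hq, hqz⟩ := hsemi.exists_unitary_sum_eq_zero hv hz hsum
  exact ⟨_, fun i ↦ isHermitian_and_hasSpectrum_iff.mpr ⟨q i, hq i, rfl⟩, hqz⟩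

theorem exists_sum_eq_zero_iff (hz : ∀ i, Antitone (z i)) :
    (∃ H : ι → Matrix (Fin n) (Fin n) ℂ,
      (∀ i, (H i).IsHermitian ∧ HasSpectrum (H i) (z i)) ∧ ∑ i, H i = 0) ↔
    ∑ i, ∑ a, z i a = 0 ∧ ∀ r, 0 < r → r < n → ∀ I : ι → Fin r → Fin n,
      (∀ i, StrictMono (I i)) → IsTransversalPosition I →
        ∑ i, ∑ a, shape I i a + r * (n - r) = Fintype.card ι * (r * (n - r)) →
          ∑ i, ∑ c, z i (I i c) ≤ 0 := by
  refine ⟨?_, fun h ↦ exists_sum_eq_zero hz h.1 h.2⟩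
  rintro ⟨H, hH, hsum⟩
  refine ⟨?_, fun r _ hr I hI hIT _ ↦
    sum_comp_le_zero_of_sum_eq_zero (fun i ↦ (hH i).1) (fun i ↦ (hH i).2) hsum hz hr.le hI hIT⟩
  have htrace := congrArg trace hsum
  simp only [trace_sum, trace_eq_sum_of_hasSpectrum (hH _).2, trace_zero] at htrace
  exact_mod_cast htrace

end SumZero

/-! ### Horn's triples -/

section HornTriple

variable {n r p : ℕ}

lemma sum_image_rev {β : Type*} [AddCommMonoid β] {i : Fin r → Fin n} (hi : StrictMono i)
    (f : Fin n → β) : ∑ x ∈ Finset.univ.image (fun a ↦ (i a).rev), f x = ∑ a, f (i a).rev :=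
  Finset.sum_image (Fin.rev_injective.comp hi.injective).injOn

lemma sum_image_strictMono {β : Type*} [AddCommMonoid β] {i : Fin r → Fin n} (hi : StrictMono i)
    (f : Fin n → β) : ∑ x ∈ Finset.univ.image i, f x = ∑ a, f (i a) :=
  Finset.sum_image hi.injective.injOn

lemma strictMono_rev_comp_rev {i : Fin r → Fin n} (hi : StrictMono i) :
    StrictMono fun a : Fin r ↦ (i a.rev).rev :=
  fun _ _ hab ↦ Fin.rev_lt_rev.mpr (hi (Fin.rev_lt_rev.mpr hab))

lemma orderEmbOfFin_image_rev {i : Fin r → Fin n} (hi : StrictMono i)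
    (h : (Finset.univ.image fun a ↦ (i a).rev).card = r) (a : Fin r) :
    (Finset.univ.image fun a ↦ (i a).rev).orderEmbOfFin h a = (i a.rev).rev :=
  (congrFun (Finset.orderEmbOfFin_unique h (fun _ ↦ Finset.mem_image_of_mem _ (Finset.mem_univ _))
    (strictMono_rev_comp_rev hi)) a).symm

lemma orderEmbOfFin_image {i : Fin r → Fin n} (hi : StrictMono i)
    (h : (Finset.univ.image i).card = r) (a : Fin r) :
    (Finset.univ.image i).orderEmbOfFin h a = i a :=
  (congrFun (Finset.orderEmbOfFin_unique h (fun _ ↦ Finset.mem_image_of_mem _ (Finset.mem_univ _))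
    hi) a).symm

/-- The triple `(I, J, K)` of Horn's problem `X + Y = Z` given by a position for the symmetric
problem `(-X) + (-Y) + Z = 0`: negation reverses the order of the eigenvalues, so the first two
index sets are reflected. -/
def hornTriple (F : Fin 3 → Fin r → Fin n) :
    Finset (Fin n) × Finset (Fin n) × Finset (Fin n) :=
  (Finset.univ.image fun a ↦ (F 0 a).rev, Finset.univ.image fun a ↦ (F 1 a).rev,
    Finset.univ.image (F 2))

lemma exists_hornTriple_eq {T : Finset (Fin n) × Finset (Fin n) × Finset (Fin n)}
    (hT : T ∈ HornT r n) : ∃ F : Fin 3 → Fin r → Fin n, (∀ i, StrictMono (F i)) ∧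
      hornTriple F = T := by
  rw [HornT] at hT
  obtain ⟨I, J, K⟩ := T
  obtain ⟨⟨hI, hJ, hK, -⟩, -⟩ := hT
  refine ⟨![fun a ↦ (I.orderEmbOfFin hI a.rev).rev, fun a ↦ (J.orderEmbOfFin hJ a.rev).rev,
    K.orderEmbOfFin hK], ?_, ?_⟩
  · simp only [Fin.forall_fin_succ]
    exact ⟨strictMono_rev_comp_rev (I.orderEmbOfFin hI).strictMono,
      strictMono_rev_comp_rev (J.orderEmbOfFin hJ).strictMono, (K.orderEmbOfFin hK).strictMono,
      fun i ↦ i.elim0⟩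
  · have himage (s : Finset (Fin n)) (hs : s.card = r) :
        Finset.univ.image (fun a : Fin r ↦ s.orderEmbOfFin hs a.rev) = s := by
      conv_rhs => rw [← Finset.image_orderEmbOfFin_univ s hs, ← Finset.image_univ_equiv Fin.revPerm,
        Finset.image_image]
      rfl
    simp [hornTriple, himage]

lemma sum_shape_add_sum_eq {F : Fin 3 → Fin r → Fin n} (hF : ∀ i, StrictMono (F i)) :
    ∑ i, ∑ a, shape F i a + r * (n - r) +
        (∑ a, (((F 0 a).rev : ℕ) + 1) + ∑ a, (((F 1 a).rev : ℕ) + 1)) =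
      3 * (r * (n - r)) + (∑ a, ((F 2 a : ℕ) + 1) + r * (r + 1) / 2) := by
  have hr : r ≤ n := by simpa using Fintype.card_le_of_injective _ (hF 0).injective
  have hsub i a : (shape F i a : ℤ) = (F i a : ℕ) - (a : ℕ) := by
    have := shape_add hF i a
    omega
  have hrev (x : Fin n) : ((x.rev : ℕ) : ℤ) = n - 1 - (x : ℕ) := by
    rw [Fin.val_rev]
    omega
  have hgauss : (∑ a : Fin r, ((a : ℕ) : ℤ)) * 2 = r * (r - 1) := by
    rw [Fin.sum_univ_eq_sum_range (fun a ↦ (a : ℤ))]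
    cases r with
    | zero => simp
    | succ r =>
      have h := congrArg (Nat.cast (R := ℤ)) (Finset.sum_range_id_mul_two (r + 1))
      simpa using h
  have hhalf : ((r * (r + 1) / 2 : ℕ) : ℤ) * 2 = r * (r + 1) := by
    exact_mod_cast Nat.div_mul_cancel (Nat.even_mul_succ_self r).two_dvd
  zify [hr] at hhalf ⊢
  simp only [Fin.sum_univ_three, hsub, hrev, Finset.sum_sub_distrib, Finset.sum_add_distrib,
    Finset.sum_const, Finset.card_univ, Fintype.card_fin, nsmul_eq_mul, Nat.cast_ofNat]
  linarith

lemma sum_shape_eq_iff {F : Fin 3 → Fin r → Fin n} (hF : ∀ i, StrictMono (F i)) :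
    ∑ i, ∑ a, shape F i a + r * (n - r) = 3 * (r * (n - r)) ↔
      ∑ a, (((F 0 a).rev : ℕ) + 1) + ∑ a, (((F 1 a).rev : ℕ) + 1) =
        ∑ a, ((F 2 a : ℕ) + 1) + r * (r + 1) / 2 := by
  have := sum_shape_add_sum_eq hF
  omega

lemma le_sum_shape_comp_iff {I : Fin 3 → Fin r → Fin n} (hI : ∀ i, StrictMono (I i))
    {F : Fin 3 → Fin p → Fin r} (hF : ∀ i, StrictMono (F i))
    (hdim : ∑ i, ∑ a, shape F i a + p * (r - p) = 3 * (p * (r - p))) :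
    3 * (p * (n - r)) ≤ ∑ i, ∑ c, shape I i (F i c) + p * (n - r) ↔
      ∑ c, (((I 0 (F 0 c)).rev : ℕ) + 1) + ∑ c, (((I 1 (F 1 c)).rev : ℕ) + 1) ≤
        ∑ c, ((I 2 (F 2 c) : ℕ) + 1) + p * (p + 1) / 2 := by
  have hp : p ≤ r := by simpa using Fintype.card_le_of_injective _ (hF 0).injective
  have hr : r ≤ n := by simpa using Fintype.card_le_of_injective _ (hI 0).injective
  have hcomp i := (hI i).comp (hF i)
  have hshape : ∑ i, ∑ c, shape (fun i ↦ I i ∘ F i) i c =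
      ∑ i, ∑ c, shape I i (F i c) + ∑ i, ∑ c, shape F i c := by
    simp only [← Finset.sum_add_distrib]
    refine Finset.sum_congr rfl fun i _ ↦ Finset.sum_congr rfl fun c _ ↦ ?_
    have hIF := shape_add hcomp i c
    have hIi := shape_add hI i (F i c)
    have hFi := shape_add hF i c
    rw [Function.comp_apply] at hIF
    omega
  have hsum := sum_shape_add_sum_eq hcomp
  have hsplit : p * (n - p) = p * (n - r) + p * (r - p) := by
    rw [← mul_add, Nat.sub_add_sub_cancel hr hp]
  rw [hshape, hsplit] at hsum
  simp only [Function.comp_apply] at hsum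
  constructor <;> intro <;> linarith

theorem hornTriple_mem_hornT_iff {F : Fin 3 → Fin r → Fin n} (hF : ∀ i, StrictMono (F i)) :
    hornTriple F ∈ HornT r n ↔
      ∑ i, ∑ a, shape F i a + r * (n - r) = 3 * (r * (n - r)) ∧ IsTransversalPosition F := by
  induction r using Nat.strong_induction_on generalizing n with
  | _ r ih =>
  have hcard₀ : (Finset.univ.image fun a ↦ (F 0 a).rev).card = r := by
    simpa [Function.comp_def] using
      Finset.card_image_of_injective Finset.univ (Fin.rev_injective.comp (hF 0).injective)
  have hcard₁ : (Finset.univ.image fun a ↦ (F 1 a).rev).card = r := by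
    simpa [Function.comp_def] using
      Finset.card_image_of_injective Finset.univ (Fin.rev_injective.comp (hF 1).injective)
  have hcard₂ : (Finset.univ.image (F 2)).card = r := by
    simpa using Finset.card_image_of_injective Finset.univ (hF 2).injective
  rw [HornT]
  simp only [Set.mem_ofPred_eq, HornU, hornTriple, hcard₀, hcard₁, hcard₂, true_and,
    sum_image_rev (hF 0), sum_image_rev (hF 1), sum_image_strictMono (hF 2),
    orderEmbOfFin_image_rev (hF 0), orderEmbOfFin_image_rev (hF 1), orderEmbOfFin_image (hF 2),
    forall_true_left, ← sum_shape_eq_iff hF]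
  refine and_congr_right fun h ↦ ?_
  rw [isTransversalPosition_iff hF (by simpa using h)]
  refine forall₃_congr fun p _ hpr ↦ ⟨fun H G hG hGT hGdim ↦ ?_, fun H S hS ↦ ?_⟩
  · have hle := H _ ((ih p hpr hG).mpr ⟨by simpa using hGdim, hGT⟩)
    simp only [hornTriple, sum_image_rev (hG 0), sum_image_rev (hG 1),
      sum_image_strictMono (hG 2), Fin.rev_rev] at hle
    simpa using (le_sum_shape_comp_iff hF hG (by simpa using hGdim)).mpr hle
  · obtain ⟨G, hG, rfl⟩ := exists_hornTriple_eq hS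
    obtain ⟨hGdim, hGT⟩ := (ih p hpr hG).mp hS
    simp only [hornTriple, sum_image_rev (hG 0), sum_image_rev (hG 1),
      sum_image_strictMono (hG 2), Fin.rev_rev]
    exact (le_sum_shape_comp_iff hF hG hGdim).mp
      (by simpa using H G hG hGT (by simpa using hGdim))

end HornTriple

section SymmetricSpectra

variable {n : ℕ} {α β γ : Fin n → ℝ}

/-- The eigenvalues of `-X`, `-Y` and `X + Y` when `X`, `Y` and `X + Y` have eigenvalues `α`, `β`
and `γ`, each listed in nonincreasing order. -/
def symmetricSpectra (α β γ : Fin n → ℝ) : Fin 3 → Fin n → ℝ :=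
  ![fun a ↦ -α a.rev, fun a ↦ -β a.rev, γ]

lemma antitone_symmetricSpectra (hα : Antitone α) (hβ : Antitone β) (hγ : Antitone γ) (i : Fin 3) :
    Antitone (symmetricSpectra α β γ i) := by
  fin_cases i
  · exact fun a b hab ↦ neg_le_neg (hα (Fin.rev_le_rev.mpr hab))
  · exact fun a b hab ↦ neg_le_neg (hβ (Fin.rev_le_rev.mpr hab))
  · exact hγ

lemma sum_symmetricSpectra :
    ∑ i, ∑ a, symmetricSpectra α β γ i a = ∑ a, γ a - (∑ a, α a + ∑ a, β a) := by
  have hrev (f : Fin n → ℝ) : ∑ a, f (Fin.rev a) = ∑ a, f a := Equiv.sum_comp Fin.revPerm f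
  simp only [symmetricSpectra, Fin.sum_univ_three, cons_val, Finset.sum_neg_distrib, hrev]
  ring

lemma sum_symmetricSpectra_comp {r : ℕ} {F : Fin 3 → Fin r → Fin n} (hF : ∀ i, StrictMono (F i)) :
    ∑ i, ∑ c, symmetricSpectra α β γ i (F i c) = ∑ k ∈ (hornTriple F).2.2, γ k -
      (∑ i ∈ (hornTriple F).1, α i + ∑ j ∈ (hornTriple F).2.1, β j) := by
  simp only [hornTriple, sum_image_rev (hF _), sum_image_strictMono (hF 2), symmetricSpectra,
    Fin.sum_univ_three, cons_val, Finset.sum_neg_distrib]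
  ring

lemma exists_hasSpectrum_add_iff :
    (∃ X Y : Matrix (Fin n) (Fin n) ℂ, X.IsHermitian ∧ Y.IsHermitian ∧
      HasSpectrum X α ∧ HasSpectrum Y β ∧ HasSpectrum (X + Y) γ) ↔
    ∃ H : Fin 3 → Matrix (Fin n) (Fin n) ℂ,
      (∀ i, (H i).IsHermitian ∧ HasSpectrum (H i) (symmetricSpectra α β γ i)) ∧
        ∑ i, H i = 0 := by
  constructor
  · rintro ⟨X, Y, hX, hY, hXα, hYβ, hXY⟩
    refine ⟨![-X, -Y, X + Y], fun i ↦ ?_, ?_⟩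
    · fin_cases i
      · exact ⟨hX.neg, hasSpectrum_neg hX hXα⟩
      · exact ⟨hY.neg, hasSpectrum_neg hY hYβ⟩
      · exact ⟨hX.add hY, hXY⟩
    · simp only [Fin.sum_univ_three, cons_val]
      abel
  · rintro ⟨H, hH, hsum⟩
    have hneg (i : Fin 3) {δ : Fin n → ℝ} (hi : symmetricSpectra α β γ i = fun a ↦ -δ a.rev) :
        HasSpectrum (-H i) δ := by
      simpa [hi] using hasSpectrum_neg (hH i).1 (hH i).2
    have hadd : -H 0 + -H 1 = H 2 := by
      rw [Fin.sum_univ_three] at hsum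
      rw [← sub_eq_zero, ← neg_eq_zero, ← hsum]
      abel
    exact ⟨-H 0, -H 1, (hH 0).1.neg, (hH 1).1.neg, hneg 0 rfl, hneg 1 rfl, hadd ▸ (hH 2).2⟩

end SymmetricSpectra

end Horn

/-- Horn's conjecture (Klyachko, Knutson–Tao): nonincreasing `(α, β, γ)` are the spectra of
Hermitian matrices `X`, `Y` and `X + Y` iff the trace condition holds and the inequality
`∑_{k ∈ K} γ_k ≤ ∑_{i ∈ I} α_i + ∑_{j ∈ J} β_j` holds for all `(I,J,K) ∈ T_r^n`, `r < n`. -/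
theorem horn_conjecture {n : ℕ} (hn : 1 ≤ n)
    (α β γ : Fin n → ℝ) (hα : Antitone α) (hβ : Antitone β) (hγ : Antitone γ) :
    (∃ X Y : Matrix (Fin n) (Fin n) ℂ, X.IsHermitian ∧ Y.IsHermitian ∧
        HasSpectrum X α ∧ HasSpectrum Y β ∧ HasSpectrum (X + Y) γ) ↔
      ((∑ i, γ i) = (∑ i, α i) + (∑ i, β i) ∧
        ∀ r, 1 ≤ r → r < n → ∀ T ∈ HornT r n,
          (∑ k ∈ T.2.2, γ k) ≤ (∑ i ∈ T.1, α i) + (∑ j ∈ T.2.1, β j)) := by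
  rw [Horn.exists_hasSpectrum_add_iff,
    Horn.exists_sum_eq_zero_iff (Horn.antitone_symmetricSpectra hα hβ hγ),
    Horn.sum_symmetricSpectra, sub_eq_zero]
  refine and_congr_right fun _ ↦ forall₃_congr fun r _ _ ↦
    ⟨fun h T hT ↦ ?_, fun h F hF hFT hdim ↦ ?_⟩
  · obtain ⟨F, hF, rfl⟩ := Horn.exists_hornTriple_eq hT
    obtain ⟨hdim, hFT⟩ := (Horn.hornTriple_mem_hornT_iff hF).mp hT
    have key := h F hF hFT (by simpa using hdim)
    rwa [Horn.sum_symmetricSpectra_comp hF, sub_nonpos] at key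
  · rw [Horn.sum_symmetricSpectra_comp hF, sub_nonpos]
    exact h _ ((Horn.hornTriple_mem_hornT_iff hF).mpr ⟨by simpa using hdim, hFT⟩)
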